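/- Convexity of positivity in the potential: Let V₀, V₁ : Ω → ℝ be measurable functions, each bounded on every compact subset of Ω, and suppose Q_{V₀}(u) ≥ 0 and Q_{V₁}(u) ≥ 0 for every u ∈ C_c^∞(Ω). For t ∈ ℝ set Q_t(u) := t Q_{V₁}(u) + (1−t) Q_{V₀}(u). Then Q_t(u) ≥ 0 for every t ∈ [0,1] and every u ∈ C_c^∞(Ω). Moreover, if the set {x ∈ Ω : V₀(x) ≠ V₁(x)} has positive Lebesgue measure, then for every t ∈ (0,1) the functional Q_t is strictly positive in Ω: there exists a continuous function W : Ω → ℝ with W > 0 everywhere such that Q_t(u) ≥ ∫_Ω W|u|^p dx for all u ∈ C_c^∞(Ω). -/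

import Mathlib

open MeasureTheory Filter
open scoped RealInnerProductSpace Topology

noncomputable section

/-- Euclidean space `ℝ^d`. -/
abbrev Euc (d : ℕ) := EuclideanSpace ℝ (Fin d)

/-- A test function on `Ω`: smooth with compact support contained in `Ω`. -/
def IsTestFun {d : ℕ} (Ω : Set (Euc d)) (u : Euc d → ℝ) : Prop :=
  ContDiff ℝ (⊤ : ℕ∞) u ∧ HasCompactSupport u ∧ tsupport u ⊆ Ω

/-- The energy functional `Q(u) = ∫_Ω (|∇u|^p + V |u|^p) dx`. -/
def energyQ {d : ℕ} (Ω : Set (Euc d)) (V : Euc d → ℝ) (p : ℝ) (u : Euc d → ℝ) : ℝ :=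
  ∫ x in Ω, (‖gradient u x‖ ^ p + V x * |u x| ^ p)

/-- `V` is measurable and bounded on every compact subset of `Ω`. -/
def LocBddPotential {d : ℕ} (Ω : Set (Euc d)) (V : Euc d → ℝ) : Prop :=
  Measurable V ∧ ∀ K : Set (Euc d), K ⊆ Ω → IsCompact K → ∃ C : ℝ, ∀ x ∈ K, |V x| ≤ C

/-- A positive supersolution of `Q'(u) = 0` in `Ω`. -/
def IsPositiveSupersolution {d : ℕ} (Ω : Set (Euc d)) (V : Euc d → ℝ) (p : ℝ)
    (v : Euc d → ℝ) : Prop :=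
  ContDiffOn ℝ 1 v Ω ∧ (∀ x ∈ Ω, 0 < v x) ∧
    ∀ φ : Euc d → ℝ, IsTestFun Ω φ → (∀ x, 0 ≤ φ x) →
      0 ≤ ∫ x in Ω, (‖gradient v x‖ ^ (p - 2) * ⟪gradient v x, gradient φ x⟫
            + V x * v x ^ (p - 1) * φ x)

/-- A positive (weak) solution of `Q'(u) = 0` in `Ω`. -/
def IsPositiveSolution {d : ℕ} (Ω : Set (Euc d)) (V : Euc d → ℝ) (p : ℝ)
    (v : Euc d → ℝ) : Prop :=
  ContDiffOn ℝ 1 v Ω ∧ (∀ x ∈ Ω, 0 < v x) ∧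
    ∀ φ : Euc d → ℝ, IsTestFun Ω φ →
      (∫ x in Ω, (‖gradient v x‖ ^ (p - 2) * ⟪gradient v x, gradient φ x⟫
            + V x * v x ^ (p - 1) * φ x)) = 0

/-- A null sequence for the functional `Q`. -/
def IsNullSequence {d : ℕ} (Ω : Set (Euc d)) (V : Euc d → ℝ) (p : ℝ)
    (u : ℕ → Euc d → ℝ) : Prop :=
  (∀ k, IsTestFun Ω (u k)) ∧ (∀ k x, 0 ≤ u k x) ∧
    ∃ B : Set (Euc d), IsOpen B ∧ IsCompact (closure B) ∧ closure B ⊆ Ω ∧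
      (∀ k, (∫ x in B, u k x ^ p) = 1) ∧
      Tendsto (fun k => energyQ Ω V p (u k)) atTop (𝓝 0)

/-- A ground state of `Q`: a positive `C¹` function on `Ω` which is the limit in
`L^p_loc(Ω)` of a null sequence. -/
def IsGroundState {d : ℕ} (Ω : Set (Euc d)) (V : Euc d → ℝ) (p : ℝ)
    (v : Euc d → ℝ) : Prop :=
  ContDiffOn ℝ 1 v Ω ∧ (∀ x ∈ Ω, 0 < v x) ∧
    ∃ u : ℕ → Euc d → ℝ, IsNullSequence Ω V p u ∧
      ∀ K : Set (Euc d), K ⊆ Ω → IsCompact K →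
        Tendsto (fun k => ∫ x in K, |u k x - v x| ^ p) atTop (𝓝 0)

/-- `Q` has a weighted spectral gap (is strictly positive) in `Ω`. -/
def HasSpectralGap {d : ℕ} (Ω : Set (Euc d)) (V : Euc d → ℝ) (p : ℝ) : Prop :=
  ∃ W : Euc d → ℝ, ContinuousOn W Ω ∧ (∀ x ∈ Ω, 0 < W x) ∧
    ∀ u : Euc d → ℝ, IsTestFun Ω u → (∫ x in Ω, W x * |u x| ^ p) ≤ energyQ Ω V p u

/-- `c_B`: the infimum of `Q(u)` over test functions with `∫_B |u|^p = 1`. -/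
def cB {d : ℕ} (Ω B : Set (Euc d)) (V : Euc d → ℝ) (p : ℝ) : ℝ :=
  sInf { q : ℝ | ∃ u : Euc d → ℝ, IsTestFun Ω u ∧ (∫ x in B, |u x| ^ p) = 1 ∧
    q = energyQ Ω V p u }

/-- The Picone Lagrangian `L(u,v)`. -/
def piconeL {d : ℕ} (p : ℝ) (u v : Euc d → ℝ) (x : Euc d) : ℝ :=
  ‖gradient u x‖ ^ p + (p - 1) * (u x / v x) ^ p * ‖gradient v x‖ ^ p
    - p * (u x / v x) ^ (p - 1) *
        (‖gradient v x‖ ^ (p - 2) * ⟪gradient u x, gradient v x⟫)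

/-!
Perturbing `u ≥ 0` in a direction that lowers the energy cannot make `Q_V` negative. The directions
`-u` and `(u + s) ^ (1 - p)`, cut off to a ball, turn this into Caccioppoli estimates for `∇u` and
for `∇ log (u + s)`, up to an error controlled by `Q_V(u)`. The logarithmic estimate and Poincaré's
inequality propagate smallness of `u` from a definite proportion of one ball to neighbouring ones,
so that a bound on `u ^ p` by the energy on a fixed proportion of a ball upgrades, after an
iteration over radii which absorbs the gradient term, to a bound on `∫ u ^ p` by the energy.

If `V₀ ≠ V₁` on a set of positive measure, some test function `ψ` supported in a small ball has
`∫ (V₁ - V₀) ψ > 0`. Perturb `Q_{V₀}` along `ψ (u + s) ^ (1 - p)` and `Q_{V₁}` in the opposite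
direction: the gradient terms of the two first variations cancel, and what is left is
`p ∫ (V₁ - V₀) ψ (u / (u + s)) ^ (p - 1)`. If both energies are small compared with `s ^ p`, then so
is this integral. Since `u / (u + s)` is close to `1` where `u` is much larger than `s`, it follows
that `u ≲ s` on a definite proportion of the ball, which starts the argument above and gives
`∫ u ^ p ≲ Q_{V₀}(u) + Q_{V₁}(u)` on one ball. Connectedness of `Ω` spreads the estimate to every
point, and a weighted sum of tents is the required weight `W`. A signed `u` is reduced to
nonnegative functions by smoothing `|u|`.
-/

/-! ### Caccioppoli estimates -/

theorem norm_smul_add_rpow_le {E : Type*} [NormedAddCommGroup E] [NormedSpace ℝ E] {p θ D : ℝ}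
    {X Y : E} (hp : 1 < p) (hθ₀ : 0 ≤ θ) (hθ : θ ≤ 1 / 2) (hD : 0 ≤ D)
    (hY : ‖Y‖ ^ p ≤ θ ^ (p - 1) * D) :
    ‖(1 - 2 * θ) • X + Y‖ ^ p ≤ (1 - θ) * ‖X‖ ^ p + D := by
  rcases hθ₀.eq_or_lt with rfl | hθ₀
  · rw [Real.zero_rpow (by linarith), zero_mul] at hY
    have hY₀ : ‖Y‖ ^ p = 0 := le_antisymm hY (by positivity)
    rw [Real.rpow_eq_zero (norm_nonneg _) (by linarith), norm_eq_zero] at hY₀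
    simp [hY₀, hD]
  have hnorm : ‖(1 - 2 * θ) • X + Y‖ ≤ (1 - θ) * ‖X‖ + θ * (‖Y‖ / θ) := by
    calc ‖(1 - 2 * θ) • X + Y‖ ≤ ‖(1 - 2 * θ) • X‖ + ‖Y‖ := norm_add_le _ _
      _ = (1 - 2 * θ) * ‖X‖ + θ * (‖Y‖ / θ) := by
          rw [norm_smul, Real.norm_of_nonneg (by linarith)]; field_simp
      _ ≤ _ := by nlinarith [norm_nonneg X]
  have hconv : ((1 - θ) * ‖X‖ + θ * (‖Y‖ / θ)) ^ p ≤ (1 - θ) * ‖X‖ ^ p + θ * (‖Y‖ / θ) ^ p :=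
    (convexOn_rpow hp.le).2 (Set.mem_Ici.2 (norm_nonneg X)) (Set.mem_Ici.2 (by positivity))
      (by linarith) hθ₀.le (by ring)
  have hY' : θ * (‖Y‖ / θ) ^ p ≤ D := by
    have : θ * (‖Y‖ / θ) ^ p = ‖Y‖ ^ p / θ ^ (p - 1) := by
      rw [Real.div_rpow (norm_nonneg _) hθ₀.le, Real.rpow_sub_one hθ₀.ne']; field_simp
    rwa [this, div_le_iff₀' (by positivity)]
  calc _ ≤ ((1 - θ) * ‖X‖ + θ * (‖Y‖ / θ)) ^ p := by gcongr
    _ ≤ _ := by linarith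

theorem rpow_sub_rpow_le {a b p : ℝ} (ha : 0 ≤ a) (hab : a ≤ b) (hp : 1 ≤ p) :
    b ^ p - a ^ p ≤ p * (b - a) * b ^ (p - 1) := by
  rcases (ha.trans hab).eq_or_lt with rfl | hb
  · simp [le_antisymm hab ha]
  have hbern : 1 + p * (a / b - 1) ≤ (1 + (a / b - 1)) ^ p :=
    one_add_mul_self_le_rpow_one_add (by linarith [show 0 ≤ a / b by positivity]) hp
  rw [add_sub_cancel, Real.div_rpow ha hb.le, le_div_iff₀ (by positivity)] at hbern
  rw [Real.rpow_sub_one hb.ne']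
  have : (1 + p * (a / b - 1)) * b ^ p = b ^ p - p * (b - a) * (b ^ p / b) := by field_simp; ring
  linarith

theorem exists_abs_deriv_smoothTransition_le :
    ∃ L : ℝ, 0 ≤ L ∧ ∀ t, |deriv Real.smoothTransition t| ≤ L := by
  have hc : Continuous (deriv Real.smoothTransition) :=
    (Real.smoothTransition.contDiff (n := 1)).continuous_deriv le_rfl
  have hcs : HasCompactSupport (deriv Real.smoothTransition) := by
    refine HasCompactSupport.intro (isCompact_Icc (a := (0 : ℝ)) (b := 1)) fun t ht => ?_
    rw [Set.mem_Icc, not_and_or, not_le, not_le] at ht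
    rcases ht with ht | ht
    · have : Real.smoothTransition =ᶠ[𝓝 t] fun _ => 0 := by
        filter_upwards [Iio_mem_nhds ht] with s hs
        exact Real.smoothTransition.zero_of_nonpos (le_of_lt hs)
      rw [this.deriv_eq, deriv_const]
    · have : Real.smoothTransition =ᶠ[𝓝 t] fun _ => 1 := by
        filter_upwards [Ioi_mem_nhds ht] with s hs
        exact Real.smoothTransition.one_of_one_le (le_of_lt hs)
      rw [this.deriv_eq, deriv_const]
  obtain ⟨L, hL⟩ := hc.bounded_above_of_compact_support hcs
  exact ⟨L, (norm_nonneg _).trans (hL 0), hL⟩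

/- A power `χ ^ k` of a smooth step works as soon as `k ≥ p`, because then
`(χ ^ (k - 1)) ^ p ≤ (χ ^ k) ^ (p - 1)`. -/
theorem exists_smooth_step {p : ℝ} (hp : 1 < p) :
    ∃ C : ℝ, 0 ≤ C ∧ ∃ σ : ℝ → ℝ, ContDiff ℝ (⊤ : ℕ∞) σ ∧ (∀ t, σ t ∈ Set.Icc 0 1) ∧
      (∀ t ≤ 0, σ t = 0) ∧ (∀ t, 1 ≤ t → σ t = 1) ∧
      ∀ t, |deriv σ t| ^ p ≤ C * σ t ^ (p - 1) := by
  obtain ⟨L, hL₀, hL⟩ := exists_abs_deriv_smoothTransition_le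
  obtain ⟨k, hk⟩ : ∃ k : ℕ, p ≤ k + 1 := ⟨⌈p⌉₊, (Nat.le_ceil p).trans (by simp)⟩
  refine ⟨((k + 1) * L) ^ p, by positivity, fun t => Real.smoothTransition t ^ (k + 1),
    Real.smoothTransition.contDiff.pow _, fun t => ?_, fun t ht => ?_, fun t ht => ?_,
    fun t => ?_⟩
  · exact ⟨pow_nonneg (Real.smoothTransition.nonneg t) _,
      pow_le_one₀ (Real.smoothTransition.nonneg t) (Real.smoothTransition.le_one t)⟩
  · simp [Real.smoothTransition.zero_of_nonpos ht]
  · simp [Real.smoothTransition.one_of_one_le ht]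
  have hd : deriv (fun t => Real.smoothTransition t ^ (k + 1)) t =
      (k + 1) * deriv Real.smoothTransition t * Real.smoothTransition t ^ k := by
    rw [deriv_fun_pow (Real.smoothTransition.contDiff.differentiable one_ne_zero t)]
    push_cast [Nat.add_sub_cancel]; ring
  have hχ₀ := Real.smoothTransition.nonneg t
  have hpow : (Real.smoothTransition t ^ k) ^ p ≤
      (Real.smoothTransition t ^ (k + 1)) ^ (p - 1) := by
    rw [← Real.rpow_natCast_mul hχ₀, ← Real.rpow_natCast_mul hχ₀]
    refine Real.rpow_le_rpow_of_exponent_ge' hχ₀ (Real.smoothTransition.le_one t)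
      (by push_cast; nlinarith) (by push_cast; linarith)
  rw [hd, abs_mul, abs_mul, abs_of_nonneg (by positivity : (0 : ℝ) ≤ k + 1),
    abs_of_nonneg (pow_nonneg hχ₀ k), Real.mul_rpow (by positivity) (by positivity)]
  gcongr
  exact hL t

section Cutoff

variable {E : Type*} [NormedAddCommGroup E] [InnerProductSpace ℝ E]

theorem exists_smooth_radial_ramp (x : E) {r R : ℝ} (hr : 0 ≤ r) (hrR : r < R) :
    ∃ h : E → ℝ, ContDiff ℝ (⊤ : ℕ∞) h ∧ (∀ y ∈ Metric.closedBall x r, 1 ≤ h y) ∧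
      (∀ y ∉ Metric.ball x R, h y ≤ 0) ∧ ∀ y ∈ Metric.ball x R, ‖fderiv ℝ h y‖ ≤ 2 / (R - r) := by
  have hRr : 0 < R ^ 2 - r ^ 2 := by nlinarith
  refine ⟨fun y => (R ^ 2 - ‖y - x‖ ^ 2) / (R ^ 2 - r ^ 2),
    (contDiff_const.sub ((contDiff_id.sub contDiff_const).norm_sq ℝ)).div_const _,
    fun y hy => ?_, fun y hy => ?_, fun y hy => ?_⟩
  · rw [mem_closedBall_iff_norm] at hy
    rw [one_le_div hRr]
    nlinarith [norm_nonneg (y - x)]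
  · rw [mem_ball_iff_norm, not_lt] at hy
    exact div_nonpos_of_nonpos_of_nonneg (by nlinarith) hRr.le
  · have hderiv : HasFDerivAt (fun y => (R ^ 2 - ‖y - x‖ ^ 2) / (R ^ 2 - r ^ 2))
        ((-2 / (R ^ 2 - r ^ 2)) • innerSL ℝ (y - x)) y := by
      refine ((((hasFDerivAt_id y).sub_const x).norm_sq.const_sub (R ^ 2)).mul_const
        (R ^ 2 - r ^ 2)⁻¹).congr_fderiv ?_
      ext v
      simp only [smul_apply, neg_apply, ContinuousLinearMap.comp_id, innerSL_apply_apply,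
        smul_eq_mul, nsmul_eq_mul, id]
      push_cast
      ring
    rw [mem_ball_iff_norm] at hy
    rw [hderiv.fderiv, norm_smul, innerSL_apply_norm, norm_div, norm_neg,
      Real.norm_of_nonneg hRr.le, Real.norm_of_nonneg two_pos.le, div_mul_eq_mul_div,
      div_le_div_iff₀ hRr (by linarith)]
    nlinarith [norm_nonneg (y - x)]

theorem exists_smooth_cutoff {p : ℝ} (hp : 1 < p) :
    ∃ C : ℝ, 0 ≤ C ∧ ∀ (x : E) (r R : ℝ), 0 ≤ r → r < R → ∃ η : E → ℝ,
      ContDiff ℝ (⊤ : ℕ∞) η ∧ (∀ y, η y ∈ Set.Icc 0 1) ∧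
      (∀ y ∈ Metric.closedBall x r, η y = 1) ∧ tsupport η ⊆ Metric.closedBall x R ∧
      ∀ y, ‖fderiv ℝ η y‖ ^ p ≤ C / (R - r) ^ p * η y ^ (p - 1) := by
  obtain ⟨C, hC, σ, hσ, hσ_mem, hσ₀, hσ₁, hσ'⟩ := exists_smooth_step hp
  refine ⟨C * 2 ^ p, by positivity, fun x r R hr hrR => ?_⟩
  have hrR' : 0 < R - r := sub_pos.2 hrR
  obtain ⟨h, hh, hh_one, hh_zero, hh'⟩ := exists_smooth_radial_ramp x hr hrR
  refine ⟨σ ∘ h, hσ.comp hh, fun y => hσ_mem _, fun y hy => hσ₁ _ (hh_one y hy), ?_, fun y => ?_⟩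
  · refine closure_minimal (fun y hy => ?_) Metric.isClosed_closedBall
    by_contra hyR
    exact hy (hσ₀ _ (hh_zero y fun hyR' => hyR (Metric.ball_subset_closedBall hyR')))
  have hle : |deriv σ (h y)| * ‖fderiv ℝ h y‖ ≤ |deriv σ (h y)| * (2 / (R - r)) := by
    by_cases hy : y ∈ Metric.ball x R
    · gcongr
      exact hh' y hy
    · have hσy := hσ' (h y)
      rw [hσ₀ _ (hh_zero y hy), Real.zero_rpow (by linarith), mul_zero] at hσy
      simp [(Real.rpow_eq_zero (abs_nonneg _) (by linarith)).1 (hσy.antisymm (by positivity))]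
  have hη' : ‖fderiv ℝ (σ ∘ h) y‖ = |deriv σ (h y)| * ‖fderiv ℝ h y‖ := by
    rw [((hσ.differentiable (by simp) _).hasDerivAt.comp_hasFDerivAt y
      (hh.differentiable (by simp) y).hasFDerivAt).fderiv, norm_smul, Real.norm_eq_abs]
  calc ‖fderiv ℝ (σ ∘ h) y‖ ^ p ≤ (|deriv σ (h y)| * (2 / (R - r))) ^ p := by
        rw [hη']; gcongr
    _ = |deriv σ (h y)| ^ p * (2 ^ p / (R - r) ^ p) := by
        rw [Real.mul_rpow (by positivity) (by positivity), Real.div_rpow two_pos.le hrR'.le]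
    _ ≤ C * σ (h y) ^ (p - 1) * (2 ^ p / (R - r) ^ p) := by gcongr; exact hσ' _
    _ = _ := by rw [Function.comp_apply]; ring

end Cutoff

/-- `Q_V ≥ 0` on the test functions of `Ω`. -/
def NonnegEnergy {d : ℕ} (Ω : Set (Euc d)) (V : Euc d → ℝ) (p : ℝ) : Prop :=
  ∀ u : Euc d → ℝ, IsTestFun Ω u → 0 ≤ energyQ Ω V p u

section Energy

variable {d : ℕ} {Ω : Set (Euc d)} {V : Euc d → ℝ} {p : ℝ} {u : Euc d → ℝ}

theorem norm_gradient {E : Type*} [NormedAddCommGroup E] [InnerProductSpace ℝ E] [CompleteSpace E]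
    (f : E → ℝ) (x : E) : ‖gradient f x‖ = ‖fderiv ℝ f x‖ := by
  rw [← toDual_gradient, LinearIsometryEquiv.norm_map]

theorem IsTestFun.contDiff_one (hu : IsTestFun Ω u) : ContDiff ℝ 1 u :=
  hu.1.of_le (by simp)

theorem IsTestFun.continuous_norm_fderiv_rpow (hu : IsTestFun Ω u) (hp : 0 ≤ p) :
    Continuous fun x => ‖fderiv ℝ u x‖ ^ p :=
  (hu.contDiff_one.continuous_fderiv one_ne_zero).norm.rpow_const fun _ => Or.inr hp

theorem IsTestFun.continuous_abs_rpow (hu : IsTestFun Ω u) (hp : 0 ≤ p) :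
    Continuous fun x => |u x| ^ p :=
  hu.1.continuous.abs.rpow_const fun _ => Or.inr hp

theorem IsTestFun.integrable_of_eq_zero {f : Euc d → ℝ} (hu : IsTestFun Ω u) (hf : Continuous f)
    (h : ∀ x ∉ tsupport u, f x = 0) : Integrable f :=
  hf.integrable_of_hasCompactSupport (HasCompactSupport.intro hu.2.1 h)

theorem IsTestFun.integrable_norm_fderiv_rpow (hu : IsTestFun Ω u) (hp : 0 < p) :
    Integrable fun x => ‖fderiv ℝ u x‖ ^ p :=
  hu.integrable_of_eq_zero (hu.continuous_norm_fderiv_rpow hp.le) fun x hx => by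
    simp [fderiv_of_notMem_tsupport ℝ hx, hp.ne']

theorem LocBddPotential.integrable_mul {f : Euc d → ℝ} (hV : LocBddPotential Ω V)
    (hu : IsTestFun Ω u) (hf : Continuous f) (h : ∀ x ∉ tsupport u, f x = 0) :
    Integrable fun x => V x * f x := by
  obtain ⟨C, hC⟩ := hV.2 _ hu.2.2 hu.2.1
  refine ((hu.integrable_of_eq_zero hf h).norm.const_mul C).mono'
    (hV.1.aestronglyMeasurable.mul hf.aestronglyMeasurable) (Eventually.of_forall fun x => ?_)
  by_cases hx : x ∈ tsupport u
  · rw [norm_mul]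
    gcongr
    exact hC x hx
  · simp [h x hx]

theorem LocBddPotential.integrable_mul_abs_rpow (hV : LocBddPotential Ω V) (hu : IsTestFun Ω u)
    (hp : 0 < p) : Integrable fun x => V x * |u x| ^ p :=
  hV.integrable_mul hu (hu.continuous_abs_rpow hp.le) fun x hx => by
    simp [image_eq_zero_of_notMem_tsupport hx, hp.ne']

theorem IsTestFun.energyQ_eq (hu : IsTestFun Ω u) (hp : 0 < p) :
    energyQ Ω V p u = ∫ x, (‖fderiv ℝ u x‖ ^ p + V x * |u x| ^ p) := by
  simp only [energyQ, norm_gradient]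
  refine setIntegral_eq_integral_of_forall_compl_eq_zero fun x hx => ?_
  have hx' : x ∉ tsupport u := fun h => hx (hu.2.2 h)
  simp [fderiv_of_notMem_tsupport ℝ hx', image_eq_zero_of_notMem_tsupport hx', hp.ne']

theorem IsTestFun.integrable_energy_density (hu : IsTestFun Ω u) (hV : LocBddPotential Ω V)
    (hp : 0 < p) : Integrable fun x => ‖fderiv ℝ u x‖ ^ p + V x * |u x| ^ p :=
  (hu.integrable_norm_fderiv_rpow hp).add (hV.integrable_mul_abs_rpow hu hp)

theorem IsTestFun.add_mul {v w : Euc d → ℝ} (hu : IsTestFun Ω u) (hv : IsTestFun Ω v)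
    (hw : ContDiff ℝ (⊤ : ℕ∞) w) : IsTestFun Ω fun x => u x + v x * w x :=
  ⟨hu.1.add (hv.1.mul hw), hu.2.1.add hv.2.1.mul_right,
    (tsupport_add u fun x => v x * w x).trans
      (Set.union_subset hu.2.2 (tsupport_mul_subset_left.trans hv.2.2))⟩

theorem NonnegEnergy.integral_le_energyQ_add (hQ : NonnegEnergy Ω V p) (hV : LocBddPotential Ω V)
    (hp : 0 < p) {σ a b : Euc d → ℝ} (hu : IsTestFun Ω u) (hσ : IsTestFun Ω σ)
    (ha : Integrable a) (hb : Integrable b)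
    (h : ∀ x, ‖fderiv ℝ σ x‖ ^ p + V x * |σ x| ^ p ≤
      ‖fderiv ℝ u x‖ ^ p + V x * |u x| ^ p - a x + b x) :
    ∫ x, a x ≤ energyQ Ω V p u + ∫ x, b x := by
  have hdu := hu.integrable_energy_density hV hp
  have hle := integral_mono (hσ.integrable_energy_density hV hp) ((hdu.sub ha).add hb) h
  rw [integral_add' (hdu.sub ha) hb, integral_sub' hdu ha, ← hσ.energyQ_eq hp,
    ← hu.energyQ_eq hp] at hle
  linarith [hQ σ hσ]

theorem norm_smul_add_smul_rpow_le {E : Type*} [NormedAddCommGroup E] [NormedSpace ℝ E]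
    {η m g D M : ℝ} {X Y : E} (hp : 1 < p) (hη : η ∈ Set.Icc 0 1) (hm : m ∈ Set.Icc 0 1)
    (hD : 0 ≤ D) (hM : 0 ≤ M) (hY : ‖Y‖ ^ p ≤ M * η ^ (p - 1)) (hg : |g| ^ p ≤ m ^ (p - 1) * D) :
    ‖(1 - η * m) • X + g • Y‖ ^ p ≤ (1 - η * m / 2) * ‖X‖ ^ p + 2 ^ (p - 1) * M * D := by
  have hηm : 0 ≤ η * m := mul_nonneg hη.1 hm.1
  have hgY : ‖g • Y‖ ^ p ≤ (η * m / 2) ^ (p - 1) * (2 ^ (p - 1) * M * D) := by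
    calc ‖g • Y‖ ^ p = |g| ^ p * ‖Y‖ ^ p := by
          rw [norm_smul, Real.mul_rpow (norm_nonneg _) (norm_nonneg _), Real.norm_eq_abs]
      _ ≤ m ^ (p - 1) * D * (M * η ^ (p - 1)) := by
          gcongr
          exact mul_nonneg (Real.rpow_nonneg hm.1 _) hD
      _ = _ := by
          rw [Real.div_rpow hηm two_pos.le, Real.mul_rpow hη.1 hm.1]
          field_simp
  have := norm_smul_add_rpow_le (X := X) hp (by positivity)
    (by linarith [mul_le_one₀ hη.2 hm.1 hm.2]) (by positivity) hgY
  rwa [mul_div_cancel₀ _ two_ne_zero] at this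

/-- A direction `g = G(u)`, with `G' = -m(u) ≤ 0`, in which the gradient of `u` may be decreased
locally by replacing `u` by `u + η g` for a cutoff `η`. The functions `D` and `F` control the cost
of doing so: `D` is the price of the gradient of `η`, and `F` the change of the `p`-th power. -/
structure IsDescentDirection {E : Type*} [NormedAddCommGroup E] [NormedSpace ℝ E] (p : ℝ)
    (u g m D F : E → ℝ) : Prop where
  contDiff : ContDiff ℝ (⊤ : ℕ∞) g
  fderiv_eq : ∀ x, fderiv ℝ g x = -m x • fderiv ℝ u x
  continuous_rate : Continuous m
  rate_mem : ∀ x, m x ∈ Set.Icc 0 1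
  continuous_gradientCost : Continuous D
  gradientCost_nonneg : ∀ x, 0 ≤ D x
  rpow_le : ∀ x, |g x| ^ p ≤ m x ^ (p - 1) * D x
  continuous_powerCost : Continuous F
  abs_sub_le : ∀ x, ∀ η ∈ Set.Icc (0 : ℝ) 1, |(|u x + η * g x| ^ p - |u x| ^ p)| ≤ F x

theorem NonnegEnergy.integral_mul_norm_fderiv_le (hQ : NonnegEnergy Ω V p)
    (hV : LocBddPotential Ω V) (hp : 1 < p) {η g m D F : Euc d → ℝ} {K : Set (Euc d)} {M Λ : ℝ}
    (hu : IsTestFun Ω u) (hg : IsDescentDirection p u g m D F) (hη : IsTestFun Ω η)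
    (hη_mem : ∀ x, η x ∈ Set.Icc 0 1) (hM : 0 ≤ M)
    (hη' : ∀ x, ‖fderiv ℝ η x‖ ^ p ≤ M * η x ^ (p - 1)) (hK : IsCompact K) (hηK : tsupport η ⊆ K)
    (hΛ : ∀ x ∈ K, |V x| ≤ Λ) :
    ∫ x, η x * (m x / 2 * ‖fderiv ℝ u x‖ ^ p) ≤
      energyQ Ω V p u + ∫ x in K, (2 ^ (p - 1) * M * D x + Λ * F x) := by
  have hp₀ : 0 < p := by linarith
  have hη_cont := hη.1.continuous
  have ⟨hm, hD, hF⟩ := And.intro hg.continuous_rate <|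
    And.intro hg.continuous_gradientCost hg.continuous_powerCost
  rw [← integral_indicator hK.measurableSet]
  refine hQ.integral_le_energyQ_add hV hp₀ hu (hu.add_mul hη hg.contDiff) ?_ ?_ fun x => ?_
  · refine hu.integrable_of_eq_zero ?_ fun x hx => ?_
    · have := hu.continuous_norm_fderiv_rpow hp₀.le
      fun_prop
    · simp [fderiv_of_notMem_tsupport ℝ hx, hp₀.ne']
  · exact (IntegrableOn.integrable_indicator
      (ContinuousOn.integrableOn_compact hK (by fun_prop)) hK.measurableSet)
  have hσ' : fderiv ℝ (fun x => u x + η x * g x) x =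
      (1 - η x * m x) • fderiv ℝ u x + g x • fderiv ℝ η x := by
    have hηg := (hη.contDiff_one.differentiable one_ne_zero x).hasFDerivAt.fun_mul
      (hg.contDiff.differentiable (by simp) x).hasFDerivAt
    rw [((hu.contDiff_one.differentiable one_ne_zero x).hasFDerivAt.fun_add hηg).fderiv,
      hg.fderiv_eq]
    module
  rw [hσ']
  by_cases hx : x ∈ K
  · rw [Set.indicator_of_mem hx]
    have hgrad := norm_smul_add_smul_rpow_le (X := fderiv ℝ u x) hp (hη_mem x) (hg.rate_mem x)
      (hg.gradientCost_nonneg x) hM (hη' x) (hg.rpow_le x)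
    have hpot : V x * (|u x + η x * g x| ^ p - |u x| ^ p) ≤ Λ * F x :=
      (le_abs_self _).trans ((abs_mul _ _).trans_le
        (mul_le_mul (hΛ x hx) (hg.abs_sub_le x _ (hη_mem x)) (abs_nonneg _)
          ((abs_nonneg _).trans (hΛ x hx))))
    linarith
  · have hηx : x ∉ tsupport η := fun h => hx (hηK h)
    simp [Set.indicator_of_notMem hx, fderiv_of_notMem_tsupport ℝ hηx,
      image_eq_zero_of_notMem_tsupport hηx]

theorem exists_caccioppoli (d : ℕ) (hp : 1 < p) :
    ∃ C : ℝ, 0 ≤ C ∧ ∀ {Ω : Set (Euc d)} {V u g m D F : Euc d → ℝ} {x : Euc d} {r R Λ : ℝ},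
      NonnegEnergy Ω V p → LocBddPotential Ω V → IsTestFun Ω u → IsDescentDirection p u g m D F →
      0 ≤ r → r < R → Metric.closedBall x R ⊆ Ω → (∀ y ∈ Metric.closedBall x R, |V y| ≤ Λ) →
      ∫ y in Metric.closedBall x r, m y * ‖fderiv ℝ u y‖ ^ p ≤
        2 * energyQ Ω V p u +
          ∫ y in Metric.closedBall x R, (C / (R - r) ^ p * D y + 2 * Λ * F y) := by
  obtain ⟨C, hC, hcut⟩ := exists_smooth_cutoff (E := Euc d) hp
  refine ⟨2 ^ p * C, by positivity, fun {Ω V u g m D F x r R Λ} hQ hV hu hg hr hrR hR hΛ => ?_⟩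
  obtain ⟨η, hη, hη_mem, hη_one, hη_supp, hη'⟩ := hcut x r R hr hrR
  have hηK := isCompact_closedBall x R
  have hη_test : IsTestFun Ω η :=
    ⟨hη, HasCompactSupport.of_support_subset_isCompact hηK
      ((subset_tsupport η).trans hη_supp), hη_supp.trans hR⟩
  have : 0 < R - r := sub_pos.2 hrR
  have hdu := hu.continuous_norm_fderiv_rpow (p := p) (by linarith)
  have hm := hg.continuous_rate
  have hle := hQ.integral_mul_norm_fderiv_le hV hp hu hg hη_test hη_mem (by positivity) hη' hηK
    hη_supp hΛ
  have hball : ∫ y in Metric.closedBall x r, m y / 2 * ‖fderiv ℝ u y‖ ^ p ≤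
      ∫ y, η y * (m y / 2 * ‖fderiv ℝ u y‖ ^ p) := by
    rw [setIntegral_congr_fun (g := fun y => η y * (m y / 2 * ‖fderiv ℝ u y‖ ^ p))
      measurableSet_closedBall fun y hy => by simp [hη_one y hy]]
    refine setIntegral_le_integral ?_ (Eventually.of_forall fun y => ?_)
    · refine hη_test.integrable_of_eq_zero (by have := hη.continuous; fun_prop) fun y hy => ?_
      simp [image_eq_zero_of_notMem_tsupport hy]
    · have := (hη_mem y).1
      have := (hg.rate_mem y).1
      positivity
  calc ∫ y in Metric.closedBall x r, m y * ‖fderiv ℝ u y‖ ^ p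
      = 2 * ∫ y in Metric.closedBall x r, m y / 2 * ‖fderiv ℝ u y‖ ^ p := by
        rw [← integral_const_mul]
        exact integral_congr_ae (Eventually.of_forall fun y => by dsimp only; ring)
    _ ≤ 2 * (energyQ Ω V p u + ∫ y in Metric.closedBall x R,
          (2 ^ (p - 1) * (C / (R - r) ^ p) * D y + Λ * F y)) := by gcongr; exact hball.trans hle
    _ = _ := by
        rw [mul_add, ← integral_const_mul]
        congr 1
        refine integral_congr_ae (Eventually.of_forall fun y => ?_)
        dsimp only
        rw [Real.rpow_sub_one two_ne_zero]
        ring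

theorem isDescentDirection_neg (hp : 0 < p) (hu : IsTestFun Ω u) (hu₀ : ∀ x, 0 ≤ u x) :
    IsDescentDirection p u (-u) 1 (fun x => u x ^ p) (fun x => u x ^ p) := by
  have hup : Continuous fun x => u x ^ p :=
    hu.1.continuous.rpow_const fun _ => Or.inr hp.le
  refine ⟨hu.1.neg, fun x => ?_, continuous_one, by simp, hup, fun x => Real.rpow_nonneg (hu₀ x) p,
    fun x => ?_, hup, fun x η hη => ?_⟩
  · simp [fderiv_neg]
  · simp [abs_of_nonneg (hu₀ x)]
  · have hη' : 0 ≤ 1 - η := sub_nonneg.2 hη.2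
    have hle : ((1 - η) * u x) ^ p ≤ u x ^ p :=
      Real.rpow_le_rpow (mul_nonneg hη' (hu₀ x))
        (mul_le_of_le_one_left (hu₀ x) (by linarith [hη.1])) hp.le
    have : u x + η * (-u) x = (1 - η) * u x := by simp; ring
    rw [this, abs_of_nonneg (mul_nonneg hη' (hu₀ x)), abs_of_nonneg (hu₀ x), abs_sub_comm,
      abs_of_nonneg (sub_nonneg.2 hle)]
    linarith [Real.rpow_nonneg (mul_nonneg hη' (hu₀ x)) p]

theorem abs_rpow_one_sub_rpow_eq {s w : ℝ} (hp : 1 < p) (hs : 0 < s) (hw : 0 < w) :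
    |s ^ p / p * w ^ (1 - p)| ^ p =
      (s ^ p * ((p - 1) / p) * w ^ (-p)) ^ (p - 1) * (s ^ p * (p - 1) ^ (1 - p) / p) := by
  have hp₀ : 0 < p := by linarith
  have hp₁ : 0 < p - 1 := by linarith
  rw [abs_of_nonneg (by positivity)]
  refine Real.log_injOn_pos (Set.mem_Ioi.2 (by positivity)) (Set.mem_Ioi.2 (by positivity)) ?_
  rw [Real.log_rpow (by positivity), Real.log_mul (by positivity) (by positivity),
    Real.log_div (by positivity) hp₀.ne', Real.log_mul (by positivity) (by positivity),
    Real.log_rpow (x := s ^ p * ((p - 1) / p) * w ^ (-p)) (by positivity),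
    Real.log_mul (by positivity) (by positivity), Real.log_mul (by positivity) (by positivity),
    Real.log_div hp₁.ne' hp₀.ne', Real.log_div (by positivity) hp₀.ne',
    Real.log_mul (by positivity) (by positivity), Real.log_rpow hs, Real.log_rpow hw,
    Real.log_rpow hw, Real.log_rpow hp₁]
  ring

theorem abs_rpow_add_sub_rpow_le {s a η : ℝ} (hp : 1 < p) (hs : 0 < s) (ha : 0 ≤ a)
    (hη : η ∈ Set.Icc (0 : ℝ) 1) :
    |(|a + η * (s ^ p / p * (a + s) ^ (1 - p))| ^ p - |a| ^ p)| ≤ s ^ p := by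
  have hw : 0 < a + s := by linarith
  set g := s ^ p / p * (a + s) ^ (1 - p) with hg
  have hg₀ : 0 ≤ g := by positivity
  have hηg : 0 ≤ η * g := mul_nonneg hη.1 hg₀
  have hpg : p * g = s ^ p * (a + s) ^ (1 - p) := by rw [hg]; field_simp
  have hgs : g ≤ s := by
    have hle : (a + s) ^ (1 - p) ≤ s ^ (1 - p) :=
      Real.rpow_le_rpow_of_nonpos hs (by linarith) (by linarith)
    have : p * g ≤ s := by
      calc p * g = s ^ p * (a + s) ^ (1 - p) := hpg
        _ ≤ s ^ p * s ^ (1 - p) := by gcongr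
        _ = s := by rw [← Real.rpow_add hs]; simp
    nlinarith
  have hle : a + η * g ≤ a + s := by nlinarith [hη.2]
  rw [abs_of_nonneg (by linarith : 0 ≤ a + η * g), abs_of_nonneg ha, abs_of_nonneg (sub_nonneg.2
    (Real.rpow_le_rpow ha (by linarith) (by linarith)))]
  calc (a + η * g) ^ p - a ^ p ≤ p * (a + η * g - a) * (a + η * g) ^ (p - 1) :=
        rpow_sub_rpow_le ha (by linarith) hp.le
    _ = η * (p * g) * (a + η * g) ^ (p - 1) := by ring
    _ ≤ 1 * (p * g) * (a + s) ^ (p - 1) := by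
        gcongr
        exact hη.2
    _ = s ^ p := by
        rw [one_mul, hpg, mul_assoc, ← Real.rpow_add hw]
        simp

theorem isDescentDirection_log (hp : 1 < p) (hu : IsTestFun Ω u) (hu₀ : ∀ x, 0 ≤ u x) {s : ℝ}
    (hs : 0 < s) :
    IsDescentDirection p u (fun x => s ^ p / p * (u x + s) ^ (1 - p))
      (fun x => s ^ p * ((p - 1) / p) * (u x + s) ^ (-p))
      (fun _ => s ^ p * (p - 1) ^ (1 - p) / p) (fun _ => s ^ p) := by
  have hus : ∀ x, 0 < u x + s := fun x => by linarith [hu₀ x]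
  have : 0 < p - 1 := by linarith
  have hdiff := hu.1.add (contDiff_const (c := s))
  refine ⟨contDiff_const.mul (hdiff.rpow_const_of_ne fun x => (hus x).ne'), fun x => ?_,
    continuous_const.mul ((hdiff.continuous).rpow_const fun x => Or.inl (hus x).ne'),
    fun x => ⟨?_, ?_⟩, continuous_const, fun _ => by positivity, fun x => ?_, continuous_const,
    fun x η hη => ?_⟩
  · have hd := (((hu.contDiff_one.differentiable one_ne_zero x).hasFDerivAt.add_const s).rpow_const
      (p := 1 - p) (Or.inl (hus x).ne')).const_mul (s ^ p / p)
    rw [hd.fderiv, show 1 - p - 1 = -p by ring, smul_smul]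
    congr 1
    ring
  · have := hus x
    positivity
  · have hle : s ^ p * (u x + s) ^ (-p) ≤ 1 := by
      rw [Real.rpow_neg (hus x).le, ← div_eq_mul_inv, div_le_one (Real.rpow_pos_of_pos (hus x) p)]
      exact Real.rpow_le_rpow hs.le (by linarith [hu₀ x]) (by linarith)
    have hp' : (p - 1) / p ≤ 1 := (div_le_one (by linarith)).2 (by linarith)
    calc _ = (p - 1) / p * (s ^ p * (u x + s) ^ (-p)) := by ring
      _ ≤ 1 := mul_le_one₀ hp' (by have := hus x; positivity) hle
  · exact (abs_rpow_one_sub_rpow_eq hp hs (hus x)).le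
  · exact abs_rpow_add_sub_rpow_le hp hs (hu₀ x) hη

end Energy

theorem setLIntegral_enorm_rpow_eq {X F : Type*} [TopologicalSpace X] [T2Space X]
    [MeasurableSpace X] [BorelSpace X] [SeminormedAddCommGroup F]
    {μ : Measure X} [IsFiniteMeasureOnCompacts μ] {f : X → F} {K : Set X} {p : ℝ}
    (hf : Continuous f) (hK : IsCompact K) (hp : 0 ≤ p) :
    ∫⁻ x in K, ‖f x‖ₑ ^ p ∂μ = ENNReal.ofReal (∫ x in K, ‖f x‖ ^ p ∂μ) := by
  have hfp : Continuous fun x => ‖f x‖ ^ p := hf.norm.rpow_const fun _ => Or.inr hp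
  rw [ofReal_integral_eq_lintegral_ofReal (hfp.continuousOn.integrableOn_compact hK)
    (Eventually.of_forall fun x => by positivity)]
  simp only [← ENNReal.ofReal_rpow_of_nonneg (norm_nonneg _) hp, ofReal_norm]

section Energy

variable {d : ℕ} {Ω : Set (Euc d)} {V : Euc d → ℝ} {p : ℝ} {u : Euc d → ℝ}

theorem exists_caccioppoli_rpow (d : ℕ) (hp : 1 < p) :
    ∃ C : ℝ, 0 ≤ C ∧ ∀ {Ω : Set (Euc d)} {V u : Euc d → ℝ} {x : Euc d} {r R Λ : ℝ},
      NonnegEnergy Ω V p → LocBddPotential Ω V → IsTestFun Ω u → (∀ x, 0 ≤ u x) →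
      0 ≤ r → r < R → Metric.closedBall x R ⊆ Ω → (∀ y ∈ Metric.closedBall x R, |V y| ≤ Λ) →
      ∫⁻ y in Metric.closedBall x r, ‖fderiv ℝ u y‖ₑ ^ p ≤
        ENNReal.ofReal (2 * energyQ Ω V p u) +
          ENNReal.ofReal (C / (R - r) ^ p + 2 * Λ) * ∫⁻ y in Metric.closedBall x R, ‖u y‖ₑ ^ p := by
  obtain ⟨C, hC, hcacc⟩ := exists_caccioppoli d hp
  refine ⟨C, hC, fun {Ω V u x r R Λ} hQ hV hu hu₀ hr hrR hR hΛ => ?_⟩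
  have hp₀ : 0 < p := by linarith
  have hΛ₀ : 0 ≤ Λ := (abs_nonneg _).trans (hΛ x (Metric.mem_closedBall_self (hr.trans hrR.le)))
  have : 0 < R - r := sub_pos.2 hrR
  have hle := hcacc hQ hV hu (isDescentDirection_neg hp₀ hu hu₀) hr hrR hR hΛ
  simp only [Pi.one_apply, one_mul, ← add_mul, integral_const_mul] at hle
  rw [setLIntegral_enorm_rpow_eq (hu.contDiff_one.continuous_fderiv one_ne_zero)
    (isCompact_closedBall x r) hp₀.le, setLIntegral_enorm_rpow_eq hu.1.continuous
    (isCompact_closedBall x R) hp₀.le, ← ENNReal.ofReal_mul (by positivity),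
    ← ENNReal.ofReal_add (by linarith [hQ u hu])
      (mul_nonneg (by positivity) (integral_nonneg fun y => by positivity))]
  simp only [Real.norm_of_nonneg (hu₀ _)]
  exact ENNReal.ofReal_le_ofReal hle

theorem IsTestFun.fderiv_log_add (hu : IsTestFun Ω u) (hu₀ : ∀ x, 0 ≤ u x) {s : ℝ} (hs : 0 < s)
    (y : Euc d) : fderiv ℝ (fun z => Real.log (u z + s)) y = (u y + s)⁻¹ • fderiv ℝ u y :=
  (((hu.contDiff_one.differentiable one_ne_zero y).hasFDerivAt.add_const s).log
    (by linarith [hu₀ y])).fderiv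

theorem IsTestFun.continuous_fderiv_log_add (hu : IsTestFun Ω u) (hu₀ : ∀ x, 0 ≤ u x) {s : ℝ}
    (hs : 0 < s) : Continuous (fderiv ℝ fun z => Real.log (u z + s)) := by
  have := hu.contDiff_one.continuous_fderiv one_ne_zero
  have := hu.1.continuous
  rw [funext (hu.fderiv_log_add hu₀ hs)]
  fun_prop (disch := exact fun y => by linarith [hu₀ y])

theorem measure_closedBall_two_mul {E : Type*} [NormedAddCommGroup E] [NormedSpace ℝ E]
    [FiniteDimensional ℝ E] [MeasurableSpace E] [BorelSpace E] (μ : Measure E)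
    [μ.IsAddHaarMeasure] (x : E) {r : ℝ} (hr : 0 ≤ r) :
    μ (Metric.closedBall x (2 * r)) = 2 ^ Module.finrank ℝ E * μ (Metric.closedBall x r) := by
  rw [Measure.addHaar_closedBall_mul _ x two_pos.le hr, Measure.addHaar_closedBall_center μ x r,
    ENNReal.ofReal_pow two_pos.le, ENNReal.ofReal_ofNat]

theorem exists_caccioppoli_log (d : ℕ) (hp : 1 < p) {Λ : ℝ} (hΛ₀ : 0 ≤ Λ) :
    ∃ C : ℝ, 0 ≤ C ∧ ∀ {Ω : Set (Euc d)} {V u : Euc d → ℝ} {x : Euc d} {ρ s : ℝ},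
      NonnegEnergy Ω V p → LocBddPotential Ω V → IsTestFun Ω u → (∀ x, 0 ≤ u x) →
      0 < s → 0 < ρ → ρ ≤ 1 → Metric.closedBall x (2 * ρ) ⊆ Ω →
      (∀ y ∈ Metric.closedBall x (2 * ρ), |V y| ≤ Λ) →
      energyQ Ω V p u ≤ s ^ p * volume.real (Metric.closedBall x ρ) →
      ∫⁻ y in Metric.closedBall x ρ, ‖fderiv ℝ (fun z => Real.log (u z + s)) y‖ₑ ^ p ≤
        ENNReal.ofReal (C / ρ ^ p) * volume (Metric.closedBall x ρ) := by
  obtain ⟨C, hC, hcacc⟩ := exists_caccioppoli d hp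
  have hp₁ : 0 < p - 1 := by linarith
  set c := (p - 1) ^ (1 - p) / p with hc
  have hc₀ : 0 ≤ c := by positivity
  refine ⟨p / (p - 1) * (2 + 2 ^ d * (C * c + 2 * Λ)), by positivity,
    fun {Ω V u x ρ s} hQ hV hu hu₀ hs hρ hρ₁ hR hΛ hE => ?_⟩
  have hus : ∀ y, 0 < u y + s := fun y => by linarith [hu₀ y]
  have hle := hcacc hQ hV hu (isDescentDirection_log hp hu hu₀ hs) hρ.le (by linarith) hR hΛ
  have hnorm : ∀ y, s ^ p * ((p - 1) / p) * (u y + s) ^ (-p) * ‖fderiv ℝ u y‖ ^ p =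
      s ^ p * ((p - 1) / p) * ‖fderiv ℝ (fun z => Real.log (u z + s)) y‖ ^ p := fun y => by
    have := hus y
    rw [hu.fderiv_log_add hu₀ hs, norm_smul, Real.mul_rpow (norm_nonneg _) (norm_nonneg _),
      Real.norm_of_nonneg (by positivity), Real.inv_rpow this.le, Real.rpow_neg this.le]
    ring
  simp only [hnorm, integral_const_mul, setIntegral_const, smul_eq_mul,
    Measure.real, measure_closedBall_two_mul volume x hρ.le, finrank_euclideanSpace,
    Fintype.card_fin, ENNReal.toReal_mul, ENNReal.toReal_pow, ENNReal.toReal_ofNat] at hle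
  rw [setLIntegral_enorm_rpow_eq
    (hu.continuous_fderiv_log_add hu₀ hs) (isCompact_closedBall x ρ) (by linarith),
    ← ofReal_measureReal (isCompact_closedBall x ρ).measure_ne_top,
    ← ENNReal.ofReal_mul (by positivity)]
  refine ENNReal.ofReal_le_ofReal ?_
  simp only [measureReal_def] at hE ⊢
  set v := (volume (Metric.closedBall x ρ)).toReal
  set k := (ρ ^ p)⁻¹ with hk
  have : 0 ≤ v := ENNReal.toReal_nonneg
  have hk₁ : 1 ≤ k := (one_le_inv₀ (by positivity)).2 (Real.rpow_le_one hρ.le hρ₁ (by linarith))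
  refine le_of_mul_le_mul_left (hle.trans ?_)
    (show 0 < s ^ p * ((p - 1) / p) by positivity)
  calc _ ≤ 2 * (s ^ p * v) + 2 ^ d * v * (C * k * (s ^ p * c) + 2 * Λ * s ^ p) := by
        rw [hk, ← div_eq_mul_inv, hc, ← mul_div_assoc (s ^ p), show 2 * ρ - ρ = ρ by ring]
        gcongr
    _ = s ^ p * v * (2 * 1 + 2 ^ d * (C * c * k + 2 * Λ * 1)) := by ring
    _ ≤ s ^ p * v * (2 * k + 2 ^ d * (C * c * k + 2 * Λ * k)) := by gcongr
    _ = _ := by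
        rw [hk]
        field_simp

end Energy

/-! ### The Poincaré inequality and the comparison of averages -/

theorem lintegral_rpow_le {X : Type*} [MeasurableSpace X] {μ : Measure X} [IsProbabilityMeasure μ]
    {f : X → ENNReal} (hf : AEMeasurable f μ) {p : ℝ} (hp : 1 ≤ p) :
    (∫⁻ x, f x ∂μ) ^ p ≤ ∫⁻ x, f x ^ p ∂μ := by
  have := eLpNorm'_le_eLpNorm'_of_exponent_le one_pos hp μ hf.aestronglyMeasurable
  simp only [eLpNorm', enorm_eq_self, ENNReal.rpow_one, div_one] at this
  rwa [one_div, ENNReal.le_rpow_inv_iff (by linarith)] at this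

section Poincare

variable {E : Type*} [NormedAddCommGroup E] [NormedSpace ℝ E]

theorem enorm_sub_rpow_le_lintegral_fderiv [MeasurableSpace E] [BorelSpace E] {F : E → ℝ}
    (hF : ContDiff ℝ 1 F) {p : ℝ} (hp : 1 ≤ p) (y z : E) :
    ‖F z - F y‖ₑ ^ p ≤
      edist z y ^ p * ∫⁻ t in Set.Ioc (0 : ℝ) 1, ‖fderiv ℝ F ((1 - t) • y + t • z)‖ₑ ^ p := by
  have hpath : ∀ t : ℝ, HasDerivAt (fun t : ℝ => (1 - t) • y + t • z) (z - y) t := fun t =>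
    ((((hasDerivAt_id t).const_sub 1).smul_const y).add
      ((hasDerivAt_id t).smul_const z)).congr_deriv (by module)
  have hdF : Continuous fun t : ℝ => fderiv ℝ F ((1 - t) • y + t • z) :=
    (hF.continuous_fderiv one_ne_zero).comp (by fun_prop)
  have hftc : ∫ t in (0 : ℝ)..1, fderiv ℝ F ((1 - t) • y + t • z) (z - y) = F z - F y := by
    rw [intervalIntegral.integral_eq_sub_of_hasDerivAt
      (fun t _ => (hF.differentiable one_ne_zero _).hasFDerivAt.comp_hasDerivAt t (hpath t))
      ((hdF.clm_apply continuous_const).intervalIntegrable 0 1)]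
    simp
  have : IsProbabilityMeasure (volume.restrict (Set.Ioc (0 : ℝ) 1)) := ⟨by simp⟩
  calc ‖F z - F y‖ₑ ^ p
      ≤ (∫⁻ t in Set.Ioc (0 : ℝ) 1, ‖fderiv ℝ F ((1 - t) • y + t • z) (z - y)‖ₑ) ^ p := by
        rw [← hftc, intervalIntegral.integral_of_le zero_le_one]
        gcongr
        exact enorm_integral_le_lintegral_enorm _
    _ ≤ ∫⁻ t in Set.Ioc (0 : ℝ) 1, ‖fderiv ℝ F ((1 - t) • y + t • z) (z - y)‖ₑ ^ p :=
        lintegral_rpow_le (hdF.clm_apply continuous_const).enorm.aemeasurable hp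
    _ ≤ ∫⁻ t in Set.Ioc (0 : ℝ) 1,
          edist z y ^ p * ‖fderiv ℝ F ((1 - t) • y + t • z)‖ₑ ^ p := by
        gcongr with t
        rw [← ENNReal.mul_rpow_of_nonneg _ _ (by linarith), edist_eq_enorm_sub, mul_comm]
        gcongr
        exact ContinuousLinearMap.le_opENorm _ _
    _ = _ := lintegral_const_mul _ (hdF.enorm.measurable.pow_const p)

variable [FiniteDimensional ℝ E] [MeasurableSpace E] [BorelSpace E] (μ : Measure E)
  [μ.IsAddHaarMeasure] {B : Set E}

theorem setLIntegral_comp_combo_le (hB : MeasurableSet B) (hBc : Convex ℝ B) {g : E → ENNReal}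
    (hg : Measurable g) {t : ℝ} (ht : t ∈ Set.Icc (1 / 2) 1) {y : E} (hy : y ∈ B) :
    ∫⁻ z in B, g ((1 - t) • y + t • z) ∂μ ≤ 2 ^ Module.finrank ℝ E * ∫⁻ w in B, g w ∂μ := by
  have ht₀ : 0 < t := by linarith [ht.1]
  have hgB : Measurable (B.indicator g) := hg.indicator hB
  have hscale : ENNReal.ofReal |(t ^ Module.finrank ℝ E)⁻¹| ≤ 2 ^ Module.finrank ℝ E := by
    have hle : (t⁻¹) ^ Module.finrank ℝ E ≤ 2 ^ Module.finrank ℝ E := by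
      gcongr
      rw [inv_le_comm₀ ht₀ two_pos]
      linarith [ht.1]
    rw [abs_of_nonneg (by positivity), ← inv_pow]
    exact (ENNReal.ofReal_le_ofReal hle).trans_eq (by simp [ENNReal.ofReal_pow])
  rw [← lintegral_indicator hB, ← lintegral_indicator hB]
  calc ∫⁻ z, B.indicator (fun z => g ((1 - t) • y + t • z)) z ∂μ
      ≤ ∫⁻ z, B.indicator g ((1 - t) • y + t • z) ∂μ := by
        refine lintegral_mono fun z => ?_
        by_cases hz : z ∈ B
        · have := hBc hy hz (sub_nonneg.2 ht.2) ht₀.le (sub_add_cancel 1 t)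
          simp [hz, this]
        · simp [hz]
    _ = ∫⁻ z, B.indicator g ((1 - t) • y + z) ∂(μ.map (t • ·)) :=
        (lintegral_map (hgB.comp (measurable_const_add _)) (measurable_const_smul t)).symm
    _ = ENNReal.ofReal |(t ^ Module.finrank ℝ E)⁻¹| * ∫⁻ z, B.indicator g z ∂μ := by
        rw [Measure.map_addHaar_smul _ ht₀.ne', lintegral_smul_measure,
          lintegral_add_left_eq_self, smul_eq_mul]
    _ ≤ _ := by gcongr

theorem lintegral_lintegral_comp_combo_le (hB : MeasurableSet B) (hBc : Convex ℝ B)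
    {g : E → ENNReal} (hg : Measurable g) {t : ℝ} (ht : t ∈ Set.Icc 0 1) :
    ∫⁻ y in B, ∫⁻ z in B, g ((1 - t) • y + t • z) ∂μ ∂μ ≤
      2 ^ Module.finrank ℝ E * μ B * ∫⁻ w in B, g w ∂μ := by
  wlog h : 1 / 2 ≤ t generalizing t
  · have := this (t := 1 - t) ⟨by linarith [ht.2], by linarith [ht.1]⟩ (by linarith)
    rw [lintegral_lintegral_swap (by unfold Function.uncurry; fun_prop)]
    simpa only [sub_sub_cancel, add_comm] using this
  calc _ ≤ ∫⁻ _ in B, 2 ^ Module.finrank ℝ E * ∫⁻ w in B, g w ∂μ ∂μ :=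
        setLIntegral_mono' hB fun y hy =>
          setLIntegral_comp_combo_le μ hB hBc hg ⟨h, ht.2⟩ hy
    _ = _ := by rw [setLIntegral_const]; ring

theorem lintegral_lintegral_enorm_sub_rpow_le (hB : MeasurableSet B) (hBc : Convex ℝ B)
    {F : E → ℝ} (hF : ContDiff ℝ 1 F) {p : ℝ} (hp : 1 ≤ p) :
    ∫⁻ y in B, ∫⁻ z in B, ‖F z - F y‖ₑ ^ p ∂μ ∂μ ≤
      Metric.ediam B ^ p * (2 ^ Module.finrank ℝ E * μ B *
        ∫⁻ w in B, ‖fderiv ℝ F w‖ₑ ^ p ∂μ) := by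
  set g : E → ENNReal := fun w => ‖fderiv ℝ F w‖ₑ ^ p
  have hg : Measurable g := (hF.continuous_fderiv one_ne_zero).enorm.measurable.pow_const p
  calc ∫⁻ y in B, ∫⁻ z in B, ‖F z - F y‖ₑ ^ p ∂μ ∂μ
      ≤ ∫⁻ y in B, ∫⁻ z in B, Metric.ediam B ^ p *
          (∫⁻ t in Set.Ioc (0 : ℝ) 1, g ((1 - t) • y + t • z)) ∂μ ∂μ := by
        refine setLIntegral_mono' hB fun y hy => setLIntegral_mono' hB fun z hz => ?_
        refine (enorm_sub_rpow_le_lintegral_fderiv hF hp y z).trans ?_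
        gcongr
        exact Metric.edist_le_ediam_of_mem hz hy
    _ = Metric.ediam B ^ p * ∫⁻ t in Set.Ioc (0 : ℝ) 1,
          ∫⁻ y in B, ∫⁻ z in B, g ((1 - t) • y + t • z) ∂μ ∂μ := by
        have hm : Measurable fun q : (E × E) × ℝ => g ((1 - q.2) • q.1.1 + q.2 • q.1.2) := by
          fun_prop
        rw [← lintegral_prod (μ := μ.restrict B) (ν := μ.restrict B) (fun q : E × E =>
            Metric.ediam B ^ p * ∫⁻ t in Set.Ioc (0 : ℝ) 1, g ((1 - t) • q.1 + t • q.2))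
            (hm.lintegral_prod_right'.const_mul _).aemeasurable,
          lintegral_const_mul _ hm.lintegral_prod_right', lintegral_lintegral_swap hm.aemeasurable]
        congr 1
        refine lintegral_congr fun t => lintegral_prod _ (Measurable.aemeasurable ?_)
        fun_prop
    _ ≤ Metric.ediam B ^ p * ∫⁻ t in Set.Ioc (0 : ℝ) 1,
          2 ^ Module.finrank ℝ E * μ B * ∫⁻ w in B, g w ∂μ := by
        refine mul_le_mul_right ?_ _
        exact setLIntegral_mono' measurableSet_Ioc fun t ht =>
          lintegral_lintegral_comp_combo_le μ hB hBc hg (Set.Ioc_subset_Icc_self ht)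
    _ = _ := by simp

end Poincare

section Averages

variable {X : Type*} [MeasurableSpace X] {μ : Measure X} {f : X → ℝ} {S T B : Set X}

theorem measure_mul_setLIntegral_ofReal_sub_le (hf : Measurable f) (c : ℝ) (S T : Set X) :
    μ S * ∫⁻ x in T, ENNReal.ofReal (f x - c) ∂μ ≤
      μ T * ∫⁻ x in S, ENNReal.ofReal (f x - c) ∂μ +
        ∫⁻ x in T, ∫⁻ y in S, ‖f x - f y‖ₑ ∂μ ∂μ := by
  have hpt : ∀ x y, ENNReal.ofReal (f x - c) ≤ ENNReal.ofReal (f y - c) + ‖f x - f y‖ₑ :=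
    fun x y => by
      rw [Real.enorm_eq_ofReal_abs]
      refine (ENNReal.ofReal_le_ofReal ?_).trans ENNReal.ofReal_add_le
      linarith [le_abs_self (f x - f y)]
  calc μ S * ∫⁻ x in T, ENNReal.ofReal (f x - c) ∂μ
      = ∫⁻ x in T, ∫⁻ _ in S, ENNReal.ofReal (f x - c) ∂μ ∂μ := by
        rw [← lintegral_const_mul _ (by fun_prop)]
        simp only [setLIntegral_const, mul_comm]
    _ ≤ ∫⁻ x in T, ∫⁻ y in S, (ENNReal.ofReal (f y - c) + ‖f x - f y‖ₑ) ∂μ ∂μ := by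
        gcongr with x y
        exact hpt x y
    _ = _ := by
        simp_rw [fun x => lintegral_add_left (μ := μ.restrict S)
          (f := fun y => ENNReal.ofReal (f y - c)) (by fun_prop) fun y => ‖f x - f y‖ₑ]
        rw [lintegral_add_left measurable_const, setLIntegral_const, mul_comm]

theorem setLAverage_ofReal_sub_le {C N : ENNReal} (hf : Measurable f) (c : ℝ) (hS : S ⊆ B)
    (hT : T ⊆ B) (hB₀ : μ B ≠ 0) (hB : μ B ≠ ⊤) (hNS : μ B ≤ N * μ S) (hNT : μ B ≤ N * μ T)
    (hosc : ∫⁻ x in B, ∫⁻ y in B, ‖f x - f y‖ₑ ∂μ ∂μ ≤ C * μ B ^ 2) :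
    ⨍⁻ x in T, ENNReal.ofReal (f x - c) ∂μ ≤
      ⨍⁻ x in S, ENNReal.ofReal (f x - c) ∂μ + N ^ 2 * C := by
  have hS₀ : μ S ≠ 0 := fun h => hB₀ (by simpa [h] using hNS)
  have hT₀ : μ T ≠ 0 := fun h => hB₀ (by simpa [h] using hNT)
  have hS' : μ S ≠ ⊤ := measure_ne_top_of_subset hS hB
  have hT' : μ T ≠ ⊤ := measure_ne_top_of_subset hT hB
  rw [setLAverage_eq, setLAverage_eq, ENNReal.div_le_iff hT₀ hT',
    ← ENNReal.mul_le_mul_iff_right hS₀ hS']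
  calc μ S * ∫⁻ x in T, ENNReal.ofReal (f x - c) ∂μ
      ≤ μ T * ∫⁻ x in S, ENNReal.ofReal (f x - c) ∂μ +
          ∫⁻ x in T, ∫⁻ y in S, ‖f x - f y‖ₑ ∂μ ∂μ :=
        measure_mul_setLIntegral_ofReal_sub_le hf c S T
    _ ≤ μ T * ∫⁻ x in S, ENNReal.ofReal (f x - c) ∂μ + C * ((N * μ S) * (N * μ T)) := by
        gcongr
        calc _ ≤ ∫⁻ x in B, ∫⁻ y in B, ‖f x - f y‖ₑ ∂μ ∂μ :=
              (lintegral_mono_set hT).trans (lintegral_mono fun x => lintegral_mono_set hS)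
          _ ≤ C * (μ B * μ B) := by rwa [← sq]
          _ ≤ _ := by gcongr
    _ = _ := by
        rw [add_mul, mul_add, ← mul_assoc (μ S), ENNReal.mul_div_cancel hS₀ hS']
        ring

end Averages

section Ball

variable {E : Type*} [NormedAddCommGroup E] [NormedSpace ℝ E] [FiniteDimensional ℝ E]
  [MeasurableSpace E] [BorelSpace E] {μ : Measure E} [μ.IsAddHaarMeasure]

theorem setLAverage_closedBall_div_two_pow_le {f : E → ℝ} {C : ENNReal} (hf : Measurable f) (c : ℝ)
    {x : E} {ρ : ℝ} (hρ : 0 < ρ) {J : ℕ}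
    (hosc : ∀ j < J, ∫⁻ y in Metric.closedBall x (ρ / 2 ^ j),
      ∫⁻ z in Metric.closedBall x (ρ / 2 ^ j), ‖f y - f z‖ₑ ∂μ ∂μ ≤
        C * μ (Metric.closedBall x (ρ / 2 ^ j)) ^ 2) :
    ⨍⁻ y in Metric.closedBall x (ρ / 2 ^ J), ENNReal.ofReal (f y - c) ∂μ ≤
      ⨍⁻ y in Metric.closedBall x ρ, ENNReal.ofReal (f y - c) ∂μ +
        J * (4 ^ Module.finrank ℝ E * C) := by
  induction J with
  | zero => simp
  | succ J ih =>
    have hρJ : 0 < ρ / 2 ^ J := by positivity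
    have hsub : ρ / 2 ^ (J + 1) ≤ ρ / 2 ^ J := by gcongr <;> simp
    have hdouble : μ (Metric.closedBall x (ρ / 2 ^ J)) =
        2 ^ Module.finrank ℝ E * μ (Metric.closedBall x (ρ / 2 ^ (J + 1))) := by
      rw [← measure_closedBall_two_mul μ x (by positivity), pow_succ]
      congr 2
      field_simp
    have hstep := setLAverage_ofReal_sub_le hf c subset_rfl
      (Metric.closedBall_subset_closedBall hsub)
      (Metric.measure_closedBall_pos μ x hρJ).ne' (isCompact_closedBall x _).measure_ne_top
      (le_mul_of_one_le_left' (one_le_pow₀ one_le_two)) hdouble.le (hosc J J.lt_succ_self)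
    refine hstep.trans
      ((add_le_add_left (ih fun j hj => hosc j (hj.trans J.lt_succ_self)) _).trans_eq ?_)
    rw [← pow_mul, mul_comm _ 2, pow_mul]
    push_cast
    norm_num
    ring

theorem lintegral_setLIntegral_closedBall {G : E → ENNReal} (hG : Measurable G) (A : Set E)
    (δ : ℝ) : ∫⁻ y in A, ∫⁻ z in Metric.closedBall y δ, G z ∂μ ∂μ =
      ∫⁻ z, μ (Metric.closedBall z δ ∩ A) * G z ∂μ := by
  have hclosed : IsClosed {q : E × E | dist q.2 q.1 ≤ δ} :=
    isClosed_le (by fun_prop) continuous_const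
  have hm : Measurable fun q : E × E => {q : E × E | dist q.2 q.1 ≤ δ}.indicator (G ∘ Prod.snd) q :=
    (hG.comp measurable_snd).indicator hclosed.measurableSet
  calc ∫⁻ y in A, ∫⁻ z in Metric.closedBall y δ, G z ∂μ ∂μ
      = ∫⁻ y in A, ∫⁻ z, {q : E × E | dist q.2 q.1 ≤ δ}.indicator (G ∘ Prod.snd) (y, z) ∂μ ∂μ :=
        lintegral_congr fun y => (lintegral_indicator measurableSet_closedBall _).symm
    _ = ∫⁻ z, ∫⁻ y in A, (Metric.closedBall z δ).indicator (fun _ => G z) y ∂μ ∂μ := by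
        rw [lintegral_lintegral_swap hm.aemeasurable]
        refine lintegral_congr fun z => lintegral_congr fun y => ?_
        by_cases h : dist y z ≤ δ <;> simp [h, dist_comm z y]
    _ = _ := lintegral_congr fun z => by
        rw [lintegral_indicator_const measurableSet_closedBall,
          Measure.restrict_apply measurableSet_closedBall, mul_comm]

theorem setLIntegral_closedBall_le_of_forall {G H : E → ENNReal} (hG : Measurable G)
    (hH : Measurable H) {x : E} {r δ : ℝ} (hδ : 0 < δ)
    (h : ∀ y ∈ Metric.closedBall x (r + δ),
      ∫⁻ z in Metric.closedBall y δ, G z ∂μ ≤ ∫⁻ z in Metric.closedBall y δ, H z ∂μ) :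
    ∫⁻ z in Metric.closedBall x r, G z ∂μ ≤ ∫⁻ z in Metric.closedBall x (r + 2 * δ), H z ∂μ := by
  have hv₀ : μ (Metric.closedBall x δ) ≠ 0 := (Metric.measure_closedBall_pos μ x hδ).ne'
  have hv : ∀ z, μ (Metric.closedBall z δ) = μ (Metric.closedBall x δ) := fun z => by
    rw [Measure.addHaar_closedBall_center, ← Measure.addHaar_closedBall_center μ x]
  refine (ENNReal.mul_le_mul_iff_right hv₀ (isCompact_closedBall x δ).measure_ne_top).1 ?_
  rw [← lintegral_const_mul _ hG, ← lintegral_const_mul _ hH,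
    ← lintegral_indicator measurableSet_closedBall, ← lintegral_indicator measurableSet_closedBall]
  calc _ ≤ ∫⁻ z, μ (Metric.closedBall z δ ∩ Metric.closedBall x (r + δ)) * G z ∂μ := by
        refine lintegral_mono (Set.indicator_le fun z hz => ?_)
        have hsub : Metric.closedBall z δ ⊆ Metric.closedBall x (r + δ) :=
          Metric.closedBall_subset_closedBall' (by linarith [Metric.mem_closedBall.1 hz])
        rw [Set.inter_eq_left.2 hsub, hv z]
    _ ≤ ∫⁻ z, μ (Metric.closedBall z δ ∩ Metric.closedBall x (r + δ)) * H z ∂μ := by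
        rw [← lintegral_setLIntegral_closedBall hG, ← lintegral_setLIntegral_closedBall hH]
        exact setLIntegral_mono' measurableSet_closedBall h
    _ ≤ _ := by
        refine lintegral_mono fun z => ?_
        by_cases hz : z ∈ Metric.closedBall x (r + 2 * δ)
        · rw [Set.indicator_of_mem hz, ← hv z]
          gcongr
          exact Set.inter_subset_left
        · have hdisj : Disjoint (Metric.closedBall z δ) (Metric.closedBall x (r + δ)) :=
            Metric.closedBall_disjoint_closedBall
              (by rw [Metric.mem_closedBall, not_le] at hz; linarith)
          simp [hdisj.inter_eq]

theorem setLIntegral_ofReal_sub_rpow_le {B : Set E} (hB : MeasurableSet B) (hBc : Convex ℝ B)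
    (hB' : μ B ≠ ⊤) {u : E → ℝ} (hu : ContDiff ℝ 1 u) {p q : ℝ} (hp : 1 ≤ p)
    (hq : 2 * μ {z ∈ B | q < u z} ≤ μ B) :
    ∫⁻ z in B, ENNReal.ofReal (u z - q) ^ p ∂μ ≤
      2 ^ (Module.finrank ℝ E + 1) * Metric.ediam B ^ p * ∫⁻ z in B, ‖fderiv ℝ u z‖ₑ ^ p ∂μ := by
  rcases eq_or_ne (μ B) 0 with hB₀ | hB₀
  · simp [Measure.restrict_eq_zero.2 hB₀]
  have : 0 ≤ p := by linarith
  set Z := {z ∈ B | u z ≤ q}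
  have hZm : MeasurableSet Z :=
    hB.inter (measurableSet_le hu.continuous.measurable measurable_const)
  have hBZ : μ B ≤ 2 * μ Z := by
    have hcover : μ B ≤ μ Z + μ {z ∈ B | q < u z} :=
      (measure_mono fun z hz => (le_or_gt (u z) q).imp (⟨hz, ·⟩) (⟨hz, ·⟩)).trans
        (measure_union_le _ _)
    refine (ENNReal.add_le_add_iff_right hB').1 ?_
    calc μ B + μ B = 2 * μ B := (two_mul _).symm
      _ ≤ 2 * (μ Z + μ {z ∈ B | q < u z}) := by gcongr
      _ ≤ 2 * μ Z + μ B := by rw [mul_add]; gcongr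
  have hZB : μ Z * ∫⁻ z in B, ENNReal.ofReal (u z - q) ^ p ∂μ ≤
      ∫⁻ y in B, ∫⁻ z in B, ‖u z - u y‖ₑ ^ p ∂μ ∂μ := by
    rw [mul_comm, ← setLIntegral_const]
    refine (setLIntegral_mono' hZm fun y hy => lintegral_mono fun z => ?_).trans
      (lintegral_mono_set (Set.sep_subset _ _))
    rw [Real.enorm_eq_ofReal_abs]
    gcongr
    linarith [le_abs_self (u z - u y), hy.2]
  refine (ENNReal.mul_le_mul_iff_right hB₀ hB').1 ?_
  calc μ B * ∫⁻ z in B, ENNReal.ofReal (u z - q) ^ p ∂μ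
      ≤ 2 * (μ Z * ∫⁻ z in B, ENNReal.ofReal (u z - q) ^ p ∂μ) := by rw [← mul_assoc]; gcongr
    _ ≤ 2 * (Metric.ediam B ^ p * (2 ^ Module.finrank ℝ E * μ B *
        ∫⁻ w in B, ‖fderiv ℝ u w‖ₑ ^ p ∂μ)) := by
        refine mul_le_mul_right ?_ _
        exact hZB.trans (lintegral_lintegral_enorm_sub_rpow_le μ hB hBc hu hp)
    _ = _ := by ring

end Ball

/-! ### Logarithmic oscillation and the local gap -/

theorem two_mul_measure_closedBall_lt_le {E : Type*} [NormedAddCommGroup E] [NormedSpace ℝ E]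
    [FiniteDimensional ℝ E] [MeasurableSpace E] [BorelSpace E] {μ : Measure E}
    [μ.IsAddHaarMeasure] {f : E → ℝ} (hf : Measurable f) {C N : NNReal} (hC : 0 < C)
    {x : E} {ρ c : ℝ} (hρ : 0 < ρ) {S : Set E} (hS : S ⊆ Metric.closedBall x ρ)
    (hfS : ∀ y ∈ S, f y ≤ c) (hNS : μ (Metric.closedBall x ρ) ≤ N * μ S) {J : ℕ}
    (hosc : ∀ j ≤ J, ∫⁻ y in Metric.closedBall x (ρ / 2 ^ j),
      ∫⁻ z in Metric.closedBall x (ρ / 2 ^ j), ‖f y - f z‖ₑ ∂μ ∂μ ≤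
        C * μ (Metric.closedBall x (ρ / 2 ^ j)) ^ 2) :
    2 * μ {z ∈ Metric.closedBall x (ρ / 2 ^ J) |
        c + 2 * ((N ^ 2 + J * 4 ^ Module.finrank ℝ E) * C : NNReal) < f z} ≤
      μ (Metric.closedBall x (ρ / 2 ^ J)) := by
  have hB : ∀ r, 0 < r → μ (Metric.closedBall x r) ≠ 0 := fun r hr =>
    (Metric.measure_closedBall_pos μ x hr).ne'
  have hB' : ∀ r, μ (Metric.closedBall x r) ≠ ⊤ := fun r =>
    (isCompact_closedBall x r).measure_ne_top
  have hρJ : 0 < ρ / 2 ^ J := by positivity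
  have hN : 0 < N := pos_of_ne_zero fun h => hB ρ hρ (by simpa [h] using hNS)
  set T := (N ^ 2 + J * 4 ^ Module.finrank ℝ E) * C
  have hT : 0 < T := by positivity
  have havg : ⨍⁻ y in Metric.closedBall x (ρ / 2 ^ J), ENNReal.ofReal (f y - c) ∂μ ≤ T := by
    have hSavg : ⨍⁻ y in S, ENNReal.ofReal (f y - c) ∂μ = 0 := by
      have hle : ∫⁻ y in S, ENNReal.ofReal (f y - c) ∂μ ≤ ∫⁻ _ in S, 0 ∂μ :=
        setLIntegral_mono measurable_const fun _ hy =>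
          (ENNReal.ofReal_of_nonpos (sub_nonpos.2 (hfS _ hy))).le
      rw [setLAverage_eq, nonpos_iff_eq_zero.1 (hle.trans_eq lintegral_zero), ENNReal.zero_div]
    have hball := setLAverage_ofReal_sub_le hf c hS subset_rfl (hB ρ hρ) (hB' ρ) hNS
      (hNS.trans (by gcongr)) (by simpa using hosc 0 J.zero_le)
    have hchain := setLAverage_closedBall_div_two_pow_le hf c hρ fun j hj => hosc j hj.le
    calc _ ≤ 0 + (N : ENNReal) ^ 2 * C + J * (4 ^ Module.finrank ℝ E * C) :=
          hchain.trans (by rw [← hSavg]; gcongr)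
      _ = _ := by push_cast [T]; ring
  have hmarkov := mul_meas_ge_le_lintegral (μ := μ.restrict (Metric.closedBall x (ρ / 2 ^ J)))
    (f := fun y => ENNReal.ofReal (f y - c)) (by fun_prop) (2 * T)
  rw [setLAverage_eq, ENNReal.div_le_iff (hB _ hρJ) (hB' _)] at havg
  refine (ENNReal.mul_le_mul_iff_right (a := T) (by simpa using hT.ne') (by simp)).1 ?_
  calc _ = 2 * T * μ {z ∈ Metric.closedBall x (ρ / 2 ^ J) | c + 2 * T < f z} := by ring
    _ ≤ 2 * T * μ.restrict (Metric.closedBall x (ρ / 2 ^ J))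
        {z | 2 * T ≤ ENNReal.ofReal (f z - c)} := by
        rw [Measure.restrict_apply (measurableSet_le measurable_const (by fun_prop))]
        gcongr
        rintro z ⟨hz, hcz⟩
        refine ⟨?_, hz⟩
        rw [Set.mem_ofPred_eq, ← ENNReal.coe_ofNat, ← ENNReal.coe_mul, ← ENNReal.ofReal_coe_nnreal]
        refine ENNReal.ofReal_le_ofReal ?_
        push_cast
        linarith
    _ ≤ _ := hmarkov.trans havg

theorem ediam_closedBall_le {X : Type*} [PseudoMetricSpace X] (x : X) {r : ℝ} (hr : 0 ≤ r) :
    Metric.ediam (Metric.closedBall x r) ≤ 2 * ENNReal.ofReal r := by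
  rw [← Metric.closedEBall_ofReal hr]
  exact Metric.ediam_closedEBall_le

theorem ennreal_le_one_add_rpow {p : ℝ} (hp : 1 ≤ p) (a : ENNReal) : a ≤ 1 + a ^ p := by
  rcases le_total a 1 with ha | ha
  · exact ha.trans le_self_add
  · exact (ENNReal.le_rpow_self_of_one_le ha hp).trans le_add_self

theorem exists_log_oscillation_le (d : ℕ) {p : ℝ} (hp : 1 < p) {Λ : ℝ} (hΛ₀ : 0 ≤ Λ) :
    ∃ C : NNReal, 0 < C ∧ ∀ {Ω : Set (Euc d)} {V u : Euc d → ℝ} {x : Euc d} {ρ s : ℝ},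
      NonnegEnergy Ω V p → LocBddPotential Ω V → IsTestFun Ω u → (∀ x, 0 ≤ u x) →
      0 < s → 0 < ρ → ρ ≤ 1 → Metric.closedBall x (2 * ρ) ⊆ Ω →
      (∀ y ∈ Metric.closedBall x (2 * ρ), |V y| ≤ Λ) →
      energyQ Ω V p u ≤ s ^ p * volume.real (Metric.closedBall x ρ) →
      ∫⁻ y in Metric.closedBall x ρ, ∫⁻ z in Metric.closedBall x ρ,
        ‖Real.log (u y + s) - Real.log (u z + s)‖ₑ ≤
          C * volume (Metric.closedBall x ρ) ^ 2 := by
  obtain ⟨C, _, hlog⟩ := exists_caccioppoli_log d hp hΛ₀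
  refine ⟨2 ^ (d + 1) * (1 + C.toNNReal), by positivity,
    fun {Ω V u x ρ s} hQ hV hu hu₀ hs hρ hρ₁ hR hΛ hE => ?_⟩
  set B := Metric.closedBall x ρ
  set F := fun z => Real.log (u z + s)
  have hF : ContDiff ℝ 1 F :=
    (hu.contDiff_one.add contDiff_const).log fun y => by linarith [hu₀ y]
  have hdF : Measurable fun z => ‖fderiv ℝ F z‖ₑ :=
    (hF.continuous_fderiv one_ne_zero).enorm.measurable
  have hpoin := lintegral_lintegral_enorm_sub_rpow_le volume (B := B) measurableSet_closedBall
    (convex_closedBall x ρ) hF le_rfl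
  simp only [ENNReal.rpow_one, finrank_euclideanSpace, Fintype.card_fin] at hpoin
  have hgrad : ENNReal.ofReal ρ * ∫⁻ z in B, ‖fderiv ℝ F z‖ₑ ≤
      (1 + C.toNNReal) * volume B := by
    rw [← lintegral_const_mul _ hdF]
    calc _ ≤ ∫⁻ z in B, (1 + ENNReal.ofReal (ρ ^ p) * ‖fderiv ℝ F z‖ₑ ^ p) := by
          refine lintegral_mono fun z => (ennreal_le_one_add_rpow hp.le _).trans_eq ?_
          rw [ENNReal.mul_rpow_of_nonneg _ _ (by linarith),
            ENNReal.ofReal_rpow_of_nonneg hρ.le (by linarith)]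
      _ = volume B + ENNReal.ofReal (ρ ^ p) * ∫⁻ z in B, ‖fderiv ℝ F z‖ₑ ^ p := by
          rw [lintegral_add_left measurable_const, lintegral_const_mul _ (hdF.pow_const p),
            setLIntegral_one]
      _ ≤ volume B + ENNReal.ofReal (ρ ^ p) * (ENNReal.ofReal (C / ρ ^ p) * volume B) := by
          gcongr
          exact hlog hQ hV hu hu₀ hs hρ hρ₁ hR hΛ hE
      _ = _ := by
          rw [← mul_assoc, ← ENNReal.ofReal_mul (by positivity), mul_div_cancel₀ _ (by positivity),
            add_mul, one_mul]
          rfl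
  calc _ = ∫⁻ y in B, ∫⁻ z in B, ‖F z - F y‖ₑ :=
        lintegral_congr fun y => lintegral_congr fun z => enorm_sub_rev _ _
    _ ≤ 2 * ENNReal.ofReal ρ * (2 ^ d * volume B * ∫⁻ z in B, ‖fderiv ℝ F z‖ₑ) := by
        refine hpoin.trans ?_
        gcongr
        exact ediam_closedBall_le x hρ.le
    _ = 2 ^ (d + 1) * volume B * (ENNReal.ofReal ρ * ∫⁻ z in B, ‖fderiv ℝ F z‖ₑ) := by ring
    _ ≤ 2 ^ (d + 1) * volume B * ((1 + C.toNNReal) * volume B) := by gcongr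
    _ = _ := by push_cast; ring

theorem exists_half_ball_le (d : ℕ) {p : ℝ} (hp : 1 < p) {Λ : ℝ} (hΛ₀ : 0 ≤ Λ) :
    ∃ C : NNReal, ∀ {Ω : Set (Euc d)} {V u : Euc d → ℝ} {x : Euc d} {ρ s k : ℝ} {N : NNReal} {J : ℕ}
      {S : Set (Euc d)},
      NonnegEnergy Ω V p → LocBddPotential Ω V → IsTestFun Ω u → (∀ x, 0 ≤ u x) →
      0 < s → 0 ≤ k → 0 < ρ → ρ ≤ 1 → Metric.closedBall x (2 * ρ) ⊆ Ω →
      (∀ y ∈ Metric.closedBall x (2 * ρ), |V y| ≤ Λ) →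
      energyQ Ω V p u ≤ s ^ p * volume.real (Metric.closedBall x (ρ / 2 ^ J)) →
      S ⊆ Metric.closedBall x ρ → (∀ y ∈ S, u y ≤ k * s) →
      volume (Metric.closedBall x ρ) ≤ N * volume S →
      2 * volume {z ∈ Metric.closedBall x (ρ / 2 ^ J) |
          s * (k + 1) * Real.exp (2 * ((N ^ 2 + J * 4 ^ d) * C)) < u z} ≤
        volume (Metric.closedBall x (ρ / 2 ^ J)) := by
  obtain ⟨C, hC, hosc⟩ := exists_log_oscillation_le d hp hΛ₀
  refine ⟨C, fun {Ω V u x ρ s k N J S} hQ hV hu hu₀ hs hk hρ hρ₁ hR hΛ hE hS hku hN => ?_⟩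
  have hus : ∀ y, 0 < u y + s := fun y => by linarith [hu₀ y]
  have hf : Measurable fun z => Real.log (u z + s) :=
    Real.measurable_log.comp (hu.1.continuous.measurable.add_const s)
  have hball : ∀ j : ℕ, ρ / 2 ^ j ≤ ρ := fun j => div_le_self hρ.le (one_le_pow₀ one_le_two)
  have hhalf := two_mul_measure_closedBall_lt_le (μ := volume) hf hC hρ hS (J := J)
    (c := Real.log (s * (k + 1)))
    (fun y hy => Real.log_le_log (hus y) (by linarith [hku y hy])) hN fun j hj => by
      have hsub := Metric.closedBall_subset_closedBall (x := x)
        (mul_le_mul_of_nonneg_left (hball j) two_pos.le)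
      refine hosc hQ hV hu hu₀ hs (by positivity) ((hball j).trans hρ₁) (hsub.trans hR)
        (fun y hy => hΛ y (hsub hy)) (hE.trans ?_)
      gcongr
      · exact (isCompact_closedBall x _).measure_ne_top
      · exact one_le_two
  refine le_trans (mul_le_mul_right (measure_mono ?_) _) hhalf
  rintro z ⟨hzB, hz⟩
  refine ⟨hzB, ?_⟩
  rw [finrank_euclideanSpace, Fintype.card_fin, ← Real.exp_lt_exp, Real.exp_add,
    Real.exp_log (by positivity), Real.exp_log (hus z)]
  push_cast
  linarith

theorem volume_closedBall_mul {d : ℕ} (x y : Euc d) {a r : ℝ} (ha : 0 ≤ a) (hr : 0 ≤ r) :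
    volume (Metric.closedBall x (a * r)) =
      ENNReal.ofReal (a ^ d) * volume (Metric.closedBall y r) := by
  rw [Measure.addHaar_closedBall_mul _ x ha hr, finrank_euclideanSpace, Fintype.card_fin,
    ← Measure.addHaar_closedBall_center volume y]

theorem exists_half_ball_rpow_le (d : ℕ) {p : ℝ} (hp : 1 < p) {Λ : ℝ} (hΛ₀ : 0 ≤ Λ) :
    ∃ C : ℝ, 0 ≤ C ∧ ∀ {Ω : Set (Euc d)} {V u : Euc d → ℝ} {x : Euc d} {ρ ε : ℝ} {K N : NNReal}
      {S : Set (Euc d)} (J : ℕ),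
      NonnegEnergy Ω V p → LocBddPotential Ω V → IsTestFun Ω u → (∀ x, 0 ≤ u x) →
      0 < ε → energyQ Ω V p u ≤ ε → 0 < ρ → ρ ≤ 1 → Metric.closedBall x (2 * ρ) ⊆ Ω →
      (∀ y ∈ Metric.closedBall x (2 * ρ), |V y| ≤ Λ) →
      S ⊆ Metric.closedBall x ρ → (∀ y ∈ S, u y ^ p ≤ K * ε) →
      volume (Metric.closedBall x ρ) ≤ N * volume S →
      ∃ q, 0 ≤ q ∧ q ^ p ≤ ((K * volume.real (Metric.closedBall x ρ)) ^ p⁻¹ + 1) ^ p /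
          volume.real (Metric.closedBall x ρ) * Real.exp (C * N ^ 2) *
            (2 ^ d * Real.exp C) ^ J * ε ∧
        2 * volume {z ∈ Metric.closedBall x (ρ / 2 ^ J) | q < u z} ≤
          volume (Metric.closedBall x (ρ / 2 ^ J)) := by
  obtain ⟨C, hC⟩ := exists_half_ball_le d hp hΛ₀
  refine ⟨2 * 4 ^ d * C * p, by positivity,
    fun {Ω V u x ρ ε K N S} J hQ hV hu hu₀ hε hE hρ hρ₁ hR hΛ hS hK hN => ?_⟩
  have hp₀ : 0 < p := by linarith
  set v := volume.real (Metric.closedBall x ρ) with hv_def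
  have hv : 0 < v := ENNReal.toReal_pos (Metric.measure_closedBall_pos _ _ hρ).ne'
    (isCompact_closedBall x _).measure_ne_top
  set k := (K * v) ^ p⁻¹
  set s := (ε * (2 ^ d) ^ J / v) ^ p⁻¹
  have hkp : k ^ p = K * v := Real.rpow_inv_rpow (by positivity) hp₀.ne'
  have hsp : s ^ p = ε * (2 ^ d) ^ J / v := Real.rpow_inv_rpow (by positivity) hp₀.ne'
  have hvJ : volume.real (Metric.closedBall x (ρ / 2 ^ J)) = v / (2 ^ d) ^ J := by
    rw [hv_def, measureReal_def, measureReal_def, div_eq_inv_mul,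
      volume_closedBall_mul x x (by positivity) hρ.le, ENNReal.toReal_mul,
      ENNReal.toReal_ofReal (by positivity), inv_pow, pow_right_comm, div_eq_inv_mul]
  refine ⟨s * (k + 1) * Real.exp (2 * ((N ^ 2 + J * 4 ^ d) * C)), by positivity, ?_,
    hC hQ hV hu hu₀ (by positivity) (by positivity) hρ hρ₁ hR hΛ ?_ hS (fun y hy => ?_) hN⟩
  · calc (s * (k + 1) * Real.exp (2 * ((N ^ 2 + J * 4 ^ d) * C))) ^ p
        = (k + 1) ^ p / v * Real.exp (1 * (2 * C * p) * N ^ 2 + J * (2 * 4 ^ d * C * p)) *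
            (2 ^ d) ^ J * ε := by
          rw [Real.mul_rpow (by positivity) (by positivity),
            Real.mul_rpow (by positivity) (by positivity), hsp, ← Real.exp_mul,
            show 2 * (((N : ℝ) ^ 2 + J * 4 ^ d) * C) * p =
              1 * (2 * C * p) * N ^ 2 + J * (2 * 4 ^ d * C * p) by ring]
          ring
      _ ≤ (k + 1) ^ p / v * Real.exp (4 ^ d * (2 * C * p) * N ^ 2 + J * (2 * 4 ^ d * C * p)) *
            (2 ^ d) ^ J * ε := by
          gcongr
          exact one_le_pow₀ (by norm_num)
      _ = _ := by
          rw [Real.exp_add, Real.exp_nat_mul, mul_pow]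
          ring_nf
  · rw [hvJ, hsp]
    field_simp
    exact hE
  · refine (Real.rpow_le_rpow_iff (hu₀ y) (by positivity) hp₀).1 ((hK y hy).trans ?_)
    rw [Real.mul_rpow (by positivity) (by positivity), hkp, hsp,
      show K * v * (ε * (2 ^ d) ^ J / v) = K * ε * (2 ^ d) ^ J by field_simp]
    exact le_mul_of_one_le_right (by positivity) (one_le_pow₀ (one_le_pow₀ one_le_two))

/-- On a fixed proportion of `B`, the nonnegative test functions are controlled pointwise by their
energy. -/
def HasQuantileBound {d : ℕ} (Ω : Set (Euc d)) (V : Euc d → ℝ) (p : ℝ) (B : Set (Euc d)) : Prop :=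
  ∃ K N : NNReal, ∀ u : Euc d → ℝ, IsTestFun Ω u → (∀ x, 0 ≤ u x) → ∀ ε > 0, energyQ Ω V p u ≤ ε →
    volume B ≤ N * volume {x ∈ B | u x ^ p ≤ K * ε}

section Quantile

variable {d : ℕ} {Ω : Set (Euc d)} {V : Euc d → ℝ} {p : ℝ} {x₀ : Euc d} {R : ℝ}

theorem LocBddPotential.exists_abs_le (hV : LocBddPotential Ω V) {K : Set (Euc d)}
    (hK : IsCompact K) (hKΩ : K ⊆ Ω) : ∃ Λ, 0 ≤ Λ ∧ ∀ x ∈ K, |V x| ≤ Λ := by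
  obtain ⟨Λ, hΛ⟩ := hV.2 K hKΩ hK
  exact ⟨|Λ|, abs_nonneg Λ, fun x hx => (hΛ x hx).trans (le_abs_self Λ)⟩

theorem HasQuantileBound.exists_half_ball (h : HasQuantileBound Ω V p (Metric.closedBall x₀ R))
    (hp : 1 < p) (hQ : NonnegEnergy Ω V p) (hV : LocBddPotential Ω V) (hR : 0 < R)
    (hR₁ : 3 * R ≤ 1) (hRΩ : Metric.closedBall x₀ (8 * R) ⊆ Ω) :
    ∃ A M : ℝ, 0 ≤ A ∧ 1 ≤ M ∧ ∀ u, IsTestFun Ω u → (∀ x, 0 ≤ u x) → ∀ ε > 0,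
      energyQ Ω V p u ≤ ε → ∀ y ∈ Metric.closedBall x₀ (2 * R), ∀ J : ℕ, ∃ q, 0 ≤ q ∧
        q ^ p ≤ A * M ^ J * ε ∧ 2 * volume {z ∈ Metric.closedBall y (3 * R / 2 ^ J) | q < u z} ≤
          volume (Metric.closedBall y (3 * R / 2 ^ J)) := by
  obtain ⟨K, N, hKN⟩ := h
  obtain ⟨Λ, hΛ₀, hΛ⟩ := hV.exists_abs_le (isCompact_closedBall x₀ (8 * R)) hRΩ
  obtain ⟨C, hC₀, hC⟩ := exists_half_ball_rpow_le d hp hΛ₀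
  refine ⟨((K * volume.real (Metric.closedBall x₀ (3 * R))) ^ p⁻¹ + 1) ^ p /
      volume.real (Metric.closedBall x₀ (3 * R)) * Real.exp (C * (3 ^ d * N : NNReal) ^ 2),
    2 ^ d * Real.exp C, by positivity, one_le_mul_of_one_le_of_one_le (one_le_pow₀ one_le_two)
      (Real.one_le_exp hC₀), fun u hu hu₀ ε hε hE y hy J => ?_⟩
  have hv : volume.real (Metric.closedBall x₀ (3 * R)) =
      volume.real (Metric.closedBall y (3 * R)) := by
    rw [Measure.addHaar_real_closedBall_center, ← Measure.addHaar_real_closedBall_center _ y]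
  have hsub : Metric.closedBall y (2 * (3 * R)) ⊆ Metric.closedBall x₀ (8 * R) :=
    Metric.closedBall_subset_closedBall' (by linarith [Metric.mem_closedBall.1 hy])
  rw [hv]
  refine hC (S := {x ∈ Metric.closedBall x₀ R | u x ^ p ≤ K * ε}) J hQ hV hu hu₀ hε hE
    (by positivity) hR₁ (hsub.trans hRΩ) (fun z hz => hΛ z (hsub hz)) ?_ (fun z hz => hz.2) ?_
  · refine (Set.sep_subset _ _).trans (Metric.closedBall_subset_closedBall' ?_)
    linarith [Metric.mem_closedBall'.1 hy]
  · rw [volume_closedBall_mul y x₀ (by norm_num) hR.le, ENNReal.ofReal_pow (by norm_num),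
      ENNReal.ofReal_ofNat, ENNReal.coe_mul, mul_assoc]
    exact mul_le_mul_right (hKN u hu hu₀ ε hε hE) _

end Quantile

theorem ennreal_le_two_mul_of_le_mul_succ_add {a : ℕ → ENNReal} {θ b M T : ENNReal}
    (hrec : ∀ n, a n ≤ θ * a (n + 1) + b * M ^ n) (hθM : θ * M ≤ 1 / 2) (hM : 1 ≤ M)
    (haT : ∀ n, a n ≤ T) (hT : T ≠ ⊤) : a 0 ≤ 2 * b := by
  have hbound : ∀ n k, a k ≤ θ ^ n * T + 2 * b * M ^ k := by
    intro n
    induction n with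
    | zero => exact fun k => (haT k).trans (by simp)
    | succ n ih =>
      intro k
      calc a k ≤ θ * (θ ^ n * T + 2 * b * M ^ (k + 1)) + b * M ^ k :=
            (hrec k).trans (by gcongr; exact ih (k + 1))
        _ = θ ^ (n + 1) * T + (2 * (θ * M) + 1) * b * M ^ k := by ring
        _ ≤ θ ^ (n + 1) * T + (2 * (1 / 2) + 1) * b * M ^ k := by gcongr
        _ = _ := by
          rw [ENNReal.mul_div_cancel two_ne_zero ENNReal.ofNat_ne_top, one_add_one_eq_two]
  have hθ : θ < 1 := calc
    θ ≤ θ * M := le_mul_of_one_le_right' hM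
    _ ≤ 1 / 2 := hθM
    _ < 1 := by simp
  have hlim := (ENNReal.Tendsto.mul_const
    (ENNReal.tendsto_pow_atTop_nhds_zero_of_lt_one hθ) (Or.inr hT)).add_const (2 * b)
  rw [zero_mul, zero_add] at hlim
  exact ge_of_tendsto' hlim fun n => by simpa using hbound n 0

theorem setLIntegral_closedBall_enorm_rpow_le {E : Type*} [NormedAddCommGroup E] [NormedSpace ℝ E]
    [FiniteDimensional ℝ E] [MeasurableSpace E] [BorelSpace E] {μ : Measure E}
    [μ.IsAddHaarMeasure] {u : E → ℝ} (hu : ContDiff ℝ 1 u) (hu₀ : ∀ x, 0 ≤ u x) {p q δ : ℝ}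
    (hp : 1 ≤ p) (hq₀ : 0 ≤ q) (hδ : 0 ≤ δ) {y : E}
    (hq : 2 * μ {z ∈ Metric.closedBall y δ | q < u z} ≤ μ (Metric.closedBall y δ)) :
    ∫⁻ z in Metric.closedBall y δ, ‖u z‖ₑ ^ p ∂μ ≤ ∫⁻ z in Metric.closedBall y δ,
      (ENNReal.ofReal (2 ^ (p - 1) * (2 ^ (Module.finrank ℝ E + 1) * (2 * δ) ^ p)) *
        ‖fderiv ℝ u z‖ₑ ^ p + ENNReal.ofReal (2 ^ (p - 1) * q ^ p)) ∂μ := by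
  have hp₀ : 0 ≤ p := by linarith
  set B := Metric.closedBall y δ
  have hdu : Measurable fun z => ‖fderiv ℝ u z‖ₑ ^ p :=
    (hu.continuous_fderiv one_ne_zero).enorm.measurable.pow_const p
  have hum := hu.continuous.measurable
  have hsplit : ∀ z, ‖u z‖ₑ ^ p ≤
      2 ^ (p - 1) * (ENNReal.ofReal (u z - q) ^ p + ENNReal.ofReal q ^ p) := fun z => by
    refine le_trans ?_ (ENNReal.rpow_add_le_mul_rpow_add_rpow _ _ hp)
    gcongr
    rw [Real.enorm_of_nonneg (hu₀ z)]
    simpa using ENNReal.ofReal_add_le (p := u z - q) (q := q)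
  have htwo : (2 : ENNReal) ^ (p - 1) = ENNReal.ofReal (2 ^ (p - 1)) := by
    rw [← ENNReal.ofReal_rpow_of_nonneg two_pos.le (by linarith), ENNReal.ofReal_ofNat]
  calc ∫⁻ z in B, ‖u z‖ₑ ^ p ∂μ
      ≤ ∫⁻ z in B, 2 ^ (p - 1) * (ENNReal.ofReal (u z - q) ^ p + ENNReal.ofReal q ^ p) ∂μ :=
        lintegral_mono hsplit
    _ = 2 ^ (p - 1) *
          (∫⁻ z in B, ENNReal.ofReal (u z - q) ^ p ∂μ + ENNReal.ofReal q ^ p * μ B) := by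
        rw [lintegral_const_mul _ (by fun_prop), lintegral_add_left (by fun_prop),
          setLIntegral_const]
    _ ≤ 2 ^ (p - 1) * (2 ^ (Module.finrank ℝ E + 1) * (2 * ENNReal.ofReal δ) ^ p *
          ∫⁻ z in B, ‖fderiv ℝ u z‖ₑ ^ p ∂μ + ENNReal.ofReal q ^ p * μ B) := by
        gcongr
        refine (setLIntegral_ofReal_sub_rpow_le measurableSet_closedBall (convex_closedBall y δ)
          (isCompact_closedBall y δ).measure_ne_top hu hp hq).trans ?_
        gcongr
        exact ediam_closedBall_le y hδ
    _ = _ := by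
        rw [lintegral_add_left (hdu.const_mul _), lintegral_const_mul _ hdu, setLIntegral_const,
          ENNReal.ofReal_mul (by positivity), ENNReal.ofReal_mul (by positivity),
          ENNReal.ofReal_mul (by positivity), ← ENNReal.ofReal_rpow_of_nonneg (by positivity) hp₀,
          ENNReal.ofReal_mul two_pos.le, ENNReal.ofReal_pow two_pos.le,
          ← ENNReal.ofReal_rpow_of_nonneg hq₀ hp₀, htwo, ENNReal.ofReal_ofNat]
        ring

theorem setLIntegral_closedBall_rpow_le_of_forall {E : Type*} [NormedAddCommGroup E]
    [NormedSpace ℝ E] [FiniteDimensional ℝ E] [MeasurableSpace E] [BorelSpace E] {μ : Measure E}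
    [μ.IsAddHaarMeasure] {u : E → ℝ} (hu : ContDiff ℝ 1 u) (hu₀ : ∀ x, 0 ≤ u x) {p a r δ : ℝ}
    (hp : 1 ≤ p) (hδ : 0 < δ) {x : E}
    (h : ∀ y ∈ Metric.closedBall x (r + δ), ∃ q, 0 ≤ q ∧ q ^ p ≤ a ∧
      2 * μ {z ∈ Metric.closedBall y δ | q < u z} ≤ μ (Metric.closedBall y δ)) :
    ∫⁻ z in Metric.closedBall x r, ‖u z‖ₑ ^ p ∂μ ≤
      ENNReal.ofReal (2 ^ (p - 1) * (2 ^ (Module.finrank ℝ E + 1) * (2 * δ) ^ p)) *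
        ∫⁻ z in Metric.closedBall x (r + 2 * δ), ‖fderiv ℝ u z‖ₑ ^ p ∂μ +
      ENNReal.ofReal (2 ^ (p - 1) * a) * μ (Metric.closedBall x (r + 2 * δ)) := by
  have hdu : Measurable fun z => ‖fderiv ℝ u z‖ₑ ^ p :=
    (hu.continuous_fderiv one_ne_zero).enorm.measurable.pow_const p
  have hum := hu.continuous.measurable
  rw [← lintegral_const_mul _ hdu, ← setLIntegral_const, ← lintegral_add_left (hdu.const_mul _)]
  refine setLIntegral_closedBall_le_of_forall (by fun_prop) (by fun_prop) hδ fun y hy => ?_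
  obtain ⟨q, hq₀, hqa, hq⟩ := h y hy
  refine (setLIntegral_closedBall_enorm_rpow_le hu hu₀ hp hq₀ hδ.le hq).trans ?_
  gcongr

/-- The `p`-th power of a nonnegative test function is controlled by its energy on `B`. -/
def HasLocalGap {d : ℕ} (Ω : Set (Euc d)) (V : Euc d → ℝ) (p : ℝ) (B : Set (Euc d)) : Prop :=
  ∃ C : NNReal, ∀ u : Euc d → ℝ, IsTestFun Ω u → (∀ x, 0 ≤ u x) →
    ∫⁻ x in B, ‖u x‖ₑ ^ p ≤ C * ENNReal.ofReal (energyQ Ω V p u)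

theorem rpow_mul_div_sub_rpow_add_le {p C L δ s : ℝ} (hp : 0 ≤ p) (hC : 0 ≤ C) (hL : 0 ≤ L)
    (hδ : 0 < δ) (hδs : 4 * δ ≤ s) (hs : s ≤ 1) :
    δ ^ p * (C / (s - 2 * δ) ^ p + L) ≤ (2 ^ p * C + L) * (δ / s) ^ p := by
  have hs₀ : 0 < s := by linarith
  calc δ ^ p * (C / (s - 2 * δ) ^ p + L)
      ≤ δ ^ p * (C / (s / 2) ^ p + L / s ^ p) := by
        gcongr
        · linarith
        · exact le_div_self hL (by positivity) (Real.rpow_le_one hs₀.le hs hp)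
    _ = (2 ^ p * C + L) * (δ / s) ^ p := by
        rw [Real.div_rpow hs₀.le two_pos.le, Real.div_rpow hδ.le hs₀.le]
        field_simp

section Quantile

variable {d : ℕ} {Ω : Set (Euc d)} {V : Euc d → ℝ} {p : ℝ} {x₀ : Euc d} {R : ℝ}

theorem HasQuantileBound.exists_setLIntegral_closedBall_le_fderiv
    (h : HasQuantileBound Ω V p (Metric.closedBall x₀ R)) (hp : 1 < p) (hQ : NonnegEnergy Ω V p)
    (hV : LocBddPotential Ω V) (hR : 0 < R) (hR₁ : 3 * R ≤ 1)
    (hRΩ : Metric.closedBall x₀ (8 * R) ⊆ Ω) :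
    ∃ A M c : ℝ, 0 ≤ A ∧ 1 ≤ M ∧ 0 ≤ c ∧ ∀ u, IsTestFun Ω u → (∀ x, 0 ≤ u x) → ∀ ε > 0,
      energyQ Ω V p u ≤ ε → ∀ (J : ℕ) (r : ℝ), r + 2 * (3 * R / 2 ^ J) ≤ 2 * R →
        ∫⁻ x in Metric.closedBall x₀ r, ‖u x‖ₑ ^ p ≤
          ENNReal.ofReal (c * (3 * R / 2 ^ J) ^ p) *
            (∫⁻ x in Metric.closedBall x₀ (r + 2 * (3 * R / 2 ^ J)), ‖fderiv ℝ u x‖ₑ ^ p) +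
          ENNReal.ofReal (A * M ^ J * ε) := by
  obtain ⟨A, M, hA, hM, hhalf⟩ := h.exists_half_ball hp hQ hV hR hR₁ hRΩ
  set v := volume.real (Metric.closedBall x₀ (2 * R))
  refine ⟨2 ^ (p - 1) * A * v, M, 2 ^ (p - 1) * (2 ^ (d + 1) * 2 ^ p), by positivity, hM,
    by positivity, fun u hu hu₀ ε hε hE J r hr => ?_⟩
  set δ := 3 * R / 2 ^ J
  have hδ : 0 < δ := by positivity
  have hball := setLIntegral_closedBall_rpow_le_of_forall (μ := volume) (r := r)
    (a := A * M ^ J * ε) hu.contDiff_one hu₀ hp.le hδ fun y hy =>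
      hhalf u hu hu₀ ε hε hE y (Metric.closedBall_subset_closedBall (by linarith) hy) J
  have hvol : volume (Metric.closedBall x₀ (r + 2 * δ)) ≤ ENNReal.ofReal v := by
    rw [ofReal_measureReal (isCompact_closedBall _ _).measure_ne_top]
    exact measure_mono (Metric.closedBall_subset_closedBall hr)
  rw [finrank_euclideanSpace, Fintype.card_fin, Real.mul_rpow two_pos.le hδ.le, ← mul_assoc,
    ← mul_assoc, mul_assoc _ _ (2 ^ p)] at hball
  refine (hball.trans (by grw [hvol])).trans_eq ?_
  rw [← ENNReal.ofReal_mul (by positivity)]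
  ring_nf

theorem HasQuantileBound.exists_setLIntegral_closedBall_le
    (h : HasQuantileBound Ω V p (Metric.closedBall x₀ R)) (hp : 1 < p) (hQ : NonnegEnergy Ω V p)
    (hV : LocBddPotential Ω V) (hR : 0 < R) (hR₁ : 3 * R ≤ 1)
    (hRΩ : Metric.closedBall x₀ (8 * R) ⊆ Ω) :
    ∃ A M D : ℝ, 0 ≤ A ∧ 1 ≤ M ∧ 0 ≤ D ∧ ∀ u, IsTestFun Ω u → (∀ x, 0 ≤ u x) → ∀ ε > 0,
      energyQ Ω V p u ≤ ε → ∀ (J : ℕ) (r r' : ℝ), 0 ≤ r → r' ≤ 2 * R →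
        4 * (3 * R / 2 ^ J) ≤ r' - r →
        ∫⁻ x in Metric.closedBall x₀ r, ‖u x‖ₑ ^ p ≤
          ENNReal.ofReal (D * (3 * R / 2 ^ J / (r' - r)) ^ p) *
            (∫⁻ x in Metric.closedBall x₀ r', ‖u x‖ₑ ^ p) + ENNReal.ofReal (A * M ^ J * ε) := by
  obtain ⟨A, M, c, hA, hM, hc, hball⟩ :=
    h.exists_setLIntegral_closedBall_le_fderiv hp hQ hV hR hR₁ hRΩ
  obtain ⟨Λ, hΛ₀, hΛ⟩ := hV.exists_abs_le (isCompact_closedBall x₀ (8 * R)) hRΩ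
  obtain ⟨C, hC, hcacc⟩ := exists_caccioppoli_rpow d hp
  refine ⟨2 * c + A, M, c * (2 ^ p * C + 2 * Λ), by positivity, hM, by positivity,
    fun u hu hu₀ ε hε hE J r r' hr hr' hgap => ?_⟩
  set δ := 3 * R / 2 ^ J with hδ_def
  have hδ : 0 < δ := by positivity
  have hδ₁ : δ ≤ 1 := (div_le_self (by positivity) (one_le_pow₀ one_le_two)).trans hR₁
  have hgrad := hcacc (r := r + 2 * δ) (R := r') hQ hV hu hu₀ (by positivity) (by linarith)
    ((Metric.closedBall_subset_closedBall (by linarith)).trans hRΩ)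
    fun y hy => hΛ y (Metric.closedBall_subset_closedBall (by linarith) hy)
  rw [sub_add_eq_sub_sub] at hgrad
  set L := C / (r' - r - 2 * δ) ^ p + 2 * Λ
  have hL₀ : 0 ≤ L := add_nonneg (div_nonneg hC (Real.rpow_nonneg (by linarith) p)) (by positivity)
  have hL : c * δ ^ p * L ≤ c * (2 ^ p * C + 2 * Λ) * (δ / (r' - r)) ^ p := by
    rw [mul_assoc, mul_assoc]
    exact mul_le_mul_of_nonneg_left (rpow_mul_div_sub_rpow_add_le (by linarith) hC
      (mul_nonneg two_pos.le hΛ₀) hδ hgap (by linarith)) hc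
  have hE' : energyQ Ω V p u ≤ M ^ J * ε :=
    hE.trans (le_mul_of_one_le_left hε.le (one_le_pow₀ hM))
  have hδp : c * δ ^ p ≤ c :=
    mul_le_of_le_one_right hc (Real.rpow_le_one hδ.le hδ₁ (by linarith))
  set I := ∫⁻ x in Metric.closedBall x₀ r', ‖u x‖ₑ ^ p
  calc ∫⁻ x in Metric.closedBall x₀ r, ‖u x‖ₑ ^ p
      ≤ ENNReal.ofReal (c * δ ^ p) * (ENNReal.ofReal (2 * (M ^ J * ε)) + ENNReal.ofReal L * I) +
        ENNReal.ofReal (A * M ^ J * ε) :=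
      (hball u hu hu₀ ε hε hE J r (by linarith)).trans
        (by rw [← hδ_def]; grw [hgrad, hE'])
    _ = ENNReal.ofReal (c * δ ^ p * L) * I +
        ENNReal.ofReal (c * δ ^ p * (2 * (M ^ J * ε)) + A * M ^ J * ε) := by
      rw [ENNReal.ofReal_add (q := A * M ^ J * ε) (by positivity) (by positivity),
        ENNReal.ofReal_mul' hL₀,
        ENNReal.ofReal_mul' (q := 2 * (M ^ J * ε)) (by positivity)]
      ring
    _ ≤ ENNReal.ofReal (c * (2 ^ p * C + 2 * Λ) * (δ / (r' - r)) ^ p) * I +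
        ENNReal.ofReal ((2 * c + A) * M ^ J * ε) := by
      grw [hL, hδp]
      exact le_of_eq (by ring_nf)

theorem exists_pow_two_mul_rpow_mul_le (hp : 0 < p) (D M : ℝ) :
    ∃ m : ℕ, (24 : ℝ) ≤ 2 ^ m ∧ D * (6 / 2 ^ m) ^ p * M ≤ 1 / 2 := by
  have hpow := tendsto_pow_atTop_atTop_of_one_lt (one_lt_two (α := ℝ))
  have hlim := ((((tendsto_const_nhds (x := (6 : ℝ))).div_atTop hpow).rpow_const
    (Or.inr hp.le)).const_mul D).mul_const M
  rw [Real.zero_rpow hp.ne', mul_zero, zero_mul] at hlim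
  exact ((hpow.eventually_ge_atTop 24).and (hlim.eventually_le_const (by norm_num))).exists

theorem exists_radii_sub_eq_div_two_pow (hR : 0 ≤ R) :
    ∃ r : ℕ → ℝ, r 0 = R ∧ (∀ n, 0 ≤ r n) ∧ (∀ n, r n ≤ 2 * R) ∧
      ∀ n, r (n + 1) - r n = R / 2 ^ (n + 1) := by
  refine ⟨fun n => R * (2 - 1 / 2 ^ n), by norm_num, fun n => ?_, fun n => ?_, fun n => ?_⟩
  · exact mul_nonneg hR <| sub_nonneg.2 <|
      (div_le_self one_pos.le (one_le_pow₀ one_le_two)).trans one_le_two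
  · rw [mul_comm 2 R]
    exact mul_le_mul_of_nonneg_left (sub_le_self 2 (by positivity)) hR
  · simp only [pow_succ]
    field_simp
    ring

theorem HasQuantileBound.exists_setLIntegral_le_mul
    (h : HasQuantileBound Ω V p (Metric.closedBall x₀ R)) (hp : 1 < p) (hQ : NonnegEnergy Ω V p)
    (hV : LocBddPotential Ω V) (hR : 0 < R) (hR₁ : 3 * R ≤ 1)
    (hRΩ : Metric.closedBall x₀ (8 * R) ⊆ Ω) :
    ∃ C : NNReal, ∀ u, IsTestFun Ω u → (∀ x, 0 ≤ u x) → ∀ ε > 0, energyQ Ω V p u ≤ ε →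
      ∫⁻ x in Metric.closedBall x₀ R, ‖u x‖ₑ ^ p ≤ C * ENNReal.ofReal ε := by
  obtain ⟨A, M, D, hA, hM, hD, hstep⟩ := h.exists_setLIntegral_closedBall_le hp hQ hV hR hR₁ hRΩ
  have hp₀ : 0 < p := by linarith
  obtain ⟨m, hm, hDm⟩ := exists_pow_two_mul_rpow_mul_le hp₀ D M
  refine ⟨2 * Real.toNNReal (A * M ^ m), fun u hu hu₀ ε hε hE => ?_⟩
  obtain ⟨r, hrR, hr₀, hr₂, hr⟩ := exists_radii_sub_eq_div_two_pow hR.le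
  have hiter := ennreal_le_two_mul_of_le_mul_succ_add
    (a := fun n => ∫⁻ x in Metric.closedBall x₀ (r n), ‖u x‖ₑ ^ p)
    (θ := ENNReal.ofReal (D * (6 / 2 ^ m) ^ p)) (b := ENNReal.ofReal (A * M ^ m * ε))
    (M := ENNReal.ofReal M) (T := ∫⁻ x in Metric.closedBall x₀ (2 * R), ‖u x‖ₑ ^ p)
    (fun n => ?_) ?_ (by simpa using hM)
    (fun n => lintegral_mono_set (Metric.closedBall_subset_closedBall (hr₂ n))) ?_
  · rw [hrR, ENNReal.ofReal_mul (by positivity), ← mul_assoc] at hiter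
    exact hiter
  · have hratio : 3 * R / 2 ^ (n + m) / (r (n + 1) - r n) = 6 / 2 ^ m := by
      rw [hr, pow_add, pow_succ]
      field_simp
      norm_num
    have hgap : 4 * (3 * R / 2 ^ (n + m)) ≤ r (n + 1) - r n := by
      rw [hr, pow_add, pow_succ]
      field_simp
      linarith
    have hn := hstep u hu hu₀ ε hε hE (n + m) (r n) (r (n + 1)) (hr₀ n) (hr₂ _) hgap
    rw [hratio, pow_add, mul_comm (M ^ n), ← mul_assoc A, mul_right_comm _ (M ^ n),
      ENNReal.ofReal_mul (p := A * M ^ m * ε) (by positivity),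
      ENNReal.ofReal_pow (by positivity)] at hn
    exact hn
  · rw [← ENNReal.ofReal_mul (by positivity)]
    exact (ENNReal.ofReal_le_ofReal hDm).trans_eq (by simp)
  · rw [setLIntegral_enorm_rpow_eq hu.1.continuous (isCompact_closedBall _ _) hp₀.le]
    exact ENNReal.ofReal_ne_top

theorem HasQuantileBound.hasLocalGap
    (h : HasQuantileBound Ω V p (Metric.closedBall x₀ R)) (hp : 1 < p) (hQ : NonnegEnergy Ω V p)
    (hV : LocBddPotential Ω V) (hR : 0 < R) (hR₁ : 3 * R ≤ 1)
    (hRΩ : Metric.closedBall x₀ (8 * R) ⊆ Ω) :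
    HasLocalGap Ω V p (Metric.closedBall x₀ R) := by
  obtain ⟨C, hC⟩ := h.exists_setLIntegral_le_mul hp hQ hV hR hR₁ hRΩ
  refine ⟨C, fun u hu hu₀ => ?_⟩
  have hlim : Tendsto (fun ε => C * ENNReal.ofReal ε) (𝓝[>] energyQ Ω V p u)
      (𝓝 (C * ENNReal.ofReal (energyQ Ω V p u))) :=
    ENNReal.Tendsto.const_mul (ENNReal.tendsto_ofReal nhdsWithin_le_nhds)
      (Or.inr ENNReal.coe_ne_top)
  refine ge_of_tendsto hlim ?_
  filter_upwards [self_mem_nhdsWithin] with ε hε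
  exact hC u hu hu₀ ε ((hQ u hu).trans_lt hε) hε.le

end Quantile

/-! ### Perturbation along `ψ (u + s) ^ (1 - p)` -/

section NormRpow

variable {E : Type*} [NormedAddCommGroup E] [InnerProductSpace ℝ E] {p η : ℝ}

theorem fderiv_norm_rpow_smul_apply (hp : 1 < p) {c : ℝ} (hc : 0 < c) (x y : E) :
    fderiv ℝ (fun w : E => ‖w‖ ^ p) (c • x) (c • y) =
      c ^ p * fderiv ℝ (fun w : E => ‖w‖ ^ p) x y := by
  have hcp : c ^ p = c ^ (p - 2) * c ^ 2 := by
    rw [← Real.rpow_two, ← Real.rpow_add hc, sub_add_cancel]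
  simp only [fderiv_norm_rpow _ hp, _root_.smul_apply, innerSL_apply_apply,
    real_inner_smul_left, real_inner_smul_right, norm_smul, Real.norm_of_nonneg hc.le,
    Real.mul_rpow hc.le (norm_nonneg x), smul_eq_mul, hcp]
  ring

theorem fderiv_norm_rpow_real_apply (hp : 1 < p) {r : ℝ} (hr : 0 ≤ r) (y : ℝ) :
    fderiv ℝ (fun w : ℝ => ‖w‖ ^ p) r y = p * r ^ (p - 1) * y := by
  rw [← mul_one y, ← smul_eq_mul, map_smul, fderiv_apply_one_eq_deriv,
    (hasDerivAt_norm_rpow r hp).deriv, Real.norm_of_nonneg hr]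
  rcases hr.eq_or_lt with rfl | hr
  · simp [Real.zero_rpow (sub_pos.2 hp).ne']
  · rw [mul_assoc p, ← Real.rpow_add_one hr.ne', show p - 2 + 1 = p - 1 by ring]
    simp [mul_comm]

variable [ProperSpace E]

theorem exists_abs_norm_add_smul_rpow_sub_le_of_norm_le_one (hp : 1 < p) (hη : 0 < η) :
    ∃ τ : ℝ, 0 < τ ∧ ∀ h ∈ Set.Icc 0 τ, ∀ x y : E, ‖x‖ ≤ 1 → ‖y‖ ≤ 1 →
      |‖x + h • y‖ ^ p - ‖x‖ ^ p - h * fderiv ℝ (fun w : E => ‖w‖ ^ p) x y| ≤ h * η := by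
  set N : E → ℝ := fun w => ‖w‖ ^ p
  have hN : ContDiff ℝ 1 N := contDiff_norm_rpow hp
  obtain ⟨δ, hδ, hδη⟩ := Metric.uniformContinuousOn_iff.1
    ((isCompact_closedBall (0 : E) 2).uniformContinuousOn_of_continuous
      (hN.continuous_fderiv one_ne_zero).continuousOn) η hη
  refine ⟨min 1 (δ / 2), by positivity, fun h hh x y hx hy => ?_⟩
  have hh₁ : h ≤ 1 := hh.2.trans (min_le_left _ _)
  have hhδ : h < δ := by linarith [hh.2.trans (min_le_right _ _)]
  have hclose : ∀ w ∈ segment ℝ x (x + h • y), ‖fderiv ℝ N w - fderiv ℝ N x‖ ≤ η := by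
    intro w hw
    rw [segment_eq_image'] at hw
    obtain ⟨t, ht, rfl⟩ := hw
    have hstep : ‖t • (x + h • y - x)‖ ≤ h := by
      rw [add_sub_cancel_left, norm_smul, norm_smul, Real.norm_of_nonneg ht.1,
        Real.norm_of_nonneg hh.1]
      exact (mul_le_of_le_one_left (mul_nonneg hh.1 (norm_nonneg y)) ht.2).trans
        (mul_le_of_le_one_right hh.1 hy)
    rw [← dist_eq_norm]
    refine (hδη _ ?_ _ ?_ ?_).le
    · rw [mem_closedBall_zero_iff]
      exact (norm_add_le _ _).trans (by linarith)
    · rw [mem_closedBall_zero_iff]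
      linarith
    · rw [dist_eq_norm, add_sub_cancel_left]
      linarith
  have hmv := (convex_segment x (x + h • y)).norm_image_sub_le_of_norm_fderiv_le'
    (fun w _ => hN.differentiable one_ne_zero w) hclose
    (left_mem_segment _ _ _) (right_mem_segment _ _ _)
  rw [add_sub_cancel_left, map_smul, smul_eq_mul, norm_smul, Real.norm_of_nonneg hh.1] at hmv
  refine hmv.trans ?_
  rw [mul_comm h η]
  exact mul_le_mul_of_nonneg_left (mul_le_of_le_one_right hh.1 hy) hη.le

theorem exists_abs_norm_add_smul_rpow_sub_le (hp : 1 < p) (hη : 0 < η) :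
    ∃ τ : ℝ, 0 < τ ∧ ∀ h ∈ Set.Icc 0 τ, ∀ x y : E,
      |‖x + h • y‖ ^ p - ‖x‖ ^ p - h * fderiv ℝ (fun w : E => ‖w‖ ^ p) x y| ≤
        h * η * (‖x‖ + ‖y‖) ^ p := by
  obtain ⟨τ, hτ, hτη⟩ := exists_abs_norm_add_smul_rpow_sub_le_of_norm_le_one (E := E) hp hη
  refine ⟨τ, hτ, fun h hh x y => ?_⟩
  have hp₀ : 0 < p := by linarith
  rcases (add_nonneg (norm_nonneg x) (norm_nonneg y)).eq_or_lt with hxy | hxy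
  · have hx : x = 0 := norm_eq_zero.1 (by linarith [norm_nonneg x, norm_nonneg y])
    have hy : y = 0 := norm_eq_zero.1 (by linarith [norm_nonneg x, norm_nonneg y])
    simp [hx, hy, hp₀.ne']
  set c := ‖x‖ + ‖y‖
  have hscale : ∀ w : E, w = c • c⁻¹ • w := fun w => (smul_inv_smul₀ hxy.ne' w).symm
  have hle : ∀ w : E, ‖w‖ ≤ c → ‖c⁻¹ • w‖ ≤ 1 := fun w hw => by
    rw [norm_smul, norm_inv, Real.norm_of_nonneg hxy.le, inv_mul_le_one₀ hxy]
    exact hw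
  have hunit := hτη h hh (c⁻¹ • x) (c⁻¹ • y) (hle x (by simp [c])) (hle y (by simp [c]))
  have hnorm : ∀ w : E, ‖w‖ ^ p = c ^ p * ‖c⁻¹ • w‖ ^ p := fun w => by
    rw [← Real.mul_rpow hxy.le (norm_nonneg _), ← Real.norm_of_nonneg hxy.le, ← norm_smul,
      Real.norm_of_nonneg hxy.le, ← hscale]
  have hderiv := fderiv_norm_rpow_smul_apply hp hxy (c⁻¹ • x) (c⁻¹ • y)
  rw [← hscale, ← hscale] at hderiv
  rw [hderiv, hnorm x, hnorm (x + h • y), smul_add, smul_comm c⁻¹ h, mul_left_comm h, ← mul_sub,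
    ← mul_sub, abs_mul, abs_of_pos (Real.rpow_pos_of_pos hxy p), mul_comm (h * η)]
  gcongr

theorem exists_abs_norm_smul_add_smul_rpow_sub_le (hp : 1 < p) (hη : 0 < η) :
    ∃ τ : ℝ, 0 < τ ∧ ∀ h ∈ Set.Icc 0 τ, ∀ s z : ℝ, 0 < s → s ≤ z → ∀ x y : E,
      |‖z • (x + (h * (s / z) ^ p) • y)‖ ^ p - ‖z • x‖ ^ p -
          h * s ^ p * fderiv ℝ (fun w : E => ‖w‖ ^ p) x y| ≤
        h * s ^ p * η * (‖x‖ + ‖y‖) ^ p := by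
  obtain ⟨τ, hτ, hτη⟩ := exists_abs_norm_add_smul_rpow_sub_le (E := E) hp hη
  refine ⟨τ, hτ, fun h hh s z hs hsz x y => ?_⟩
  have hz : 0 < z := hs.trans_le hsz
  have hratio : (s / z) ^ p ≤ 1 :=
    Real.rpow_le_one (by positivity) ((div_le_one hz).2 hsz) (by linarith)
  have hstep := hτη (h * (s / z) ^ p) ⟨mul_nonneg hh.1 (by positivity),
    (mul_le_of_le_one_right hh.1 hratio).trans hh.2⟩ x y
  have hzs : s ^ p = z ^ p * (s / z) ^ p := by
    rw [← Real.mul_rpow hz.le (by positivity), mul_div_cancel₀ s hz.ne']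
  simp only [norm_smul, Real.norm_of_nonneg hz.le, Real.mul_rpow hz.le (norm_nonneg _)]
  rw [hzs, mul_left_comm h, mul_assoc (z ^ p), ← mul_sub, ← mul_sub, abs_mul,
    abs_of_pos (by positivity : 0 < z ^ p), mul_assoc (z ^ p), mul_assoc (z ^ p)]
  gcongr

end NormRpow

theorem add_rpow_le_mul_one_add_rpow {p M a b : ℝ} (hp : 1 < p) (hM : 0 ≤ M) (ha : 0 ≤ a)
    (hb : 0 ≤ b) (hba : b ≤ M + (p - 1) * M * a) :
    (a + b) ^ p ≤ (2 * (1 + p * M)) ^ p * (1 + a ^ p) := by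
  have hp₀ : 0 < p := by linarith
  calc (a + b) ^ p ≤ (2 * (1 + p * M) * max 1 a) ^ p := by
        gcongr
        nlinarith [le_max_left 1 a, le_max_right 1 a, mul_nonneg hp₀.le hM,
          mul_le_mul_of_nonneg_left (le_max_left 1 a) hM,
          mul_le_mul_of_nonneg_left (le_max_right 1 a) (mul_nonneg (sub_pos.2 hp).le hM)]
    _ = (2 * (1 + p * M)) ^ p * max 1 a ^ p := Real.mul_rpow (by positivity) (by positivity)
    _ ≤ (2 * (1 + p * M)) ^ p * (1 + a ^ p) := by
        gcongr
        rcases max_choice 1 a with h | h <;> rw [h]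
        · simp [Real.rpow_nonneg ha]
        · linarith

theorem norm_add_norm_sub_smul_rpow_le {E : Type*} [NormedAddCommGroup E] [NormedSpace ℝ E]
    {p M c : ℝ} (hp : 1 < p) (hc : |c| ≤ M) (L : E) {P : E} (hP : ‖P‖ ≤ M) :
    (‖L‖ + ‖P - ((p - 1) * c) • L‖) ^ p ≤ (2 * (1 + p * M)) ^ p * (1 + ‖L‖ ^ p) := by
  refine add_rpow_le_mul_one_add_rpow hp ((abs_nonneg c).trans hc) (norm_nonneg L) (norm_nonneg _)
    ((norm_sub_le _ _).trans ?_)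
  have hp₁ : 0 < p - 1 := by linarith
  rw [norm_smul, Real.norm_eq_abs, abs_mul, abs_of_pos hp₁]
  gcongr

theorem exists_norm_rpow_add_mul_abs_rpow_le (E : Type*) [NormedAddCommGroup E]
    [InnerProductSpace ℝ E] [ProperSpace E] {p η M Λ : ℝ} (hp : 1 < p) (hη : 0 < η) (hM : 0 ≤ M)
    (hΛ : 0 ≤ Λ) :
    ∃ τ : ℝ, 0 < τ ∧ ∀ h ∈ Set.Icc 0 τ, ∀ s z : ℝ, 0 < s → s ≤ z → ∀ r ∈ Set.Icc (0 : ℝ) 1,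
      ∀ v c : ℝ, |v| ≤ Λ → |c| ≤ M → ∀ L P : E, ‖P‖ ≤ M →
      ‖z • (L + (h * (s / z) ^ p) • (P - ((p - 1) * c) • L))‖ ^ p +
          v * |z * (r + h * (s / z) ^ p * c)| ^ p ≤
        ‖z • L‖ ^ p + v * |z * r| ^ p +
          h * s ^ p * (fderiv ℝ (fun w : E => ‖w‖ ^ p) L (P - ((p - 1) * c) • L) +
            v * (p * r ^ (p - 1) * c)) +
          h * s ^ p * η * (1 + ‖L‖ ^ p) := by
  have : 0 < p := by linarith
  set A := (2 * (1 + p * M)) ^ p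
  set D := A + Λ * (1 + M) ^ p
  have : 0 < A := by positivity
  have hD : 0 < D := by positivity
  have hηD : 0 < η / D := by positivity
  obtain ⟨τ₁, hτ₁, hE⟩ := exists_abs_norm_smul_add_smul_rpow_sub_le (E := E) hp hηD
  obtain ⟨τ₂, hτ₂, hℝ⟩ := exists_abs_norm_smul_add_smul_rpow_sub_le (E := ℝ) hp hηD
  refine ⟨min τ₁ τ₂, lt_min hτ₁ hτ₂, fun h hh s z hs hsz r hr v c hv hc L P hP => ?_⟩
  have hgrad := (abs_le.1 (hE h ⟨hh.1, hh.2.trans (min_le_left _ _)⟩ s z hs hsz L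
    (P - ((p - 1) * c) • L))).2
  have hpot := hℝ h ⟨hh.1, hh.2.trans (min_le_right _ _)⟩ s z hs hsz r c
  rw [fderiv_norm_rpow_real_apply hp hr.1] at hpot
  simp only [smul_eq_mul, Real.norm_eq_abs, abs_of_nonneg hr.1] at hpot
  have hs₀ : 0 ≤ h * s ^ p := mul_nonneg hh.1 (by positivity)
  have hgrad_le := mul_le_mul_of_nonneg_left
    (norm_add_norm_sub_smul_rpow_le hp hc L hP) (mul_nonneg hs₀ hηD.le)
  have hpot_le : v * (|z * (r + h * (s / z) ^ p * c)| ^ p - |z * r| ^ p -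
      h * s ^ p * (p * r ^ (p - 1) * c)) ≤ Λ * (h * s ^ p * (η / D) * (1 + M) ^ p) := by
    refine (le_abs_self _).trans ((abs_mul _ _).trans_le ?_)
    gcongr
    refine hpot.trans ?_
    have := hr.1
    gcongr
    exact hr.2
  have hL : 0 ≤ ‖L‖ ^ p := by positivity
  have herr : h * s ^ p * (η / D) * (A * (1 + ‖L‖ ^ p)) +
      Λ * (h * s ^ p * (η / D) * (1 + M) ^ p) ≤ h * s ^ p * η * (1 + ‖L‖ ^ p) := by
    calc _ = h * s ^ p * (η / D) * (A * (1 + ‖L‖ ^ p) + Λ * (1 + M) ^ p * 1) := by ring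
      _ ≤ h * s ^ p * (η / D) * (A * (1 + ‖L‖ ^ p) + Λ * (1 + M) ^ p * (1 + ‖L‖ ^ p)) := by
          gcongr
          linarith
      _ = h * s ^ p * (η / D * D) * (1 + ‖L‖ ^ p) := by ring
      _ = _ := by rw [div_mul_cancel₀ _ hD.ne']
  linarith

/-- The density of the derivative at `h = 0` of the energy of `u + h (u + s) ^ (1 - p) ψ`. The
factor `u + s` in front of the gradient of `log (u + s)` drops out by homogeneity. -/
def energyVariation {d : ℕ} (V : Euc d → ℝ) (p : ℝ) (u : Euc d → ℝ) (s : ℝ) (ψ : Euc d → ℝ)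
    (x : Euc d) : ℝ :=
  fderiv ℝ (fun w : Euc d => ‖w‖ ^ p) (gradient (fun z => Real.log (u z + s)) x)
      (gradient ψ x - ((p - 1) * ψ x) • gradient (fun z => Real.log (u z + s)) x) +
    V x * (p * (u x / (u x + s)) ^ (p - 1) * ψ x)

section Variation

variable {d : ℕ} {Ω : Set (Euc d)} {V V₀ V₁ : Euc d → ℝ} {p s : ℝ} {u ψ : Euc d → ℝ}

theorem continuous_gradient {f : Euc d → ℝ} (hf : Continuous (fderiv ℝ f)) :
    Continuous (gradient f) :=
  (InnerProductSpace.toDual ℝ (Euc d)).symm.continuous.comp hf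

theorem gradient_of_notMem_tsupport {f : Euc d → ℝ} {x : Euc d} (hx : x ∉ tsupport f) :
    gradient f x = 0 := by
  rw [gradient, fderiv_of_notMem_tsupport ℝ hx, map_zero]

theorem energyVariation_neg (V u ψ : Euc d → ℝ) (p s : ℝ) (x : Euc d) :
    energyVariation V p u s (fun y => -ψ y) x = -energyVariation V p u s ψ x := by
  have hgrad : gradient (fun y => -ψ y) x = -gradient ψ x := by
    simp only [gradient, fderiv_fun_neg, map_neg]
  have hdir (L : Euc d) : -gradient ψ x - ((p - 1) * -ψ x) • L =
      -(gradient ψ x - ((p - 1) * ψ x) • L) := by module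
  simp only [energyVariation, hgrad, hdir, map_neg]
  ring

theorem energyVariation_of_notMem_tsupport (V u : Euc d → ℝ) (p s : ℝ) {x : Euc d}
    (hx : x ∉ tsupport ψ) : energyVariation V p u s ψ x = 0 := by
  simp [energyVariation, gradient_of_notMem_tsupport hx, image_eq_zero_of_notMem_tsupport hx]

theorem energyVariation_sub (V₀ V₁ u ψ : Euc d → ℝ) (p s : ℝ) (x : Euc d) :
    energyVariation V₁ p u s ψ x - energyVariation V₀ p u s ψ x =
      p * ((V₁ x - V₀ x) * ψ x * (u x / (u x + s)) ^ (p - 1)) := by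
  simp only [energyVariation]
  ring

theorem IsTestFun.continuous_div_add_rpow (hu : IsTestFun Ω u) (hu₀ : ∀ x, 0 ≤ u x) (hs : 0 < s)
    (hp : 1 < p) : Continuous fun x => (u x / (u x + s)) ^ (p - 1) :=
  (hu.1.continuous.div (hu.1.continuous.add continuous_const)
    fun x => (by linarith [hu₀ x] : 0 < u x + s).ne').rpow_const fun x => Or.inr (by linarith)

theorem IsTestFun.integrable_energyVariation (hψ : IsTestFun Ω ψ) (hV : LocBddPotential Ω V)
    (hu : IsTestFun Ω u) (hu₀ : ∀ x, 0 ≤ u x) (hs : 0 < s) (hp : 1 < p) :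
    Integrable (energyVariation V p u s ψ) := by
  have hψc := hψ.1.continuous
  have hlog := continuous_gradient (hu.continuous_fderiv_log_add hu₀ hs)
  have hψ' := continuous_gradient (hψ.contDiff_one.continuous_fderiv one_ne_zero)
  refine Integrable.add (hψ.integrable_of_eq_zero ?_ fun x hx => ?_)
    (hV.integrable_mul hψ ?_ fun x hx => ?_)
  · exact (((contDiff_norm_rpow hp).continuous_fderiv one_ne_zero).comp hlog).clm_apply
      (by fun_prop)
  · simp [gradient_of_notMem_tsupport hx, image_eq_zero_of_notMem_tsupport hx]
  · exact (continuous_const.mul (hu.continuous_div_add_rpow hu₀ hs hp)).mul hψc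
  · simp [image_eq_zero_of_notMem_tsupport hx]

theorem IsTestFun.gradient_add_mul_rpow (hu : IsTestFun Ω u) (hu₀ : ∀ x, 0 ≤ u x) (hs : 0 < s)
    (hψ : IsTestFun Ω ψ) (c : ℝ) (x : Euc d) :
    gradient (fun y => u y + ψ y * (c * (u y + s) ^ (1 - p))) x =
      (u x + s) • (gradient (fun z => Real.log (u z + s)) x + (c * (u x + s) ^ (-p)) •
        (gradient ψ x - ((p - 1) * ψ x) • gradient (fun z => Real.log (u z + s)) x)) := by
  have hz : 0 < u x + s := by linarith [hu₀ x]
  have hu' := (hu.contDiff_one.differentiable one_ne_zero x).hasFDerivAt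
  have hψ' := (hψ.contDiff_one.differentiable one_ne_zero x).hasFDerivAt
  have hσ := hu'.add (hψ'.mul (((hu'.add_const s).rpow_const (p := 1 - p)
    (Or.inl hz.ne')).const_mul c))
  have hpow : (u x + s) ^ (1 - p) = (u x + s) * (u x + s) ^ (-p) := by
    rw [sub_eq_add_neg, Real.rpow_add hz, Real.rpow_one]
  simp only [gradient, hu.fderiv_log_add hu₀ hs, ← map_smul, ← map_add, ← map_sub]
  congr 1
  rw [show fderiv ℝ (fun y => u y + ψ y * (c * (u y + s) ^ (1 - p))) x = _ from hσ.fderiv, hpow,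
    show 1 - p - 1 = -p by ring]
  ext y
  simp only [add_apply, smul_apply, smul_eq_mul, smul_add, sub_apply]
  field_simp
  ring

end Variation

section Perturbation

variable {d : ℕ} {Ω : Set (Euc d)} {V V₀ V₁ : Euc d → ℝ} {p : ℝ} {ψ : Euc d → ℝ}

theorem IsTestFun.smul_gradient_log_add {u : Euc d → ℝ} {s : ℝ} (hu : IsTestFun Ω u)
    (hu₀ : ∀ x, 0 ≤ u x) (hs : 0 < s) (x : Euc d) :
    (u x + s) • gradient (fun z => Real.log (u z + s)) x = gradient u x := by
  have hz : u x + s ≠ 0 := by linarith [hu₀ x]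
  simp only [gradient, hu.fderiv_log_add hu₀ hs, ← map_smul, smul_inv_smul₀ hz]

theorem IsTestFun.exists_energy_density_le (hψ : IsTestFun Ω ψ) (hV : LocBddPotential Ω V)
    (hp : 1 < p) {η : ℝ} (hη : 0 < η) :
    ∃ τ : ℝ, 0 < τ ∧ ∀ h ∈ Set.Icc 0 τ, ∀ u, IsTestFun Ω u → (∀ x, 0 ≤ u x) → ∀ s > 0, ∀ x,
      ‖fderiv ℝ (fun y => u y + ψ y * (h * s ^ p * (u y + s) ^ (1 - p))) x‖ ^ p +
          V x * |u x + ψ x * (h * s ^ p * (u x + s) ^ (1 - p))| ^ p ≤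
        ‖fderiv ℝ u x‖ ^ p + V x * |u x| ^ p + h * s ^ p * energyVariation V p u s ψ x +
          (tsupport ψ).indicator (fun y => h * s ^ p * η *
            (1 + ‖fderiv ℝ (fun z => Real.log (u z + s)) y‖ ^ p)) x := by
  obtain ⟨Λ, hΛ₀, hΛ⟩ := hV.exists_abs_le hψ.2.1 hψ.2.2
  obtain ⟨M₁, hM₁⟩ := hψ.2.1.exists_bound_of_continuous hψ.1.continuous
  obtain ⟨M₂, hM₂⟩ := (hψ.2.1.fderiv (𝕜 := ℝ)).exists_bound_of_continuous
    (hψ.contDiff_one.continuous_fderiv one_ne_zero)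
  obtain ⟨τ, hτ, hle⟩ := exists_norm_rpow_add_mul_abs_rpow_le (Euc d) hp hη
    ((norm_nonneg _).trans ((hM₁ 0).trans (le_max_left M₁ M₂))) hΛ₀
  refine ⟨τ, hτ, fun h hh u hu hu₀ s hs x => ?_⟩
  have hz : 0 < u x + s := by linarith [hu₀ x]
  simp only [← norm_gradient, hu.gradient_add_mul_rpow hu₀ hs hψ]
  by_cases hx : x ∈ tsupport ψ
  · have hpow : h * (s / (u x + s)) ^ p = h * s ^ p * (u x + s) ^ (-p) := by
      rw [Real.div_rpow hs.le hz.le, Real.rpow_neg hz.le]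
      ring
    have hpow' : (u x + s) ^ (1 - p) = (u x + s) * (u x + s) ^ (-p) := by
      rw [sub_eq_add_neg, Real.rpow_add hz, Real.rpow_one]
    have hval : (u x + s) * (u x / (u x + s)) = u x := mul_div_cancel₀ _ hz.ne'
    have := hle h hh s (u x + s) hs (by linarith [hu₀ x]) (u x / (u x + s))
      ⟨div_nonneg (hu₀ x) hz.le, div_le_one_of_le₀ (by linarith) hz.le⟩ (V x) (ψ x) (hΛ x hx)
      ((hM₁ x).trans (le_max_left _ _)) (gradient (fun z => Real.log (u z + s)) x) (gradient ψ x)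
      ((norm_gradient ψ x).trans_le ((hM₂ x).trans (le_max_right _ _)))
    rw [mul_add (u x + s) (u x / _), hval, hpow, hu.smul_gradient_log_add hu₀ hs] at this
    rw [Set.indicator_of_mem hx, hpow']
    simp only [energyVariation]
    convert this using 4
    all_goals ring_nf
  · simp [Set.indicator_of_notMem hx, energyVariation_of_notMem_tsupport V u p s hx,
      gradient_of_notMem_tsupport hx, image_eq_zero_of_notMem_tsupport hx,
      hu.smul_gradient_log_add hu₀ hs]

theorem IsTestFun.exists_neg_integral_energyVariation_le (hψ : IsTestFun Ω ψ)
    (hV : LocBddPotential Ω V) (hQ : NonnegEnergy Ω V p) (hp : 1 < p) {η : ℝ} (hη : 0 < η) :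
    ∃ τ : ℝ, 0 < τ ∧ ∀ h ∈ Set.Icc 0 τ, ∀ u, IsTestFun Ω u → (∀ x, 0 ≤ u x) → ∀ s > 0,
      -(h * s ^ p * ∫ x, energyVariation V p u s ψ x) ≤ energyQ Ω V p u + h * s ^ p * η *
        ∫ x in tsupport ψ, (1 + ‖fderiv ℝ (fun z => Real.log (u z + s)) x‖ ^ p) := by
  obtain ⟨τ, hτ, hle⟩ := hψ.exists_energy_density_le hV hp hη
  refine ⟨τ, hτ, fun h hh u hu hu₀ s hs => ?_⟩
  have hσ : IsTestFun Ω fun y => u y + ψ y * (h * s ^ p * (u y + s) ^ (1 - p)) :=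
    hu.add_mul hψ (contDiff_const.mul ((hu.1.add contDiff_const).rpow_const_of_ne
      fun x => (by linarith [hu₀ x] : 0 < u x + s).ne'))
  have hcont : Continuous fun x => h * s ^ p * η *
      (1 + ‖fderiv ℝ (fun z => Real.log (u z + s)) x‖ ^ p) :=
    continuous_const.mul (continuous_const.add
      ((hu.continuous_fderiv_log_add hu₀ hs).norm.rpow_const fun _ => Or.inr (by linarith)))
  have hmeas := (isClosed_tsupport ψ).measurableSet
  have := hQ.integral_le_energyQ_add hV (by linarith) hu hσ
    ((hψ.integrable_energyVariation hV hu hu₀ hs hp).const_mul (-(h * s ^ p)))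
    ((hcont.continuousOn.integrableOn_compact hψ.2.1).integrable_indicator hmeas)
    fun x => (hle h hh u hu hu₀ s hs x).trans_eq (by ring)
  rwa [integral_const_mul, integral_indicator hmeas, integral_const_mul, neg_mul] at this

theorem IsTestFun.exists_integral_mul_div_add_rpow_le_add (hψ : IsTestFun Ω ψ)
    (hV₀ : LocBddPotential Ω V₀) (hV₁ : LocBddPotential Ω V₁) (hQ₀ : NonnegEnergy Ω V₀ p)
    (hQ₁ : NonnegEnergy Ω V₁ p) (hp : 1 < p) {η : ℝ} (hη : 0 < η) :
    ∃ h : ℝ, 0 < h ∧ ∀ u, IsTestFun Ω u → (∀ x, 0 ≤ u x) → ∀ s > 0,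
      h * s ^ p * (p * ∫ x, (V₁ x - V₀ x) * ψ x * (u x / (u x + s)) ^ (p - 1)) ≤
        energyQ Ω V₀ p u + energyQ Ω V₁ p u + 2 * (h * s ^ p * η *
          ∫ x in tsupport ψ, (1 + ‖fderiv ℝ (fun z => Real.log (u z + s)) x‖ ^ p)) := by
  have hψ_neg : tsupport (fun x => -ψ x) = tsupport ψ := tsupport_neg ψ
  have hψ' : IsTestFun Ω fun x => -ψ x := ⟨hψ.1.neg, hψ.2.1.neg, hψ_neg.trans_subset hψ.2.2⟩
  obtain ⟨τ₀, hτ₀, h₀⟩ := hψ.exists_neg_integral_energyVariation_le hV₀ hQ₀ hp hη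
  obtain ⟨τ₁, hτ₁, h₁⟩ := hψ'.exists_neg_integral_energyVariation_le hV₁ hQ₁ hp hη
  have hτ : 0 < min τ₀ τ₁ := lt_min hτ₀ hτ₁
  refine ⟨min τ₀ τ₁, hτ, fun u hu hu₀ s hs => ?_⟩
  have hle₀ := h₀ _ ⟨hτ.le, min_le_left _ _⟩ u hu hu₀ s hs
  have hle₁ := h₁ _ ⟨hτ.le, min_le_right _ _⟩ u hu hu₀ s hs
  simp only [energyVariation_neg, integral_neg, hψ_neg] at hle₁
  have hsub := integral_sub (hψ.integrable_energyVariation hV₁ hu hu₀ hs hp)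
    (hψ.integrable_energyVariation hV₀ hu hu₀ hs hp)
  simp only [energyVariation_sub, integral_const_mul] at hsub
  rw [hsub]
  linarith

theorem exists_integral_one_add_norm_fderiv_log_rpow_le (hV : LocBddPotential Ω V)
    (hQ : NonnegEnergy Ω V p) (hp : 1 < p) {x₀ : Euc d} {R : ℝ} (hR : 0 < R) (hR₁ : R ≤ 1)
    (hRΩ : Metric.closedBall x₀ (2 * R) ⊆ Ω) :
    ∃ E : ℝ, 0 < E ∧ ∀ u, IsTestFun Ω u → (∀ x, 0 ≤ u x) → ∀ s > 0,
      energyQ Ω V p u ≤ s ^ p * volume.real (Metric.closedBall x₀ R) →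
      ∫ x in Metric.closedBall x₀ R, (1 + ‖fderiv ℝ (fun z => Real.log (u z + s)) x‖ ^ p) ≤ E := by
  obtain ⟨Λ, hΛ₀, hΛ⟩ := hV.exists_abs_le (isCompact_closedBall x₀ (2 * R)) hRΩ
  obtain ⟨C, hC₀, hC⟩ := exists_caccioppoli_log d hp hΛ₀
  have hB : IsCompact (Metric.closedBall x₀ R) := isCompact_closedBall x₀ R
  have hv : 0 < volume.real (Metric.closedBall x₀ R) :=
    ENNReal.toReal_pos (Metric.measure_closedBall_pos volume x₀ hR).ne' hB.measure_ne_top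
  refine ⟨(1 + C / R ^ p) * volume.real (Metric.closedBall x₀ R), by positivity,
    fun u hu hu₀ s hs hE => ?_⟩
  have hcont := hu.continuous_fderiv_log_add hu₀ hs
  have hle := hC hQ hV hu hu₀ hs hR hR₁ hRΩ hΛ hE
  rw [setLIntegral_enorm_rpow_eq hcont hB (by linarith), ← ofReal_measureReal hB.measure_ne_top,
    ← ENNReal.ofReal_mul (by positivity), ENNReal.ofReal_le_ofReal_iff (by positivity)] at hle
  have hint : IntegrableOn (fun x => ‖fderiv ℝ (fun z => Real.log (u z + s)) x‖ ^ p)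
      (Metric.closedBall x₀ R) :=
    (hcont.norm.rpow_const fun _ => Or.inr (by linarith)).continuousOn.integrableOn_compact hB
  have : IsFiniteMeasure (volume.restrict (Metric.closedBall x₀ R)) :=
    isFiniteMeasure_restrict.2 hB.measure_ne_top
  rw [integral_add (integrable_const 1) hint, setIntegral_const, smul_eq_mul]
  linarith

theorem IsTestFun.exists_integral_mul_div_add_rpow_le (hψ : IsTestFun Ω ψ)
    (hV₀ : LocBddPotential Ω V₀) (hV₁ : LocBddPotential Ω V₁) (hQ₀ : NonnegEnergy Ω V₀ p)
    (hQ₁ : NonnegEnergy Ω V₁ p) (hp : 1 < p) {x₀ : Euc d} {R γ : ℝ} (hR : 0 < R) (hR₁ : R ≤ 1)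
    (hRΩ : Metric.closedBall x₀ (2 * R) ⊆ Ω) (hψR : tsupport ψ ⊆ Metric.closedBall x₀ R)
    (hγ : 0 < γ) :
    ∃ A : ℝ, 0 < A ∧ ∀ u, IsTestFun Ω u → (∀ x, 0 ≤ u x) → ∀ s > 0,
      energyQ Ω V₀ p u ≤ A * s ^ p → energyQ Ω V₁ p u ≤ A * s ^ p →
      ∫ x, (V₁ x - V₀ x) * ψ x * (u x / (u x + s)) ^ (p - 1) ≤ γ := by
  obtain ⟨E, hE₀, hE⟩ := exists_integral_one_add_norm_fderiv_log_rpow_le hV₀ hQ₀ hp hR hR₁ hRΩ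
  have hp₀ : 0 < p := by linarith
  obtain ⟨h, hh, hle⟩ := hψ.exists_integral_mul_div_add_rpow_le_add hV₀ hV₁ hQ₀ hQ₁ hp
    (show 0 < p * γ / (4 * E) by positivity)
  have hB : IsCompact (Metric.closedBall x₀ R) := isCompact_closedBall x₀ R
  have hv : 0 < volume.real (Metric.closedBall x₀ R) :=
    ENNReal.toReal_pos (Metric.measure_closedBall_pos volume x₀ hR).ne' hB.measure_ne_top
  refine ⟨min (volume.real (Metric.closedBall x₀ R)) (h * (p * γ / 4)), by positivity,
    fun u hu hu₀ s hs h₀ h₁ => ?_⟩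
  have hsp : 0 < s ^ p := by positivity
  have hlog : ∫ x in tsupport ψ, (1 + ‖fderiv ℝ (fun z => Real.log (u z + s)) x‖ ^ p) ≤ E := by
    refine (setIntegral_mono_set ?_ (Eventually.of_forall fun x => ?_) hψR.eventuallyLE).trans
      (hE u hu hu₀ s hs (h₀.trans ?_))
    · exact (continuous_const.add ((hu.continuous_fderiv_log_add hu₀ hs).norm.rpow_const
        fun _ => Or.inr hp₀.le)).continuousOn.integrableOn_compact hB
    · simp only [Pi.zero_apply]
      positivity
    · rw [mul_comm]
      gcongr
      exact min_le_left _ _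
  have hA : min (volume.real (Metric.closedBall x₀ R)) (h * (p * γ / 4)) * s ^ p ≤
      h * (p * γ / 4) * s ^ p := by
    gcongr
    exact min_le_right _ _
  refine le_of_mul_le_mul_left (le_of_mul_le_mul_left ?_ (mul_pos hh hsp)) hp₀
  calc h * s ^ p * (p * ∫ x, (V₁ x - V₀ x) * ψ x * (u x / (u x + s)) ^ (p - 1))
      ≤ _ := hle u hu hu₀ s hs
    _ ≤ h * (p * γ / 4) * s ^ p + h * (p * γ / 4) * s ^ p +
          2 * (h * s ^ p * (p * γ / (4 * E)) * E) := by
        gcongr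
        · exact h₀.trans hA
        · exact h₁.trans hA
    _ = h * s ^ p * (p * γ) := by
        field_simp
        ring

end Perturbation

theorem integral_le_integral_mul_add {X : Type*} [MeasurableSpace X] {μ : Measure X}
    {ω w : X → ℝ} {B : Set X} {m δ : ℝ} (hB : MeasurableSet B) (hμB : μ B ≠ ⊤)
    (hω : Integrable ω μ) (hωB : ∀ x ∉ B, ω x = 0) (hm : ∀ x, |ω x| ≤ m) (hw : Measurable w)
    (hw_mem : ∀ x, w x ∈ Set.Icc 0 1) (hδ : 0 ≤ δ) :
    ∫ x, ω x ∂μ ≤ ∫ x, ω x * w x ∂μ + m * (δ * μ.real B + μ.real {x ∈ B | w x < 1 - δ}) := by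
  have hS : MeasurableSet {x ∈ B | w x < 1 - δ} := hB.inter (measurableSet_lt hw measurable_const)
  have hμS : μ {x ∈ B | w x < 1 - δ} ≠ ⊤ := measure_ne_top_of_subset (Set.sep_subset B _) hμB
  have hωw : Integrable (fun x => ω x * w x) μ :=
    hω.mul_bdd hw.aestronglyMeasurable (Eventually.of_forall fun x => by
      rw [Real.norm_of_nonneg (hw_mem x).1]
      exact (hw_mem x).2)
  have hBi : Integrable (B.indicator fun _ => δ) μ :=
    (integrable_indicator_iff hB).2 (integrableOn_const hμB)
  have hSi : Integrable ({x ∈ B | w x < 1 - δ}.indicator fun _ => (1 : ℝ)) μ :=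
    (integrable_indicator_iff hS).2 (integrableOn_const hμS)
  have hle : ∀ x, ω x ≤ ω x * w x +
      m * (B.indicator (fun _ => δ) x + {x ∈ B | w x < 1 - δ}.indicator (fun _ => 1) x) := by
    intro x
    by_cases hx : x ∈ B
    · have hm₀ : 0 ≤ m := (abs_nonneg _).trans (hm x)
      have hω_le : ω x * (1 - w x) ≤ m * (1 - w x) :=
        mul_le_mul_of_nonneg_right ((le_abs_self _).trans (hm x)) (sub_nonneg.2 (hw_mem x).2)
      have hw_le : 1 - w x ≤
          B.indicator (fun _ => δ) x + {x ∈ B | w x < 1 - δ}.indicator (fun _ => 1) x := by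
        by_cases hwx : w x < 1 - δ
        · simp only [Set.indicator, hx, Set.mem_ofPred_eq, hwx, and_self, if_true]
          linarith [(hw_mem x).1]
        · simp only [Set.indicator, hx, Set.mem_ofPred_eq, hwx, and_false, if_true, if_false]
          linarith
      linarith [mul_le_mul_of_nonneg_left hw_le hm₀]
    · simp [hωB x hx, hx]
  have := integral_mono hω (hωw.add ((hBi.add hSi).const_mul m)) hle
  rwa [integral_add' hωw ((hBi.add hSi).const_mul m), integral_const_mul, integral_add' hBi hSi,
    integral_indicator_const _ hB, integral_indicator_const _ hS, smul_eq_mul, smul_eq_mul,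
    mul_one, mul_comm _ δ] at this

theorem measure_le_ofReal_div_mul {X : Type*} [MeasurableSpace X] {μ : Measure X} {B S : Set X}
    {c : ℝ} (hB : μ B ≠ ⊤) (hS : μ S ≠ ⊤) (hc : 0 < c) (hcS : c ≤ μ.real S) :
    μ B ≤ ENNReal.ofReal (μ.real B / c) * μ S := by
  rw [← ofReal_measureReal hS, ← ENNReal.ofReal_mul (by positivity), div_mul_eq_mul_div]
  nth_rw 1 [← ofReal_measureReal hB]
  exact ENNReal.ofReal_le_ofReal
    ((le_div_iff₀ hc).2 (mul_le_mul_of_nonneg_left hcS measureReal_nonneg))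

theorem exists_le_mul_of_div_add_rpow_lt {q δ : ℝ} (hq : 0 ≤ q) (hδ : 0 < δ) :
    ∃ κ : ℝ, 0 ≤ κ ∧ ∀ a s : ℝ, 0 ≤ a → 0 < s → (a / (a + s)) ^ q < 1 - δ → a ≤ κ * s := by
  have hlim : Tendsto (fun n : ℕ => ((n : ℝ) / (n + 1)) ^ q) atTop (𝓝 1) := by
    simpa using (tendsto_natCast_div_add_atTop (1 : ℝ)).rpow_const (p := q) (Or.inr hq)
  obtain ⟨n, hn⟩ := (hlim.eventually_const_lt (show 1 - δ < 1 by linarith)).exists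
  refine ⟨n, n.cast_nonneg, fun a s ha hs h => le_of_not_gt fun hlt => hn.not_gt (h.trans_le' ?_)⟩
  refine Real.rpow_le_rpow (by positivity) ?_ hq
  rw [div_le_div_iff₀ (by positivity) (by positivity)]
  linarith

section ConvexCombination

variable {d : ℕ} {Ω : Set (Euc d)} {V₀ V₁ : Euc d → ℝ} {p t : ℝ}

theorem LocBddPotential.convexComb (hV₀ : LocBddPotential Ω V₀) (hV₁ : LocBddPotential Ω V₁)
    (t : ℝ) : LocBddPotential Ω fun x => t * V₁ x + (1 - t) * V₀ x := by
  refine ⟨(hV₁.1.const_mul t).add (hV₀.1.const_mul (1 - t)), fun K hK hKc => ?_⟩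
  obtain ⟨C₀, hC₀⟩ := hV₀.2 K hK hKc
  obtain ⟨C₁, hC₁⟩ := hV₁.2 K hK hKc
  refine ⟨|t| * C₁ + |1 - t| * C₀, fun x hx => (abs_add_le _ _).trans ?_⟩
  rw [abs_mul, abs_mul]
  gcongr
  · exact hC₁ x hx
  · exact hC₀ x hx

theorem IsTestFun.energyQ_convexComb {u : Euc d → ℝ} (hu : IsTestFun Ω u) (hp : 0 < p)
    (hV₀ : LocBddPotential Ω V₀) (hV₁ : LocBddPotential Ω V₁) (t : ℝ) :
    energyQ Ω (fun x => t * V₁ x + (1 - t) * V₀ x) p u =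
      t * energyQ Ω V₁ p u + (1 - t) * energyQ Ω V₀ p u := by
  simp only [hu.energyQ_eq hp]
  rw [← integral_const_mul, ← integral_const_mul, ← integral_add
    ((hu.integrable_energy_density hV₁ hp).const_mul t)
    ((hu.integrable_energy_density hV₀ hp).const_mul (1 - t))]
  congr 1 with x
  ring

theorem NonnegEnergy.convexComb (hQ₀ : NonnegEnergy Ω V₀ p) (hQ₁ : NonnegEnergy Ω V₁ p)
    (hp : 0 < p) (hV₀ : LocBddPotential Ω V₀) (hV₁ : LocBddPotential Ω V₁)
    (ht : t ∈ Set.Icc 0 1) : NonnegEnergy Ω (fun x => t * V₁ x + (1 - t) * V₀ x) p := by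
  intro u hu
  rw [hu.energyQ_convexComb hp hV₀ hV₁]
  exact add_nonneg (mul_nonneg ht.1 (hQ₁ u hu)) (mul_nonneg (sub_nonneg.2 ht.2) (hQ₀ u hu))

theorem LocBddPotential.sub (hV₁ : LocBddPotential Ω V₁) (hV₀ : LocBddPotential Ω V₀) :
    LocBddPotential Ω fun x => V₁ x - V₀ x := by
  refine ⟨hV₁.1.sub hV₀.1, fun K hK hKc => ?_⟩
  obtain ⟨C₀, hC₀⟩ := hV₀.2 K hK hKc
  obtain ⟨C₁, hC₁⟩ := hV₁.2 K hK hKc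
  exact ⟨C₁ + C₀, fun x hx => (abs_sub _ _).trans (add_le_add (hC₁ x hx) (hC₀ x hx))⟩

theorem LocBddPotential.exists_abs_mul_le {V : Euc d → ℝ} (hV : LocBddPotential Ω V)
    {ψ : Euc d → ℝ} (hψ : IsTestFun Ω ψ) : ∃ m > 0, ∀ x, |V x * ψ x| ≤ m := by
  obtain ⟨Λ, hΛ₀, hΛ⟩ := hV.exists_abs_le hψ.2.1 hψ.2.2
  obtain ⟨M, hM⟩ := hψ.2.1.exists_bound_of_continuous hψ.1.continuous
  have hM₀ : 0 ≤ M := (norm_nonneg _).trans (hM 0)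
  refine ⟨Λ * M + 1, by positivity, fun x => le_add_of_le_of_nonneg ?_ zero_le_one⟩
  by_cases hx : x ∈ tsupport ψ
  · rw [abs_mul]
    exact mul_le_mul (hΛ x hx) (hM x) (abs_nonneg _) hΛ₀
  · rw [image_eq_zero_of_notMem_tsupport hx, mul_zero, abs_zero]
    positivity

theorem IsTestFun.exists_le_volume_sep_le_mul {ψ : Euc d → ℝ} (hψ : IsTestFun Ω ψ)
    (hV₀ : LocBddPotential Ω V₀) (hV₁ : LocBddPotential Ω V₁) (hQ₀ : NonnegEnergy Ω V₀ p)
    (hQ₁ : NonnegEnergy Ω V₁ p) (hp : 1 < p) {x₀ : Euc d} {R : ℝ} (hR : 0 < R) (hR₁ : R ≤ 1)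
    (hRΩ : Metric.closedBall x₀ (2 * R) ⊆ Ω) (hψR : tsupport ψ ⊆ Metric.closedBall x₀ R)
    (hI : 0 < ∫ x, (V₁ x - V₀ x) * ψ x) :
    ∃ A κ c : ℝ, 0 < A ∧ 0 ≤ κ ∧ 0 < c ∧ ∀ u, IsTestFun Ω u → (∀ x, 0 ≤ u x) → ∀ s > 0,
      energyQ Ω V₀ p u ≤ A * s ^ p → energyQ Ω V₁ p u ≤ A * s ^ p →
      c ≤ volume.real {x ∈ Metric.closedBall x₀ R | u x ≤ κ * s} := by
  have hB : IsCompact (Metric.closedBall x₀ R) := isCompact_closedBall x₀ R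
  have hv : 0 < volume.real (Metric.closedBall x₀ R) :=
    ENNReal.toReal_pos (Metric.measure_closedBall_pos volume x₀ hR).ne' hB.measure_ne_top
  have hω : Integrable fun x => (V₁ x - V₀ x) * ψ x :=
    (hV₁.sub hV₀).integrable_mul hψ hψ.1.continuous fun x => image_eq_zero_of_notMem_tsupport
  obtain ⟨m, hm₀, hm⟩ := (hV₁.sub hV₀).exists_abs_mul_le hψ
  set I := ∫ x, (V₁ x - V₀ x) * ψ x
  obtain ⟨A, hA, hle⟩ := hψ.exists_integral_mul_div_add_rpow_le hV₀ hV₁ hQ₀ hQ₁ hp hR hR₁ hRΩ hψR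
    (half_pos hI)
  obtain ⟨κ, hκ₀, hκ⟩ := exists_le_mul_of_div_add_rpow_lt (sub_nonneg.2 hp.le)
    (show 0 < I / (4 * m * volume.real (Metric.closedBall x₀ R)) by positivity)
  refine ⟨A, κ, I / (4 * m), hA, hκ₀, by positivity, fun u hu hu₀ s hs h₀ h₁ => ?_⟩
  have hratio : ∀ x, u x / (u x + s) ∈ Set.Icc 0 1 := fun x =>
    have := hu₀ x
    ⟨by positivity, div_le_one_of_le₀ (by linarith) (by positivity)⟩
  have hint := integral_le_integral_mul_add measurableSet_closedBall hB.measure_ne_top hω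
    (fun x hx => by simp [image_eq_zero_of_notMem_tsupport fun h => hx (hψR h)]) hm
    (hu.continuous_div_add_rpow hu₀ hs hp).measurable
    (fun x => ⟨Real.rpow_nonneg (hratio x).1 _,
      Real.rpow_le_one (hratio x).1 (hratio x).2 (sub_nonneg.2 hp.le)⟩)
    (show 0 ≤ I / (4 * m * volume.real (Metric.closedBall x₀ R)) by positivity)
  have hS : I / (4 * m) ≤ volume.real {x ∈ Metric.closedBall x₀ R | (u x / (u x + s)) ^ (p - 1) <
      1 - I / (4 * m * volume.real (Metric.closedBall x₀ R))} := by
    have := hle u hu hu₀ s hs h₀ h₁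
    have hδ : m * (I / (4 * m * volume.real (Metric.closedBall x₀ R)) *
      volume.real (Metric.closedBall x₀ R)) = I / 4 := by field_simp
    rw [div_le_iff₀ (by positivity)]
    linarith
  refine hS.trans (measureReal_mono (fun x hx => ⟨hx.1, hκ _ _ (hu₀ x) hs hx.2⟩)
    (measure_ne_top_of_subset (Set.sep_subset _ _) hB.measure_ne_top))

theorem IsTestFun.hasQuantileBound_convexComb {ψ : Euc d → ℝ} (hψ : IsTestFun Ω ψ)
    (hV₀ : LocBddPotential Ω V₀) (hV₁ : LocBddPotential Ω V₁) (hQ₀ : NonnegEnergy Ω V₀ p)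
    (hQ₁ : NonnegEnergy Ω V₁ p) (hp : 1 < p) (ht : t ∈ Set.Ioo 0 1) {x₀ : Euc d} {R : ℝ}
    (hR : 0 < R) (hR₁ : R ≤ 1) (hRΩ : Metric.closedBall x₀ (2 * R) ⊆ Ω)
    (hψR : tsupport ψ ⊆ Metric.closedBall x₀ R) (hI : 0 < ∫ x, (V₁ x - V₀ x) * ψ x) :
    HasQuantileBound Ω (fun x => t * V₁ x + (1 - t) * V₀ x) p (Metric.closedBall x₀ R) := by
  obtain ⟨A, κ, c, hA, hκ₀, hc, hS⟩ :=
    hψ.exists_le_volume_sep_le_mul hV₀ hV₁ hQ₀ hQ₁ hp hR hR₁ hRΩ hψR hI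
  obtain ⟨ht₀, ht₁⟩ : 0 < t ∧ 0 < 1 - t := ⟨ht.1, sub_pos.2 ht.2⟩
  have hp₀ : 0 < p := by linarith
  have hBfin : volume (Metric.closedBall x₀ R) ≠ ⊤ := (isCompact_closedBall x₀ R).measure_ne_top
  refine ⟨⟨κ ^ p / (A * (t * (1 - t))), by positivity⟩,
    (volume.real (Metric.closedBall x₀ R) / c).toNNReal, fun u hu hu₀ ε hε hE => ?_⟩
  rw [hu.energyQ_convexComb hp₀ hV₀ hV₁] at hE
  set s := (ε / (A * (t * (1 - t)))) ^ p⁻¹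
  have hsp : s ^ p = ε / (A * (t * (1 - t))) := Real.rpow_inv_rpow (by positivity) hp₀.ne'
  have hAs : A * s ^ p = ε / (t * (1 - t)) := by
    rw [hsp]
    field_simp
  have hE₀ := mul_nonneg ht₀.le (hQ₁ u hu)
  have hE₁ := mul_nonneg ht₁.le (hQ₀ u hu)
  have hcS := hS u hu hu₀ s (by positivity)
    (by rw [hAs, le_div_iff₀ (by positivity)]; nlinarith)
    (by rw [hAs, le_div_iff₀ (by positivity)]; nlinarith)
  have hsub : {x ∈ Metric.closedBall x₀ R | u x ≤ κ * s} ⊆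
      {x ∈ Metric.closedBall x₀ R | u x ^ p ≤ κ ^ p / (A * (t * (1 - t))) * ε} := fun x hx => by
    refine ⟨hx.1, (Real.rpow_le_rpow (hu₀ x) hx.2 hp₀.le).trans_eq ?_⟩
    rw [Real.mul_rpow hκ₀ (by positivity), hsp]
    ring
  exact (measure_le_ofReal_div_mul hBfin (measure_ne_top_of_subset (Set.sep_subset _ _) hBfin)
    hc hcS).trans (mul_le_mul_right (measure_mono hsub) _)

end ConvexCombination

/-! ### From one ball to a weight on the whole domain -/

theorem half_measureReal_le_measureReal_sep {X : Type*} [MeasurableSpace X] {μ : Measure X}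
    {f : X → ℝ} {B : Set X} {a : ℝ} (hf : Measurable f) (ha : 0 < a) (hμB : μ B ≠ ⊤)
    (h : ∫⁻ x in B, ENNReal.ofReal (f x) ∂μ ≤ ENNReal.ofReal a) :
    μ.real B / 2 ≤ μ.real {x ∈ B | f x ≤ 2 * a / μ.real B} := by
  obtain hv | hv := (measureReal_nonneg (μ := μ) (s := B)).eq_or_lt
  · rw [← hv, zero_div]
    exact measureReal_nonneg
  set K := 2 * a / μ.real B with hK
  have hKpos : 0 < K := by positivity
  set T := {x | ENNReal.ofReal K ≤ ENNReal.ofReal (f x)} ∩ B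
  have hSfin : μ {x ∈ B | f x ≤ K} ≠ ⊤ := measure_ne_top_of_subset (Set.sep_subset _ _) hμB
  have hTfin : μ T ≠ ⊤ := measure_ne_top_of_subset Set.inter_subset_right hμB
  have hT : μ T ≤ ENNReal.ofReal (μ.real B / 2) := calc
    μ T = μ.restrict B {x | ENNReal.ofReal K ≤ ENNReal.ofReal (f x)} :=
      (Measure.restrict_apply (measurableSet_le measurable_const hf.ennreal_ofReal)).symm
    _ ≤ (∫⁻ x in B, ENNReal.ofReal (f x) ∂μ) / ENNReal.ofReal K :=
      meas_ge_le_lintegral_div hf.ennreal_ofReal.aemeasurable (by simpa using hKpos)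
        ENNReal.ofReal_ne_top
    _ ≤ ENNReal.ofReal a / ENNReal.ofReal K := by gcongr
    _ = ENNReal.ofReal (μ.real B / 2) := by
      rw [← ENNReal.ofReal_div_of_pos hKpos, hK]
      field_simp
  have hcover : B ⊆ {x ∈ B | f x ≤ K} ∪ T := fun x hx =>
    (le_or_gt (f x) K).imp (fun h => ⟨hx, h⟩) fun h => ⟨ENNReal.ofReal_le_ofReal h.le, hx⟩
  have hadd := (measureReal_mono hcover (measure_union_ne_top hSfin hTfin)).trans
    (measureReal_union_le _ _)
  have hTreal : μ.real T ≤ μ.real B / 2 := ENNReal.toReal_le_of_le_ofReal (by positivity) hT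
  linarith

section LocalGap

variable {d : ℕ} {Ω : Set (Euc d)} {V : Euc d → ℝ} {p : ℝ} {B B' : Set (Euc d)}

theorem HasLocalGap.mono (h : HasLocalGap Ω V p B) (hB : B' ⊆ B) : HasLocalGap Ω V p B' := by
  obtain ⟨C, hC⟩ := h
  exact ⟨C, fun u hu hu₀ => (lintegral_mono_set hB).trans (hC u hu hu₀)⟩

theorem HasLocalGap.hasQuantileBound_of_subset (h : HasLocalGap Ω V p B) (hBB' : B ⊆ B')
    (hp : 0 ≤ p) (hB : volume B ≠ 0) (hB' : volume B' ≠ ⊤) : HasQuantileBound Ω V p B' := by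
  obtain ⟨C, hC⟩ := h
  have hBfin : volume B ≠ ⊤ := measure_ne_top_of_subset hBB' hB'
  have hv : 0 < volume.real B := ENNReal.toReal_pos hB hBfin
  refine ⟨⟨2 * (C + 1) / volume.real B, by positivity⟩,
    (volume.real B' / (volume.real B / 2)).toNNReal, fun u hu hu₀ ε hε hE => ?_⟩
  have hgap : ∫⁻ x in B, ENNReal.ofReal (u x ^ p) ≤ ENNReal.ofReal ((C + 1) * ε) := calc
    ∫⁻ x in B, ENNReal.ofReal (u x ^ p) = ∫⁻ x in B, ‖u x‖ₑ ^ p := by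
      simp only [Real.enorm_of_nonneg, hu₀, ENNReal.ofReal_rpow_of_nonneg, hp]
    _ ≤ C * ENNReal.ofReal ε := by grw [hC u hu hu₀, hE]
    _ = ENNReal.ofReal (C * ε) := by rw [ENNReal.ofReal_mul C.coe_nonneg, ENNReal.ofReal_coe_nnreal]
    _ ≤ ENNReal.ofReal ((C + 1) * ε) := by gcongr; linarith
  have hhalf := half_measureReal_le_measureReal_sep
    (hu.1.continuous.rpow_const fun _ => Or.inr hp).measurable (by positivity) hBfin hgap
  rw [← mul_assoc, mul_div_right_comm] at hhalf
  have hsub : {x ∈ B | u x ^ p ≤ 2 * (C + 1) / volume.real B * ε} ⊆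
      {x ∈ B' | u x ^ p ≤ 2 * (C + 1) / volume.real B * ε} := fun x hx => ⟨hBB' hx.1, hx.2⟩
  have hfin : volume {x ∈ B' | u x ^ p ≤ 2 * (C + 1) / volume.real B * ε} ≠ ⊤ :=
    measure_ne_top_of_subset (Set.sep_subset _ _) hB'
  exact measure_le_ofReal_div_mul hB' hfin (half_pos hv) (hhalf.trans (measureReal_mono hsub hfin))

theorem exists_pos_mul_closedBall_subset (hΩ : IsOpen Ω) {x : Euc d} (hx : x ∈ Ω) :
    ∃ R, 0 < R ∧ 3 * R ≤ 1 ∧ Metric.closedBall x (8 * R) ⊆ Ω := by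
  obtain ⟨ρ, hρ, hρΩ⟩ := Metric.nhds_basis_closedBall.mem_iff.1 (hΩ.mem_nhds hx)
  refine ⟨min 1 ρ / 8, by positivity, ?_, (Metric.closedBall_subset_closedBall ?_).trans hρΩ⟩
  · linarith [min_le_left 1 ρ]
  · linarith [min_le_right 1 ρ]

theorem exists_hasLocalGap_closedBall_of_isPreconnected (hΩ : IsOpen Ω) (hΩc : IsPreconnected Ω)
    (hp : 1 < p) (hQ : NonnegEnergy Ω V p) (hV : LocBddPotential Ω V)
    (h : ∃ x ∈ Ω, ∃ r > 0, HasLocalGap Ω V p (Metric.closedBall x r)) :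
    ∀ x ∈ Ω, ∃ r > 0, HasLocalGap Ω V p (Metric.closedBall x r) := by
  refine hΩc.subset_of_closure_inter_subset (u := {x | ∃ r > 0, HasLocalGap Ω V p
    (Metric.closedBall x r)}) (Metric.isOpen_iff.2 ?_) h ?_
  · rintro x ⟨r, hr, hgap⟩
    refine ⟨r / 2, half_pos hr, fun y hy => ⟨r / 2, half_pos hr, hgap.mono ?_⟩⟩
    exact Metric.closedBall_subset_closedBall' (by linarith [Metric.mem_ball.1 hy])
  · rintro x ⟨hx, hxΩ⟩
    obtain ⟨R, hR, hR₁, hRΩ⟩ := exists_pos_mul_closedBall_subset hΩ hxΩ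
    obtain ⟨y, ⟨r, hr, hgap⟩, hxy⟩ := Metric.mem_closure_iff.1 hx R hR
    have hr' : 0 < min r (R - dist x y) := lt_min hr (sub_pos.2 hxy)
    have hsub : Metric.closedBall y (min r (R - dist x y)) ⊆ Metric.closedBall x R :=
      Metric.closedBall_subset_closedBall' (by
        linarith [min_le_right r (R - dist x y), dist_comm x y])
    refine ⟨R, hR, HasQuantileBound.hasLocalGap ?_ hp hQ hV hR hR₁ hRΩ⟩
    exact (hgap.mono (Metric.closedBall_subset_closedBall (min_le_left _ _)))
      |>.hasQuantileBound_of_subset hsub (by linarith)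
        (Metric.measure_closedBall_pos volume y hr').ne' (isCompact_closedBall x R).measure_ne_top

end LocalGap

section Tent

variable {X : Type*} [PseudoMetricSpace X]

/-- The cone of height `1` over the ball of centre `x` and radius `r`: the building block of the
weight in the spectral gap. -/
def tent (x : X) (r : ℝ) (y : X) : ℝ := max (1 - dist y x / r) 0

theorem tent_nonneg (x : X) (r : ℝ) (y : X) : 0 ≤ tent x r y := le_max_right _ _

theorem tent_le_one (x : X) {r : ℝ} (hr : 0 ≤ r) (y : X) : tent x r y ≤ 1 :=
  max_le (sub_le_self 1 (by positivity)) zero_le_one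

theorem continuous_tent (x : X) (r : ℝ) : Continuous (tent x r) :=
  (continuous_const.sub ((continuous_id.dist continuous_const).div_const r)).max continuous_const

theorem tent_pos {x y : X} {r : ℝ} (hy : y ∈ Metric.ball x r) : 0 < tent x r y :=
  lt_max_of_lt_left (sub_pos.2 ((div_lt_one (Metric.pos_of_mem_ball hy)).2 hy))

theorem lintegral_ofReal_tent_mul_le [MeasurableSpace X] [OpensMeasurableSpace X] {μ : Measure X}
    (x : X) {r : ℝ} (hr : 0 < r) (g : X → ENNReal) :
    ∫⁻ y, ENNReal.ofReal (tent x r y) * g y ∂μ ≤ ∫⁻ y in Metric.closedBall x r, g y ∂μ := by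
  rw [← lintegral_indicator Metric.isClosed_closedBall.measurableSet]
  refine lintegral_mono fun y => ?_
  by_cases hy : y ∈ Metric.closedBall x r
  · rw [Set.indicator_of_mem hy]
    exact mul_le_of_le_one_left' (ENNReal.ofReal_le_one.2 (tent_le_one x hr.le y))
  · rw [Metric.mem_closedBall, not_le] at hy
    rw [tent, max_eq_right (sub_nonpos.2 ((one_le_div hr).2 hy.le)), ENNReal.ofReal_zero, zero_mul]
    exact zero_le

theorem lintegral_ofReal_div_mul_tent_mul_le [MeasurableSpace X] [OpensMeasurableSpace X]
    {μ : Measure X} {x : X} {r c : ℝ} {C : NNReal} {g : X → ENNReal} {E : ENNReal} (hr : 0 < r)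
    (hc : 0 ≤ c) (hg : Measurable g) (h : ∫⁻ y in Metric.closedBall x r, g y ∂μ ≤ C * E) :
    ∫⁻ y, ENNReal.ofReal (c / (1 + C) * tent x r y) * g y ∂μ ≤ ENNReal.ofReal c * E := by
  have hcC : 0 ≤ c / (1 + C) := by positivity
  have htent : Measurable (tent x r) := (continuous_tent x r).measurable
  calc ∫⁻ y, ENNReal.ofReal (c / (1 + C) * tent x r y) * g y ∂μ
      = ENNReal.ofReal (c / (1 + C)) * ∫⁻ y, ENNReal.ofReal (tent x r y) * g y ∂μ := by
        rw [← lintegral_const_mul _ (by fun_prop)]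
        simp only [ENNReal.ofReal_mul hcC, mul_assoc]
    _ ≤ ENNReal.ofReal (c / (1 + C)) * (C * E) := by grw [lintegral_ofReal_tent_mul_le x hr, h]
    _ ≤ ENNReal.ofReal c * E := by
        rw [← ENNReal.ofReal_coe_nnreal, ← mul_assoc, ← ENNReal.ofReal_mul hcC]
        gcongr
        rw [div_mul_eq_mul_div, div_le_iff₀ (by positivity)]
        exact mul_le_mul_of_nonneg_left (by linarith) hc

end Tent

theorem lintegral_ofReal_tsum_mul_le {ι X : Type*} [Countable ι] [MeasurableSpace X]
    {μ : Measure X} {f : ι → X → ℝ} {c : ι → ℝ} {S : ℝ} (hf₀ : ∀ i x, 0 ≤ f i x)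
    (hf : ∀ i, Measurable (f i)) (hfc : ∀ i x, f i x ≤ c i) (hc₀ : ∀ i, 0 ≤ c i) (hc : HasSum c S)
    {g : X → ENNReal} {E : ENNReal} (hg : Measurable g)
    (hgE : ∀ i, ∫⁻ x, ENNReal.ofReal (f i x) * g x ∂μ ≤ ENNReal.ofReal (c i) * E) :
    ∫⁻ x, ENNReal.ofReal (∑' i, f i x) * g x ∂μ ≤ ENNReal.ofReal S * E := calc
  ∫⁻ x, ENNReal.ofReal (∑' i, f i x) * g x ∂μ
    = ∑' i, ∫⁻ x, ENNReal.ofReal (f i x) * g x ∂μ := by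
      rw [← lintegral_tsum fun i => by fun_prop]
      congr 1 with x
      rw [ENNReal.ofReal_tsum_of_nonneg (fun i => hf₀ i x)
        (hc.summable.of_nonneg_of_le (fun i => hf₀ i x) fun i => hfc i x), ENNReal.tsum_mul_right]
  _ ≤ ∑' i, ENNReal.ofReal (c i) * E := ENNReal.tsum_le_tsum hgE
  _ = ENNReal.ofReal S * E := by
      rw [ENNReal.tsum_mul_right, ← hc.tsum_eq, ENNReal.ofReal_tsum_of_nonneg hc₀ hc.summable]

theorem exists_continuous_pos_lintegral_mul_le {X : Type*} [PseudoMetricSpace X]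
    [SecondCountableTopology X] [MeasurableSpace X] [OpensMeasurableSpace X] {μ : Measure X}
    {Ω : Set X} {r : X → ℝ} (hr : ∀ x ∈ Ω, 0 < r x) (C : X → NNReal) :
    ∃ W : X → ℝ, Continuous W ∧ (∀ x, 0 ≤ W x) ∧ (∀ x ∈ Ω, 0 < W x) ∧
      ∀ (g : X → ENNReal) (E : ENNReal), Measurable g →
        (∀ x ∈ Ω, ∫⁻ y in Metric.closedBall x (r x), g y ∂μ ≤ C x * E) →
        ∫⁻ y, ENNReal.ofReal (W y) * g y ∂μ ≤ E := by
  obtain ⟨T, hTΩ, hT, hcover⟩ := TopologicalSpace.countable_cover_nhdsWithin fun x hx =>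
    mem_nhdsWithin_of_mem_nhds (t := Ω) (Metric.ball_mem_nhds x (hr x hx))
  obtain ⟨c, hc, S, hcS, hS⟩ := hT.exists_pos_hasSum_le one_pos
  have := hT.to_subtype
  set f : T → X → ℝ := fun i y => c i / (1 + C i) * tent i.1 (r i) y
  have hf₀ : ∀ i y, 0 ≤ f i y := fun i y =>
    mul_nonneg (by have := hc i; positivity) (tent_nonneg _ _ y)
  have hfc : ∀ i, Continuous (f i) := fun i => (continuous_tent _ _).const_mul _
  have hfle : ∀ i y, f i y ≤ c i := fun i y =>
    (mul_le_of_le_one_right (by have := hc i; positivity)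
      (tent_le_one _ (hr i (hTΩ i.2)).le y)).trans
        (div_le_self (hc i).le (le_add_of_nonneg_right (C i).2))
  have hfnorm : ∀ i y, ‖f i y‖ ≤ c i := fun i y => by
    rw [Real.norm_of_nonneg (hf₀ i y)]
    exact hfle i y
  refine ⟨fun y => ∑' i, f i y, continuous_tsum hfc hcS.summable hfnorm,
    fun y => tsum_nonneg fun i => hf₀ i y, fun x hx => ?_, fun g E hg hgE => ?_⟩
  · obtain ⟨i, hi, hxi⟩ := Set.mem_iUnion₂.1 (hcover hx)
    exact (hcS.summable.of_norm_bounded fun i => hfnorm i x).tsum_pos (fun j => hf₀ j x) ⟨i, hi⟩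
      (mul_pos (by have := hc i; positivity) (tent_pos hxi))
  · refine (lintegral_ofReal_tsum_mul_le hf₀ (fun i => (hfc i).measurable) hfle
      (fun i => (hc i).le) hcS hg fun i => ?_).trans
        (mul_le_of_le_one_left' (ENNReal.ofReal_le_one.2 hS))
    exact lintegral_ofReal_div_mul_tent_mul_le (hr i (hTΩ i.2)) (hc i).le hg (hgE i (hTΩ i.2))

/-! ### Reduction to nonnegative test functions -/

/-- A smooth approximation of `|t|`, shifted to vanish at `0` so that composing with it preserves
compact support. -/
def smoothAbs (η t : ℝ) : ℝ := √(t ^ 2 + η ^ 2) - η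

section SmoothAbs

variable {η : ℝ}

theorem smoothAbs_zero (hη : 0 ≤ η) : smoothAbs η 0 = 0 := by
  rw [smoothAbs, zero_pow two_ne_zero, zero_add, Real.sqrt_sq hη, sub_self]

theorem smoothAbs_zero_left (t : ℝ) : smoothAbs 0 t = |t| := by
  rw [smoothAbs, zero_pow two_ne_zero, add_zero, Real.sqrt_sq_eq_abs, sub_zero]

theorem smoothAbs_nonneg (η t : ℝ) : 0 ≤ smoothAbs η t :=
  sub_nonneg.2 (Real.le_sqrt_of_sq_le (le_add_of_nonneg_left (sq_nonneg t)))

theorem smoothAbs_le_abs (hη : 0 ≤ η) (t : ℝ) : smoothAbs η t ≤ |t| := by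
  rw [smoothAbs, sub_le_iff_le_add, Real.sqrt_le_left (by positivity), add_sq, sq_abs]
  nlinarith [mul_nonneg (abs_nonneg t) hη]

theorem continuous_smoothAbs_left (t : ℝ) : Continuous fun η => smoothAbs η t := by
  unfold smoothAbs
  fun_prop

theorem contDiff_smoothAbs (hη : η ≠ 0) {n : WithTop ℕ∞} : ContDiff ℝ n (smoothAbs η) :=
  (((contDiff_id.pow 2).add contDiff_const).sqrt fun t => by positivity).sub contDiff_const

theorem abs_deriv_smoothAbs_le_one (hη : η ≠ 0) (t : ℝ) : |deriv (smoothAbs η) t| ≤ 1 := by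
  have hpos : 0 < t ^ 2 + η ^ 2 := by positivity
  have hder : HasDerivAt (smoothAbs η) (2 * t / (2 * √(t ^ 2 + η ^ 2))) t := by
    have hsq : HasDerivAt (fun s : ℝ => s ^ 2 + η ^ 2) (2 * t) t := by
      simpa using (hasDerivAt_pow 2 t).add_const (η ^ 2)
    exact (hsq.sqrt hpos.ne').sub_const η
  rw [hder.deriv, mul_div_mul_left _ _ two_ne_zero, abs_div, abs_of_nonneg (Real.sqrt_nonneg _)]
  exact div_le_one_of_le₀ (Real.abs_le_sqrt (le_add_of_nonneg_right (sq_nonneg η)))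
    (Real.sqrt_nonneg _)

theorem norm_fderiv_smoothAbs_comp_le {E : Type*} [NormedAddCommGroup E] [NormedSpace ℝ E]
    (hη : η ≠ 0) {u : E → ℝ} {x : E} (hu : DifferentiableAt ℝ u x) :
    ‖fderiv ℝ (fun y => smoothAbs η (u y)) x‖ ≤ ‖fderiv ℝ u x‖ := by
  have hder := ((contDiff_smoothAbs hη (n := 1)).differentiable one_ne_zero (u x)).hasDerivAt
  have hcomp : HasFDerivAt (fun y => smoothAbs η (u y)) _ x :=
    hder.comp_hasFDerivAt x hu.hasFDerivAt
  rw [hcomp.fderiv, norm_smul]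
  exact mul_le_of_le_one_left (norm_nonneg _) (abs_deriv_smoothAbs_le_one hη _)

end SmoothAbs

section SignReduction

variable {d : ℕ} {Ω : Set (Euc d)} {V : Euc d → ℝ} {p η : ℝ} {u : Euc d → ℝ}

theorem IsTestFun.smoothAbs_comp (hu : IsTestFun Ω u) (hη : 0 < η) :
    IsTestFun Ω fun x => smoothAbs η (u x) :=
  ⟨(contDiff_smoothAbs hη.ne').comp hu.1, hu.2.1.comp_left (smoothAbs_zero hη.le),
    (tsupport_comp_subset (smoothAbs_zero hη.le) u).trans hu.2.2⟩

theorem IsTestFun.energyQ_smoothAbs_le (hu : IsTestFun Ω u) (hp : 0 < p)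
    (hV : LocBddPotential Ω V) (hη : 0 < η) :
    energyQ Ω V p (fun x => smoothAbs η (u x)) ≤
      (∫ x, ‖fderiv ℝ u x‖ ^ p) + ∫ x, V x * |smoothAbs η (u x)| ^ p := by
  have hw := hu.smoothAbs_comp hη
  rw [hw.energyQ_eq hp, integral_add (hw.integrable_norm_fderiv_rpow hp)
    (hV.integrable_mul_abs_rpow hw hp)]
  gcongr ?_ + _
  refine integral_mono (hw.integrable_norm_fderiv_rpow hp) (hu.integrable_norm_fderiv_rpow hp)
    fun x => ?_
  have hle := norm_fderiv_smoothAbs_comp_le hη.ne' (hu.contDiff_one.differentiable one_ne_zero x)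
  exact Real.rpow_le_rpow (norm_nonneg _) hle hp.le

theorem tendsto_integral_mul_smoothAbs_rpow (hu : IsTestFun Ω u) (hp : 0 < p)
    (hV : LocBddPotential Ω V) :
    Tendsto (fun η => ∫ x, V x * |smoothAbs η (u x)| ^ p) (𝓝[>] 0)
      (𝓝 (∫ x, V x * |u x| ^ p)) := by
  refine tendsto_integral_filter_of_dominated_convergence (fun x => ‖V x * |u x| ^ p‖) ?_ ?_
    (hV.integrable_mul_abs_rpow hu hp).norm (ae_of_all _ fun x => ?_)
  · filter_upwards [self_mem_nhdsWithin] with η hη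
    exact (hV.integrable_mul_abs_rpow (hu.smoothAbs_comp hη) hp).aestronglyMeasurable
  · filter_upwards [self_mem_nhdsWithin] with η hη
    refine ae_of_all _ fun x => ?_
    have hle : |smoothAbs η (u x)| ≤ |u x| := by
      rw [abs_of_nonneg (smoothAbs_nonneg _ _)]
      exact smoothAbs_le_abs (le_of_lt hη) _
    rw [norm_mul, norm_mul, Real.norm_of_nonneg (Real.rpow_nonneg (abs_nonneg _) p),
      Real.norm_of_nonneg (Real.rpow_nonneg (abs_nonneg _) p)]
    gcongr
  · have hcont : Continuous fun η => V x * |smoothAbs η (u x)| ^ p :=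
      continuous_const.mul
        ((continuous_smoothAbs_left (u x)).abs.rpow_const fun _ => Or.inr hp.le)
    simpa only [smoothAbs_zero_left, abs_abs] using hcont.continuousWithinAt (x := 0).tendsto

theorem nonnegEnergy_of_forall_nonneg (hp : 0 < p) (hV : LocBddPotential Ω V)
    (h : ∀ u, IsTestFun Ω u → (∀ x, 0 ≤ u x) → 0 ≤ energyQ Ω V p u) : NonnegEnergy Ω V p := by
  intro u hu
  rw [hu.energyQ_eq hp, integral_add (hu.integrable_norm_fderiv_rpow hp)
    (hV.integrable_mul_abs_rpow hu hp)]
  refine ge_of_tendsto ((tendsto_integral_mul_smoothAbs_rpow hu hp hV).const_add _) ?_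
  filter_upwards [self_mem_nhdsWithin] with η hη
  exact (h _ (hu.smoothAbs_comp hη) fun x => smoothAbs_nonneg _ _).trans
    (hu.energyQ_smoothAbs_le hp hV hη)

end SignReduction

section SpectralGap

variable {d : ℕ} {Ω : Set (Euc d)} {V V₀ V₁ W : Euc d → ℝ} {p t : ℝ} {u : Euc d → ℝ}

theorem LocBddPotential.of_continuous (hW : Continuous W) : LocBddPotential Ω W :=
  ⟨hW.measurable, fun _ _ hK => hK.exists_bound_of_continuousOn hW.continuousOn⟩

theorem IsTestFun.energyQ_sub (hu : IsTestFun Ω u) (hp : 0 < p) (hV : LocBddPotential Ω V)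
    (hW : LocBddPotential Ω W) :
    energyQ Ω (fun x => V x - W x) p u = energyQ Ω V p u - ∫ x, W x * |u x| ^ p := by
  rw [hu.energyQ_eq hp, hu.energyQ_eq hp,
    ← integral_sub (hu.integrable_energy_density hV hp) (hW.integrable_mul_abs_rpow hu hp)]
  congr 1 with x
  ring

theorem integral_mul_abs_rpow_le_of_lintegral_le {X : Type*} [MeasurableSpace X] {μ : Measure X}
    {w f : X → ℝ} {E : ℝ} (hp : 0 ≤ p) (hw : ∀ x, 0 ≤ w x)
    (hwf : AEStronglyMeasurable (fun x => w x * |f x| ^ p) μ) (hE : 0 ≤ E)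
    (h : ∫⁻ x, ENNReal.ofReal (w x) * ‖f x‖ₑ ^ p ∂μ ≤ ENNReal.ofReal E) :
    ∫ x, w x * |f x| ^ p ∂μ ≤ E := by
  rw [integral_eq_lintegral_of_nonneg_ae
    (ae_of_all _ fun x => mul_nonneg (hw x) (Real.rpow_nonneg (abs_nonneg _) p)) hwf]
  refine ENNReal.toReal_le_of_le_ofReal hE (h.trans_eq' (lintegral_congr fun x => ?_))
  rw [ENNReal.ofReal_mul (hw x), Real.enorm_eq_ofReal_abs,
    ENNReal.ofReal_rpow_of_nonneg (abs_nonneg _) hp]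

theorem NonnegEnergy.hasSpectralGap (hQ : NonnegEnergy Ω V p) (hp : 0 < p)
    (hV : LocBddPotential Ω V)
    (h : ∀ x ∈ Ω, ∃ r > 0, HasLocalGap Ω V p (Metric.closedBall x r)) :
    HasSpectralGap Ω V p := by
  choose! r hr C hC using h
  obtain ⟨W, hWc, hW₀, hWpos, hW⟩ := exists_continuous_pos_lintegral_mul_le (μ := volume) hr C
  have hWb : LocBddPotential Ω W := .of_continuous hWc
  have hsub : NonnegEnergy Ω (fun x => V x - W x) p := by
    refine nonnegEnergy_of_forall_nonneg hp (hV.sub hWb) fun u hu hu₀ => ?_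
    rw [hu.energyQ_sub hp hV hWb, sub_nonneg]
    refine integral_mul_abs_rpow_le_of_lintegral_le hp.le hW₀
      (hWb.integrable_mul_abs_rpow hu hp).aestronglyMeasurable (hQ u hu) ?_
    exact hW _ _ (hu.1.continuous.measurable.enorm.pow_const p) fun x hx => hC x hx u hu hu₀
  refine ⟨W, hWc.continuousOn, hWpos, fun u hu => ?_⟩
  have hnonneg := hsub u hu
  rw [hu.energyQ_sub hp hV hWb, sub_nonneg] at hnonneg
  exact (setIntegral_le_integral (hWb.integrable_mul_abs_rpow hu hp) (ae_of_all _ fun x =>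
    mul_nonneg (hW₀ x) (Real.rpow_nonneg (abs_nonneg _) p))).trans hnonneg

theorem IsTestFun.neg (hu : IsTestFun Ω u) : IsTestFun Ω (-u) :=
  ⟨hu.1.neg, hu.2.1.neg, (tsupport_neg u).trans_subset hu.2.2⟩

theorem LocBddPotential.locallyIntegrableOn (hV : LocBddPotential Ω V) {K : Set (Euc d)}
    (hK : IsCompact K) (hKΩ : K ⊆ Ω) : LocallyIntegrableOn V K := by
  obtain ⟨C, hC⟩ := hV.2 K hKΩ hK
  exact (Measure.integrableOn_of_bounded hK.measure_ne_top hV.1.aestronglyMeasurable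
    (ae_restrict_of_forall_mem hK.measurableSet hC)).locallyIntegrableOn

theorem LocBddPotential.ae_eq_zero_of_forall_integral_mul_nonpos (hV : LocBddPotential Ω V)
    {U K : Set (Euc d)} (hU : IsOpen U) (hUK : U ⊆ K) (hK : IsCompact K) (hKΩ : K ⊆ Ω)
    (h : ∀ ψ, IsTestFun U ψ → ∫ x, V x * ψ x ≤ 0) : ∀ᵐ x, x ∈ U → V x = 0 := by
  refine hU.ae_eq_zero_of_integral_contDiff_smul_eq_zero
    ((hV.locallyIntegrableOn hK hKΩ).mono_set hUK) fun ψ hψ hψc hψU => ?_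
  have hψt : IsTestFun U ψ := ⟨hψ, hψc, hψU⟩
  have hneg := h _ hψt.neg
  simp only [Pi.neg_apply, mul_neg, integral_neg] at hneg
  simp only [smul_eq_mul, mul_comm (ψ _)]
  linarith [h ψ hψt]

theorem exists_hasLocalGap_closedBall_convexComb (hΩ : IsOpen Ω) (hp : 1 < p)
    (hV₀ : LocBddPotential Ω V₀) (hV₁ : LocBddPotential Ω V₁) (hQ₀ : NonnegEnergy Ω V₀ p)
    (hQ₁ : NonnegEnergy Ω V₁ p) (ht : t ∈ Set.Ioo 0 1) (h : 0 < volume {x ∈ Ω | V₀ x ≠ V₁ x}) :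
    ∃ x ∈ Ω, ∃ r > 0,
      HasLocalGap Ω (fun x => t * V₁ x + (1 - t) * V₀ x) p (Metric.closedBall x r) := by
  obtain ⟨x, ⟨hx, -⟩, hxpos⟩ := exists_mem_forall_mem_nhdsWithin_pos_measure h.ne'
  obtain ⟨R, hR, hR₁, hRΩ⟩ := exists_pos_mul_closedBall_subset hΩ hx
  have hsub : ∀ s ≤ 8 * R, Metric.closedBall x s ⊆ Ω := fun s hs =>
    (Metric.closedBall_subset_closedBall hs).trans hRΩ
  have hRsub : Metric.closedBall x R ⊆ Ω := hsub R (by linarith)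
  obtain ⟨ψ, hψ, hI⟩ : ∃ ψ, IsTestFun (Metric.ball x R) ψ ∧ 0 < ∫ y, (V₁ y - V₀ y) * ψ y := by
    by_contra! hcon
    have hae := (hV₁.sub hV₀).ae_eq_zero_of_forall_integral_mul_nonpos Metric.isOpen_ball
      Metric.ball_subset_closedBall (isCompact_closedBall x R) hRsub hcon
    have hmem : {y ∈ Ω | V₀ y ≠ V₁ y} ∩ Metric.ball x R ∈ 𝓝[{y ∈ Ω | V₀ y ≠ V₁ y}] x :=
      inter_mem self_mem_nhdsWithin (mem_nhdsWithin_of_mem_nhds (Metric.ball_mem_nhds x hR))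
    refine (hxpos _ hmem).ne' (measure_mono_null ?_ (ae_iff.1 hae))
    exact fun y hy hy₀ => hy.1.2 (sub_eq_zero.1 (hy₀ hy.2)).symm
  have hψR := hψ.2.2.trans Metric.ball_subset_closedBall
  have hψΩ : IsTestFun Ω ψ := ⟨hψ.1, hψ.2.1, hψR.trans hRsub⟩
  have hquant := hψΩ.hasQuantileBound_convexComb hV₀ hV₁ hQ₀ hQ₁ hp ht hR (by linarith)
    (hsub _ (by linarith)) hψR hI
  exact ⟨x, hx, R, hR, hquant.hasLocalGap hp (hQ₀.convexComb hQ₁ (by linarith) hV₀ hV₁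
    (Set.Ioo_subset_Icc_self ht)) (hV₀.convexComb hV₁ t) hR hR₁ hRΩ⟩

end SpectralGap

theorem convexity_of_positivity_general {d : ℕ} {Ω : Set (Euc d)} (hΩ : IsOpen Ω)
    (hΩc : IsPreconnected Ω) {p : ℝ} (hp : 1 < p) {V₀ V₁ : Euc d → ℝ}
    (hV₀ : LocBddPotential Ω V₀) (hV₁ : LocBddPotential Ω V₁)
    (hQ₀ : NonnegEnergy Ω V₀ p) (hQ₁ : NonnegEnergy Ω V₁ p) :
    (∀ t ∈ Set.Icc (0 : ℝ) 1, ∀ u : Euc d → ℝ, IsTestFun Ω u →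
        0 ≤ t * energyQ Ω V₁ p u + (1 - t) * energyQ Ω V₀ p u) ∧
      (0 < volume {x ∈ Ω | V₀ x ≠ V₁ x} →
        ∀ t ∈ Set.Ioo (0 : ℝ) 1,
          ∃ W : Euc d → ℝ, ContinuousOn W Ω ∧ (∀ x ∈ Ω, 0 < W x) ∧
            ∀ u : Euc d → ℝ, IsTestFun Ω u →
              (∫ x in Ω, W x * |u x| ^ p) ≤
                t * energyQ Ω V₁ p u + (1 - t) * energyQ Ω V₀ p u) := by
  have hp₀ : 0 < p := by linarith
  refine ⟨fun t ht u hu => ?_, fun hvol t ht => ?_⟩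
  · rw [← hu.energyQ_convexComb hp₀ hV₀ hV₁]
    exact hQ₀.convexComb hQ₁ hp₀ hV₀ hV₁ ht u hu
  · have hV := hV₀.convexComb hV₁ t
    have hQ := hQ₀.convexComb hQ₁ hp₀ hV₀ hV₁ (Set.Ioo_subset_Icc_self ht)
    have hball := exists_hasLocalGap_closedBall_convexComb hΩ hp hV₀ hV₁ hQ₀ hQ₁ ht hvol
    obtain ⟨W, hWc, hWpos, hW⟩ := hQ.hasSpectralGap hp₀ hV
      (exists_hasLocalGap_closedBall_of_isPreconnected hΩ hΩc hp hQ hV hball)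
    refine ⟨W, hWc, hWpos, fun u hu => ?_⟩
    rw [← hu.energyQ_convexComb hp₀ hV₀ hV₁]
    exact hW u hu

/-- **Convexity of positivity in the potential.** If `Q_{V₀} ≥ 0` and `Q_{V₁} ≥ 0` on
test functions, then `Q_t := t Q_{V₁} + (1-t) Q_{V₀} ≥ 0` for every `t ∈ [0,1]`;
moreover if `V₀ ≠ V₁` on a set of positive measure then `Q_t` is strictly positive in
`Ω` for every `t ∈ (0,1)`. -/
theorem convexity_of_positivity {d : ℕ} (hd : 2 ≤ d)
    (Ω : Set (Euc d)) (hΩo : IsOpen Ω) (hΩc : IsConnected Ω)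
    {p : ℝ} (hp₁ : 1 < p) (V₀ V₁ : Euc d → ℝ)
    (hV₀ : LocBddPotential Ω V₀) (hV₁ : LocBddPotential Ω V₁)
    (hQ₀ : ∀ u : Euc d → ℝ, IsTestFun Ω u → 0 ≤ energyQ Ω V₀ p u)
    (hQ₁ : ∀ u : Euc d → ℝ, IsTestFun Ω u → 0 ≤ energyQ Ω V₁ p u) :
    (∀ t ∈ Set.Icc (0 : ℝ) 1, ∀ u : Euc d → ℝ, IsTestFun Ω u →
        0 ≤ t * energyQ Ω V₁ p u + (1 - t) * energyQ Ω V₀ p u) ∧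
      (0 < volume {x ∈ Ω | V₀ x ≠ V₁ x} →
        ∀ t ∈ Set.Ioo (0 : ℝ) 1,
          ∃ W : Euc d → ℝ, ContinuousOn W Ω ∧ (∀ x ∈ Ω, 0 < W x) ∧
            ∀ u : Euc d → ℝ, IsTestFun Ω u →
              (∫ x in Ω, W x * |u x| ^ p) ≤
                t * energyQ Ω V₁ p u + (1 - t) * energyQ Ω V₀ p u) :=
  convexity_of_positivity_general hΩo hΩc.isPreconnected hp₁ hV₀ hV₁ hQ₀ hQ₁
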